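/- Let (ζ_n)_{n≥1} ⊆ (0,1/2) with limsup_n ζ_n < 1/2, let E = E_{(ζ_n)} be the associated generalized Cantor set, and assume ∫_0^1 dt/|E_t| < ∞ (equivalently, E has positive logarithmic capacity), where E_t = {ζ ∈ 𝕋 : dist(ζ,E) ≤ t}. Let ω : (0,π] → (0,∞) be continuous and increasing, with t ↦ ω(t^γ) concave for some γ > 2, t ↦ tω'(t)/ω(t) increasing, and log ω(dist(·,E)) ∈ L¹(𝕋). Then the following are equivalent: (1) f_{ω,E} ∈ 𝒟; (2) f_{ω,E} is a multiplier of 𝒟; (3) ∫_𝕋 dist(ζ,E) ω'(dist(ζ,E))² |dζ| < ∞. -/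

import Mathlib

open MeasureTheory Real Set

noncomputable section

/-- The unit circle in `ℂ`. -/
def circleT : Set ℂ := Metric.sphere (0 : ℂ) 1

/-- Arc-length parametrization of the unit circle. -/
def cpt (θ : ℝ) : ℂ := Complex.exp (θ * Complex.I)

/-- Distance from a point to a set. -/
def dE (E : Set ℂ) (ζ : ℂ) : ℝ := Metric.infDist ζ E

/-- Arc-length integral over the whole circle. -/
def circInt (f : ℂ → ℝ) : ℝ := ∫ θ in Set.Ioc 0 (2 * π), f (cpt θ)

/-- Arc-length integral over a subset `Λ` of the circle. -/
def circIntOn (Λ : Set ℂ) (f : ℂ → ℝ) : ℝ :=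
  ∫ θ in {θ ∈ Set.Ioc 0 (2 * π) | cpt θ ∈ Λ}, f (cpt θ)

/-- `E` has arc-length (Lebesgue) measure zero. -/
def MeasureZeroOnCircle (E : Set ℂ) : Prop :=
  volume {θ ∈ Set.Ioc 0 (2 * π) | cpt θ ∈ E} = 0

/-- `E` is a Carleson set: `∫_𝕋 log dist(ζ,E) |dζ| > -∞`. -/
def CarlesonSet (E : Set ℂ) : Prop :=
  IntegrableOn (fun θ => Real.log (dE E (cpt θ))) (Set.Ioc 0 (2 * π)) volume

/-- `I(ζ,E)`: the connected component of `𝕋 \ E` containing `ζ`. -/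
def compArc (E : Set ℂ) (ζ : ℂ) : Set ℂ := connectedComponentIn (circleT \ E) ζ

/-- `Γ(ζ,E)`. -/
def GammaSet (E : Set ℂ) (ζ : ℂ) : Set ℂ :=
  {ζ' ∈ circleT \ compArc E ζ | dE E ζ' ≤ dE E ζ}

/-- `Σ(ζ,E)`. -/
def SigmaSet (E : Set ℂ) (ζ : ℂ) : Set ℂ :=
  {ζ' ∈ circleT \ compArc E ζ | dE E ζ ≤ dE E ζ'}

/-- The Richter–Sundberg integrand for the outer function with boundary modulus
`ω(dist(·,E))`. -/
def RSker (ω : ℝ → ℝ) (E : Set ℂ) (ζ ζ' : ℂ) : ℝ :=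
  ((ω (dE E ζ')) ^ 2 - (ω (dE E ζ)) ^ 2
    - 2 * (ω (dE E ζ)) ^ 2 * Real.log (ω (dE E ζ') / ω (dE E ζ))) / ‖ζ - ζ'‖ ^ 2

/-- Local Dirichlet integral `D_ζ(f_{ω,E})` (Richter–Sundberg formula). -/
def locDir (ω : ℝ → ℝ) (E : Set ℂ) (ζ : ℂ) : ℝ :=
  (1 / (2 * π)) * circInt (fun ζ' => RSker ω E ζ ζ')

/-- Local Dirichlet integral restricted to `Λ`. -/
def locDirOn (ω : ℝ → ℝ) (E : Set ℂ) (Λ : Set ℂ) (ζ : ℂ) : ℝ :=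
  (1 / (2 * π)) * circIntOn Λ (fun ζ' => RSker ω E ζ ζ')

/-- `E` is an `𝓛₁`-set. -/
def L1Set (E : Set ℂ) : Prop :=
  ∃ C > 0, ∀ ζ ∈ circleT \ E,
    circIntOn (GammaSet E ζ)
      (fun ζ' => Real.log (dE E ζ / dE E ζ') / ‖ζ - ζ'‖ ^ 2) ≤ C / dE E ζ

/-- The `𝓛₂` inequality with constant `C`. -/
def L2With (E : Set ℂ) (C : ℝ) : Prop :=
  ∀ ζ ∈ circleT \ E,
    circIntOn (GammaSet E ζ)
      (fun ζ' => (Real.log (dE E ζ / dE E ζ')) ^ 2 / ‖ζ - ζ'‖ ^ 2) ≤ C / dE E ζ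

/-- `E` is an `𝓛₂`-set. -/
def L2Set (E : Set ℂ) : Prop := ∃ C > 0, L2With E C

/-- Supremum of `dist(·,E)` over the arc `cpt '' (a,b]`. -/
def arcSup (E : Set ℂ) (a b : ℝ) : ℝ := sSup ((fun θ => dE E (cpt θ)) '' Set.Ioc a b)

/-- `E` is a `𝒦`-set (Kotochigov). -/
def KSet (E : Set ℂ) : Prop :=
  ∃ c > 0, ∀ a b : ℝ, a < b → b ≤ a + 2 * π → c * (b - a) ≤ arcSup E a b

/-- Integral of a weight over the arc `cpt '' (a,b]` (with respect to arc length). -/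
def arcInt (w : ℂ → ℝ) (a b : ℝ) : ℝ := ∫ θ in Set.Ioc a b, w (cpt θ)

/-- Double logarithmic integral of a weight over an arc. -/
def arcDouble (w : ℂ → ℝ) (a b : ℝ) : ℝ :=
  ∫ θ in Set.Ioc a b, (∫ θ' in Set.Ioc a b,
    Real.log (1 / ‖cpt θ - cpt θ'‖) * w (cpt θ) * w (cpt θ'))

/-- Arc-length measure of `{ζ ∈ I : dist(ζ,E) ≤ t}` for the arc `cpt '' (a,b]`. -/
def sublevelMeas (E : Set ℂ) (a b t : ℝ) : ℝ :=
  (volume {θ ∈ Set.Ioc a b | dE E (cpt θ) ≤ t}).toReal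

/-- Arc-length measure of `E_t = {ζ ∈ 𝕋 : dist(ζ,E) ≤ t}`. -/
def EtMeas (E : Set ℂ) (t : ℝ) : ℝ := sublevelMeas E 0 (2 * π) t

/-- The open unit disc. -/
def unitDisc : Set ℂ := Metric.ball (0 : ℂ) 1

/-- Membership in the (holomorphic) Dirichlet space `𝒟`. -/
def MemDirichlet (f : ℂ → ℂ) : Prop :=
  DifferentiableOn ℂ f unitDisc ∧
  (∃ M : ℝ, ∀ r ∈ Set.Ioo (0 : ℝ) 1,
    (∫ θ in Set.Ioc 0 (2 * π), ‖f ((r : ℂ) * cpt θ)‖ ^ 2) ≤ M) ∧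
  IntegrableOn (fun z => ‖deriv f z‖ ^ 2) unitDisc volume

/-- `f` is a multiplier of the Dirichlet space `𝒟`. -/
def IsMultiplierD (f : ℂ → ℂ) : Prop :=
  ∀ g : ℂ → ℂ, MemDirichlet g → MemDirichlet (fun z => f z * g z)

/-- The outer function `f_{ω,E}` with boundary modulus `ω(dist(·,E))`. -/
def outerFun (ω : ℝ → ℝ) (E : Set ℂ) (z : ℂ) : ℂ :=
  Complex.exp ((((2 * π)⁻¹ : ℝ) : ℂ) * ∫ θ in Set.Ioc 0 (2 * π),
    ((cpt θ + z) / (cpt θ - z)) * ((Real.log (ω (dE E (cpt θ))) : ℝ) : ℂ))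

/-- `log ω(dist(·,E)) ∈ L¹(𝕋)`. -/
def LogOmegaInt (ω : ℝ → ℝ) (E : Set ℂ) : Prop :=
  IntegrableOn (fun θ => Real.log (ω (dE E (cpt θ)))) (Set.Ioc 0 (2 * π)) volume

/-- Standing hypotheses on `ω` (with derivative `ω'`): continuous, positive, increasing on
`(0,π]`, differentiable with derivative `ω'`, `t ↦ ω(t^γ)` concave, and `t ↦ tω'(t)/ω(t)`
increasing. -/
def OmegaHyp (ω ω' : ℝ → ℝ) (γ : ℝ) : Prop :=
  ContinuousOn ω (Set.Ioc 0 π) ∧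
  (∀ t ∈ Set.Ioc (0 : ℝ) π, 0 < ω t) ∧
  MonotoneOn ω (Set.Ioc 0 π) ∧
  (∀ t ∈ Set.Ioo (0 : ℝ) π, HasDerivAt ω (ω' t) t) ∧
  ConcaveOn ℝ (Set.Ioc 0 (π ^ γ⁻¹)) (fun t => ω (t ^ γ)) ∧
  MonotoneOn (fun t => t * ω' t / ω t) (Set.Ioo 0 π)

/-- The generalized Cantor set `E_{(ζ_n)}` (with `ξ k` playing the role of `ζ_{k+1}`). -/
def gCantorSet (ξ : ℕ → ℝ) : Set ℂ :=
  {z | ∃ ε : ℕ → Bool, z = Complex.exp (((2 * π : ℝ) : ℂ) * Complex.I *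
    ((∑' n : ℕ, (if ε n then (1 : ℝ) else 0) * (∏ k ∈ Finset.range n, ξ k) * (1 - ξ n) : ℝ) : ℂ))}

end

/-!
The natural measure on the Cantor set, under which the intervals of generation `n` have mass
`2⁻ⁿ`, makes the neighbourhoods `E_t` regular at all scales: inside a disc of radius `R` they are
at most as dense as on average (`RegularSet.box`), and they shrink like a power of `t / R`
(`RegularSet.power`). The theorem holds for all closed sets with these two properties.

The power decay makes the logarithmic oscillation of `dist(·, E)` integrable against Poisson
kernels, so that `|f(z)|` and `|f'(z)|` are controlled at `z` by `ω` and `ω'` at a point comparable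
to `1 - |z| + dist(z / |z|, E)`. Integrating along radii bounds the Dirichlet integral of `f` by
`∫ dist ω'(dist)²`. The same bound reduces the multiplier property to the embedding
`∫ |g f'|² ≲ ‖g‖²` for `g ∈ 𝒟`, which follows from `box` and the capacity condition by duality
with the kernel `1 / |E_t|`. Conversely, moving from `θ` towards its nearest point of `E` decreases
`ω(dist)` by at least a multiple of `dist ω'(dist)`; hence the integral condition is bounded by the
Douglas integral of the boundary modulus of `f`, which Hardy's inequality bounds by its Dirichlet
integral.
-/

section

open Filter Topology
open scoped ENNReal

section Circle

/-- Arc-length measure on the circle, transported to the angular variable in `(0, 2π]`. -/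
noncomputable abbrev circMeas : Measure ℝ := volume.restrict (Ioc 0 (2 * π))

@[fun_prop]
lemma continuous_cpt : Continuous cpt := by
  unfold cpt; fun_prop

@[fun_prop]
lemma measurable_cpt : Measurable cpt := continuous_cpt.measurable

lemma norm_cpt (θ : ℝ) : ‖cpt θ‖ = 1 := Complex.norm_exp_ofReal_mul_I θ

lemma cpt_add (θ φ : ℝ) : cpt (θ + φ) = cpt θ * cpt φ := by
  simp [cpt, add_mul, Complex.exp_add]

lemma cpt_periodic : Function.Periodic cpt (2 * π) := fun θ => by
  rw [cpt_add, cpt, cpt]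
  push_cast
  rw [Complex.exp_two_pi_mul_I, mul_one]

lemma hasDerivAt_cpt (θ : ℝ) : HasDerivAt cpt (cpt θ * Complex.I) θ := by
  have hlin : HasDerivAt (fun θ : ℝ => (θ : ℂ) * Complex.I) Complex.I θ := by
    simpa using Complex.ofRealCLM.hasDerivAt.mul_const Complex.I
  exact hlin.cexp

lemma norm_cpt_sub (θ φ : ℝ) : ‖cpt θ - cpt φ‖ = 2 * |sin ((θ - φ) / 2)| := by
  have h : cpt θ - cpt φ = cpt φ * (Complex.exp (Complex.I * ((θ - φ : ℝ) : ℂ)) - 1) := by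
    rw [mul_sub, mul_one, cpt, cpt, ← Complex.exp_add]
    congr 2
    push_cast
    ring
  rw [h, norm_mul, norm_cpt, one_mul, Complex.norm_exp_I_mul_ofReal_sub_one, norm_mul,
    Real.norm_eq_abs, Real.norm_eq_abs, abs_two]

lemma norm_cpt_sub_le (θ φ : ℝ) : ‖cpt θ - cpt φ‖ ≤ |θ - φ| := by
  have h := abs_sin_le_abs (x := (θ - φ) / 2)
  rw [abs_div, abs_two] at h
  rw [norm_cpt_sub]
  linarith

lemma abs_sub_le_norm_cpt_sub {θ φ : ℝ} (h : |θ - φ| ≤ π) :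
    |θ - φ| ≤ π / 2 * ‖cpt θ - cpt φ‖ := by
  have hsin := mul_abs_le_abs_sin (x := (θ - φ) / 2) (by rw [abs_div, abs_two]; linarith)
  rw [abs_div, abs_two] at hsin
  rw [norm_cpt_sub]
  calc |θ - φ| = π / 2 * (2 * (2 / π * (|θ - φ| / 2))) := by field_simp
    _ ≤ _ := by gcongr

lemma exists_int_abs_sub_le_norm_cpt_sub (θ φ : ℝ) :
    ∃ n : ℤ, |θ - (φ + n * (2 * π))| ≤ π ∧
      |θ - (φ + n * (2 * π))| ≤ π / 2 * ‖cpt θ - cpt φ‖ := by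
  have hpi := two_pi_pos
  set n := round ((θ - φ) / (2 * π))
  have hround : |θ - (φ + n * (2 * π))| ≤ π := by
    have h := abs_sub_round ((θ - φ) / (2 * π))
    have heq : θ - (φ + n * (2 * π)) = ((θ - φ) / (2 * π) - n) * (2 * π) := by field_simp; ring
    rw [heq, abs_mul, abs_of_pos hpi]
    calc _ ≤ 1 / 2 * (2 * π) := by gcongr
      _ = π := by ring
  refine ⟨n, hround, ?_⟩
  rw [← cpt_periodic.int_mul n φ]
  exact abs_sub_le_norm_cpt_sub hround

lemma lintegral_Ioc_eq_of_periodic {f : ℝ → ℝ≥0∞} (hf : Function.Periodic f (2 * π)) (a : ℝ) :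
    ∫⁻ θ in Ioc a (a + 2 * π), f θ = ∫⁻ θ, f θ ∂circMeas := by
  have h := (isAddFundamentalDomain_Ioc two_pi_pos a).setLIntegral_eq
    (isAddFundamentalDomain_Ioc two_pi_pos 0) f hf.map_vadd_zmultiples
  rw [h, zero_add]

lemma lintegral_circMeas_add {f : ℝ → ℝ≥0∞} (hf : Function.Periodic f (2 * π)) (t : ℝ) :
    ∫⁻ θ, f (θ + t) ∂circMeas = ∫⁻ θ, f θ ∂circMeas := by
  symm
  rw [← lintegral_Ioc_eq_of_periodic hf t, ← lintegral_indicator measurableSet_Ioc,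
    ← lintegral_indicator measurableSet_Ioc, ← lintegral_add_right_eq_self _ t]
  refine lintegral_congr fun θ => ?_
  simp only [indicator, mem_Ioc]
  congr 1
  rw [eq_iff_iff]
  constructor <;> rintro ⟨h₁, h₂⟩ <;> constructor <;> linarith

lemma circMeas_preimage_cpt {s : Set ℂ} (hs : MeasurableSet s) (a : ℝ) :
    circMeas (cpt ⁻¹' s) = volume (cpt ⁻¹' s ∩ Ioc a (a + 2 * π)) := by
  have hm := measurable_cpt hs
  have hper : Function.Periodic ((cpt ⁻¹' s).indicator (1 : ℝ → ℝ≥0∞)) (2 * π) := fun θ => by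
    refine indicator_eq_indicator ?_ rfl
    rw [mem_preimage, mem_preimage, cpt_periodic]
  rw [← lintegral_indicator_one hm, ← lintegral_Ioc_eq_of_periodic hper a,
    lintegral_indicator_one hm, Measure.restrict_apply hm]

lemma circMeas_univ : circMeas univ = ENNReal.ofReal (2 * π) := by
  simp

instance : IsFiniteMeasure circMeas := ⟨by rw [circMeas_univ]; exact ENNReal.ofReal_lt_top⟩

lemma measurableSet_norm_cpt_sub_le (z : ℂ) (t : ℝ) : MeasurableSet {φ | ‖cpt φ - z‖ ≤ t} :=
  measurableSet_le (by fun_prop) measurable_const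

lemma circMeas_closedBall_le (z : ℂ) (R : ℝ) :
    circMeas {φ | ‖cpt φ - z‖ ≤ R} ≤ ENNReal.ofReal (2 * π * R) := by
  rcases Set.eq_empty_or_nonempty {φ | ‖cpt φ - z‖ ≤ R} with h | ⟨x, hx : ‖cpt x - z‖ ≤ R⟩
  · simp [h]
  have hsub : {φ | ‖cpt φ - z‖ ≤ R} ∩ Ioc (x - π) (x - π + 2 * π) ⊆
      Icc (x - π * R) (x + π * R) := by
    rintro y ⟨hy : ‖cpt y - z‖ ≤ R, hyx⟩
    have hdist : ‖cpt y - cpt x‖ ≤ R + R :=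
      (norm_sub_le_norm_sub_add_norm_sub _ z _).trans (add_le_add hy (norm_sub_rev z _ ▸ hx))
    have habs := abs_sub_le_norm_cpt_sub (θ := y) (φ := x)
      (abs_le.2 ⟨by linarith [hyx.1], by linarith [hyx.2]⟩)
    have hle : |y - x| ≤ π * R := by nlinarith [pi_pos]
    constructor <;> linarith [abs_le.1 hle]
  calc circMeas {φ | ‖cpt φ - z‖ ≤ R}
      = volume ({φ | ‖cpt φ - z‖ ≤ R} ∩ Ioc (x - π) (x - π + 2 * π)) :=
        circMeas_preimage_cpt (s := {w | ‖w - z‖ ≤ R})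
          (measurableSet_le (by fun_prop) measurable_const) _
    _ ≤ volume (Icc (x - π * R) (x + π * R)) := measure_mono hsub
    _ = ENNReal.ofReal (2 * π * R) := by rw [Real.volume_Icc]; congr 1; ring

lemma le_circMeas_closedBall (x : ℝ) {t : ℝ} (ht : t < π) :
    ENNReal.ofReal (2 * t) ≤ circMeas {φ | ‖cpt φ - cpt x‖ ≤ t} := by
  have hsub : Icc (x - t) (x + t) ⊆
      {φ | ‖cpt φ - cpt x‖ ≤ t} ∩ Ioc (x - π) (x - π + 2 * π) := fun y hy =>
    ⟨(norm_cpt_sub_le _ _).trans (abs_le.2 ⟨by linarith [hy.1], by linarith [hy.2]⟩),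
      by linarith [hy.1], by linarith [hy.2]⟩
  calc ENNReal.ofReal (2 * t) = volume (Icc (x - t) (x + t)) := by
        rw [Real.volume_Icc]; congr 1; ring
    _ ≤ _ := measure_mono hsub
    _ = circMeas {φ | ‖cpt φ - cpt x‖ ≤ t} :=
        (circMeas_preimage_cpt (s := {w | ‖w - cpt x‖ ≤ t})
          (measurableSet_le (by fun_prop) measurable_const) _).symm

end Circle

section DistanceToSet

variable (E : Set ℂ)

lemma dE_nonneg (z : ℂ) : 0 ≤ dE E z := Metric.infDist_nonneg

lemma dE_le_add (z w : ℂ) : dE E z ≤ dE E w + ‖z - w‖ := by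
  rw [← dist_eq_norm]; exact Metric.infDist_le_infDist_add_dist

variable {E} in
lemma dE_le_norm_sub {z w : ℂ} (hw : w ∈ E) : dE E z ≤ ‖z - w‖ := by
  rw [← dist_eq_norm]; exact Metric.infDist_le_dist_of_mem hw

@[fun_prop]
lemma continuous_dE : Continuous (dE E) := Metric.continuous_infDist_pt E

@[fun_prop]
lemma measurable_dE : Measurable (dE E) := (continuous_dE E).measurable

lemma measurableSet_dE_le (t : ℝ) : MeasurableSet {φ | dE E (cpt φ) ≤ t} :=
  measurableSet_le (by fun_prop) measurable_const

/-- Arc-length measure `|E_t|` of the `t`-neighbourhood of `E` in the circle, as an extended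
nonnegative real. -/
noncomputable def nbhdMeas (t : ℝ) : ℝ≥0∞ := circMeas {φ | dE E (cpt φ) ≤ t}

lemma nbhdMeas_mono : Monotone (nbhdMeas E) := fun _ _ h =>
  measure_mono fun _ hφ => le_trans hφ h

lemma nbhdMeas_le (t : ℝ) : nbhdMeas E t ≤ ENNReal.ofReal (2 * π) :=
  (measure_mono (subset_univ _)).trans circMeas_univ.le

lemma toReal_nbhdMeas (t : ℝ) : (nbhdMeas E t).toReal = EtMeas E t := by
  rw [nbhdMeas, Measure.restrict_apply (measurableSet_dE_le E t), EtMeas, sublevelMeas, inter_comm]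
  rfl

end DistanceToSet

lemma exists_monotone_cofinal_seq {A : Set ℝ} (hA : A.Nonempty) (hb : BddAbove A) :
    ∃ u : ℕ → ℝ, Monotone u ∧ (∀ n, u n ∈ A) ∧ ∀ s ∈ A, ∃ n, s ≤ u n := by
  by_cases hmax : sSup A ∈ A
  · exact ⟨fun _ => sSup A, monotone_const, fun _ => hmax, fun s hs => ⟨0, le_csSup hb hs⟩⟩
  obtain ⟨u, hmono, htend, hu⟩ := exists_seq_tendsto_sSup hA hb
  refine ⟨u, hmono, hu, fun s hs => ?_⟩
  have hlt : s < sSup A := (le_csSup hb hs).lt_of_ne fun h => hmax (h ▸ hs)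
  exact ((htend.eventually (lt_mem_nhds hlt)).exists).imp fun _ => le_of_lt

section RegularSets

/-- A nonempty compact subset `E` of the circle whose neighbourhoods `E_t` are regular at all
scales: `box` says that `E_t` is spread over `E_R` at most as densely in a single ball of radius
`R` as on average, `power` that it has dimension at most `1 - η` in every such ball. -/
structure RegularSet (E : Set ℂ) (C η : ℝ) : Prop where
  pos : 0 < C
  exp_mem : η ∈ Ioo 0 1
  compact : IsCompact E
  nonempty : E.Nonempty
  norm_eq : ∀ z ∈ E, ‖z‖ = 1
  box : ∀ t R : ℝ, 0 < t → 0 < R → ∀ z : ℂ,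
    circMeas {φ | dE E (cpt φ) ≤ t ∧ ‖cpt φ - z‖ ≤ R} * nbhdMeas E R ≤
      ENNReal.ofReal (C * R) * nbhdMeas E t
  power : ∀ t R : ℝ, 0 < t → t ≤ R → ∀ z : ℂ,
    circMeas {φ | dE E (cpt φ) ≤ t ∧ ‖cpt φ - z‖ ≤ R} ≤ ENNReal.ofReal (C * (R * (t / R) ^ η))

variable {E : Set ℂ} {C η : ℝ}

lemma dE_cpt_le_two (hE : RegularSet E C η) (θ : ℝ) : dE E (cpt θ) ≤ 2 := by
  obtain ⟨w, hw⟩ := hE.nonempty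
  refine (dE_le_norm_sub hw).trans ((norm_sub_le _ _).trans ?_)
  rw [norm_cpt, hE.norm_eq w hw, one_add_one_eq_two]

lemma dE_cpt_lt_pi (hE : RegularSet E C η) (θ : ℝ) : dE E (cpt θ) < π :=
  (dE_cpt_le_two hE θ).trans_lt (by linarith [pi_gt_three])

namespace RegularSet

lemma circMeas_dE_eq_zero (hE : RegularSet E C η) : circMeas {φ | dE E (cpt φ) = 0} = 0 := by
  have hle : ∀ t ∈ Ioc (0 : ℝ) 1,
      circMeas {φ | dE E (cpt φ) = 0} ≤ ENNReal.ofReal (C * t ^ η) := fun t ht => by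
    have h := hE.power t 1 ht.1 ht.2 0
    simp only [div_one, one_mul] at h
    refine (measure_mono fun φ (hφ : dE E (cpt φ) = 0) => ?_).trans h
    exact ⟨hφ.trans_le ht.1.le, by simp [norm_cpt]⟩
  have htend : Tendsto (fun t : ℝ => ENNReal.ofReal (C * t ^ η)) (𝓝[>] 0) (𝓝 0) := by
    have hcont : Continuous fun t : ℝ => ENNReal.ofReal (C * t ^ η) :=
      ENNReal.continuous_ofReal.comp
        (continuous_const.mul (continuous_id.rpow_const fun _ => Or.inr hE.exp_mem.1.le))
    simpa [zero_rpow hE.exp_mem.1.ne'] using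
      (hcont.tendsto 0).mono_left (nhdsWithin_le_nhds (s := Ioi 0))
  have hev : ∀ᶠ t : ℝ in 𝓝[>] 0, t ∈ Ioc (0 : ℝ) 1 := Ioc_mem_nhdsGT one_pos
  exact le_antisymm (ge_of_tendsto htend (hev.mono hle)) zero_le

lemma ae_pos (hE : RegularSet E C η) : ∀ᵐ φ ∂circMeas, 0 < dE E (cpt φ) := by
  rw [ae_iff]
  exact measure_mono_null (fun φ hφ => le_antisymm (not_lt.1 hφ) (dE_nonneg _ _))
    hE.circMeas_dE_eq_zero

lemma box_of_lower (hE : RegularSet E C η) {A : Set ℝ} (hpos : A ⊆ Ioi 0) (hb : BddAbove A)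
    (hlower : ∀ s ∈ A, Ioc 0 s ⊆ A) {R : ℝ} (hR : 0 < R) (z : ℂ) :
    circMeas {φ | dE E (cpt φ) ∈ A ∧ ‖cpt φ - z‖ ≤ R} * nbhdMeas E R ≤
      ENNReal.ofReal (C * R) * circMeas {φ | dE E (cpt φ) ∈ A} := by
  rcases A.eq_empty_or_nonempty with rfl | hA
  · simp
  obtain ⟨u, hmono, hu, hcof⟩ := exists_monotone_cofinal_seq hA hb
  have hsub : {φ | dE E (cpt φ) ∈ A ∧ ‖cpt φ - z‖ ≤ R} ⊆
      ⋃ n, {φ | dE E (cpt φ) ≤ u n ∧ ‖cpt φ - z‖ ≤ R} := fun φ hφ =>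
    mem_iUnion.2 ((hcof _ hφ.1).imp fun _ hn => ⟨hn, hφ.2⟩)
  have hnbhd : ∀ n, nbhdMeas E (u n) ≤ circMeas {φ | dE E (cpt φ) ∈ A} := fun n => by
    refine measure_mono_ae ?_
    filter_upwards [hE.ae_pos] with φ hφ hφn
    exact hlower _ (hu n) ⟨hφ, hφn⟩
  calc _ ≤ circMeas (⋃ n, {φ | dE E (cpt φ) ≤ u n ∧ ‖cpt φ - z‖ ≤ R}) * nbhdMeas E R := by gcongr
    _ = ⨆ n, circMeas {φ | dE E (cpt φ) ≤ u n ∧ ‖cpt φ - z‖ ≤ R} * nbhdMeas E R := by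
      have hmono' : Monotone fun n => {φ | dE E (cpt φ) ≤ u n ∧ ‖cpt φ - z‖ ≤ R} :=
        fun m n hmn φ hφ => ⟨hφ.1.trans (hmono hmn), hφ.2⟩
      rw [hmono'.measure_iUnion, ENNReal.iSup_mul]
    _ ≤ _ := iSup_le fun n => (hE.box (u n) R (hpos (hu n)) hR z).trans (by gcongr; exact hnbhd n)

lemma lintegral_ball_mul_nbhdMeas_le (hE : RegularSet E C η) {w : ℝ → ℝ} (hw : Measurable w)
    (hw0 : ∀ s, 0 ≤ w s) (hanti : AntitoneOn w (Ioo 0 π)) {R : ℝ} (hR : 0 < R) (z : ℂ) :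
    (∫⁻ φ in {φ | ‖cpt φ - z‖ ≤ R}, ENNReal.ofReal (w (dE E (cpt φ))) ∂circMeas) * nbhdMeas E R ≤
      ENNReal.ofReal (C * R) * ∫⁻ φ, ENNReal.ofReal (w (dE E (cpt φ))) ∂circMeas := by
  have hm : Measurable fun φ => w (dE E (cpt φ)) := by fun_prop
  rw [lintegral_eq_lintegral_meas_lt _ (Eventually.of_forall fun φ => hw0 _) hm.aemeasurable,
    lintegral_eq_lintegral_meas_lt _ (Eventually.of_forall fun φ => hw0 _) hm.aemeasurable,
    ← lintegral_mul_const' _ _ ((nbhdMeas_le E R).trans_lt ENNReal.ofReal_lt_top).ne,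
    ← lintegral_const_mul' _ _ ENNReal.ofReal_ne_top]
  refine lintegral_mono fun a => ?_
  rw [Measure.restrict_apply (measurableSet_lt measurable_const hm)]
  set A : Set ℝ := {s ∈ Ioo 0 π | a < w s}
  have hsup : circMeas ({φ | a < w (dE E (cpt φ))} ∩ {φ | ‖cpt φ - z‖ ≤ R}) ≤
      circMeas {φ | dE E (cpt φ) ∈ A ∧ ‖cpt φ - z‖ ≤ R} := by
    refine measure_mono_ae ?_
    filter_upwards [hE.ae_pos] with φ hpos hφ
    exact ⟨⟨⟨hpos, dE_cpt_lt_pi hE φ⟩, hφ.1⟩, hφ.2⟩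
  have hlower : ∀ s ∈ A, Ioc 0 s ⊆ A := fun s hs r hr =>
    have hrπ : r ∈ Ioo 0 π := ⟨hr.1, hr.2.trans_lt hs.1.2⟩
    ⟨hrπ, hs.2.trans_le (hanti hrπ hs.1 hr.2)⟩
  calc _ ≤ circMeas {φ | dE E (cpt φ) ∈ A ∧ ‖cpt φ - z‖ ≤ R} * nbhdMeas E R := by gcongr
    _ ≤ ENNReal.ofReal (C * R) * circMeas {φ | dE E (cpt φ) ∈ A} :=
      hE.box_of_lower (fun s hs => hs.1.1) ⟨π, fun s hs => hs.1.2.le⟩ hlower hR z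
    _ ≤ _ := by gcongr; exact fun hφ => hφ.2

end RegularSet

lemma lintegral_Ioi_exp_neg_mul {c : ℝ} (hc : 0 < c) :
    ∫⁻ a in Ioi (0 : ℝ), ENNReal.ofReal (exp (-c * a)) = ENNReal.ofReal c⁻¹ := by
  rw [← ofReal_integral_eq_lintegral_ofReal (integrableOn_exp_mul_Ioi (neg_lt_zero.2 hc) 0)
      (Eventually.of_forall fun _ => (exp_pos _).le),
    integral_exp_mul_Ioi (neg_lt_zero.2 hc)]
  simp

lemma le_mul_exp_neg_of_lt_log_div {a d R : ℝ} (ha : 0 < a) (hd : 0 ≤ d) (hR : 0 < R)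
    (h : a < log (R / d)) : d ≤ R * exp (-a) := by
  have hd' : 0 < d := hd.lt_of_ne' fun h0 => by simp [h0] at h; linarith
  rw [lt_log_iff_exp_lt (by positivity), lt_div_iff₀ hd'] at h
  rw [exp_neg, ← div_eq_mul_inv, le_div_iff₀ (exp_pos _)]
  linarith

lemma RegularSet.lintegral_log_le (hE : RegularSet E C η) {R : ℝ} (hR : 0 < R) (z : ℂ) :
    ∫⁻ φ in {φ | ‖cpt φ - z‖ ≤ R}, ENNReal.ofReal (log (R / dE E (cpt φ))) ∂circMeas ≤
      ENNReal.ofReal (C / η * R) := by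
  have hC := hE.pos
  have hη := hE.exp_mem.1
  have hm : Measurable fun φ => max 0 (log (R / dE E (cpt φ))) := by fun_prop
  have hlevel : ∀ a ∈ Ioi (0 : ℝ),
      circMeas.restrict {φ | ‖cpt φ - z‖ ≤ R} {φ | a < max 0 (log (R / dE E (cpt φ)))} ≤
        ENNReal.ofReal (C * R) * ENNReal.ofReal (exp (-η * a)) := fun a (ha : 0 < a) => by
    have hexp : exp (-a) ≤ 1 := exp_le_one_iff.2 (by linarith)
    rw [Measure.restrict_apply (measurableSet_lt measurable_const hm)]
    calc _ ≤ circMeas {φ | dE E (cpt φ) ≤ R * exp (-a) ∧ ‖cpt φ - z‖ ≤ R} :=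
          measure_mono fun φ hφ => And.intro (le_mul_exp_neg_of_lt_log_div ha (dE_nonneg _ _) hR
            ((lt_max_iff.1 hφ.1).resolve_left ha.not_gt)) hφ.2
      _ ≤ _ := hE.power _ _ (by positivity) (mul_le_of_le_one_right hR.le hexp) z
      _ = _ := by
        rw [← ENNReal.ofReal_mul (by positivity), mul_div_cancel_left₀ _ hR.ne', ← exp_mul,
          ← mul_assoc, neg_mul_comm, mul_comm a, neg_mul_comm]
  calc _ = ∫⁻ φ in {φ | ‖cpt φ - z‖ ≤ R},
        ENNReal.ofReal (max 0 (log (R / dE E (cpt φ)))) ∂circMeas := by simp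
    _ = ∫⁻ a in Ioi (0 : ℝ), circMeas.restrict {φ | ‖cpt φ - z‖ ≤ R}
          {φ | a < max 0 (log (R / dE E (cpt φ)))} :=
      lintegral_eq_lintegral_meas_lt _ (Eventually.of_forall fun φ => le_max_left _ _)
        hm.aemeasurable
    _ ≤ ∫⁻ a in Ioi (0 : ℝ), ENNReal.ofReal (C * R) * ENNReal.ofReal (exp (-η * a)) :=
      setLIntegral_mono' measurableSet_Ioi hlevel
    _ = ENNReal.ofReal (C / η * R) := by
      rw [lintegral_const_mul' _ _ ENNReal.ofReal_ne_top, lintegral_Ioi_exp_neg_mul hη,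
        ← ENNReal.ofReal_mul (by positivity)]
      congr 1
      field_simp

end RegularSets

section Shells

lemma lintegral_Ioi_rpow {p δ : ℝ} (hp : p < -1) (hδ : 0 < δ) :
    ∫⁻ R in Ioi δ, ENNReal.ofReal (R ^ p) = ENNReal.ofReal (δ ^ (p + 1) / (-p - 1)) := by
  rw [← ofReal_integral_eq_lintegral_ofReal (integrableOn_Ioi_rpow_of_lt hp hδ)
      ((ae_restrict_mem measurableSet_Ioi).mono fun x hx => rpow_nonneg (hδ.trans hx).le _),
    integral_Ioi_rpow_of_lt hp hδ, neg_div, ← div_neg, neg_add, sub_eq_add_neg]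

lemma lintegral_Ioc_rpow {q b : ℝ} (hq : -1 < q) (hb : 0 ≤ b) :
    ∫⁻ a in Ioc 0 b, ENNReal.ofReal (a ^ q) = ENNReal.ofReal (b ^ (q + 1) / (q + 1)) := by
  have hint : IntegrableOn (fun a : ℝ => a ^ q) (Ioc 0 b) :=
    (intervalIntegrable_iff_integrableOn_Ioc_of_le hb).1
      (intervalIntegral.intervalIntegrable_rpow' hq)
  rw [← ofReal_integral_eq_lintegral_ofReal hint
      ((ae_restrict_mem measurableSet_Ioc).mono fun x hx => rpow_nonneg hx.1.le _),
    ← intervalIntegral.integral_of_le hb, integral_rpow (Or.inl hq),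
    zero_rpow (by linarith), sub_zero]

lemma lintegral_rpow_neg_le {α : Type*} [MeasurableSpace α] {ν : Measure α} {ρ : α → ℝ}
    (hρ : Measurable ρ) {δ A p : ℝ} (hδ : 0 < δ) (hp : 1 < p) (hA : 0 ≤ A)
    (hsupp : ∀ᵐ x ∂ν, δ ≤ ρ x) (hball : ∀ R, δ ≤ R → ν {x | ρ x ≤ R} ≤ ENNReal.ofReal (A * R)) :
    ∫⁻ x, ENNReal.ofReal (ρ x ^ (-p)) ∂ν ≤ ENNReal.ofReal (A * (p / (p - 1)) * δ ^ (1 - p)) := by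
  have hp0 : -p < 0 := by linarith
  have hexp : -1 < (-p)⁻¹ := by rw [inv_neg, neg_lt_neg_iff]; exact inv_lt_one_of_one_lt₀ hp
  have hlevel : ∀ a ∈ Ioi (0 : ℝ), ν {x | a < ρ x ^ (-p)} ≤
      (Ioc 0 (δ ^ (-p))).indicator (fun a => ENNReal.ofReal (A * a ^ (-p)⁻¹)) a := by
    intro a (ha : 0 < a)
    have hae : ν {x | a < ρ x ^ (-p)} = ν {x | δ ≤ ρ x ∧ a < ρ x ^ (-p)} :=
      measure_congr (hsupp.mono fun x hx => propext ⟨fun h => ⟨hx, h⟩, And.right⟩)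
    rw [hae]
    by_cases hle : a ≤ δ ^ (-p)
    · rw [indicator_of_mem (mem_Ioc.2 ⟨ha, hle⟩)]
      refine (measure_mono fun x hx => ?_).trans
        (hball _ ((le_rpow_inv_iff_of_neg hδ ha hp0).2 hle))
      exact (le_rpow_inv_iff_of_neg (hδ.trans_le hx.1) ha hp0).2 hx.2.le
    · refine (measure_mono_null (fun x hx => hle ?_) measure_empty).trans_le zero_le
      exact hx.2.le.trans (rpow_le_rpow_of_nonpos hδ hx.1 hp0.le)
  calc _ = ∫⁻ a in Ioi (0 : ℝ), ν {x | a < ρ x ^ (-p)} :=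
      lintegral_eq_lintegral_meas_lt _ (hsupp.mono fun x hx => rpow_nonneg (hδ.le.trans hx) _)
        (by fun_prop)
    _ ≤ ∫⁻ a in Ioi (0 : ℝ),
        (Ioc 0 (δ ^ (-p))).indicator (fun a => ENNReal.ofReal (A * a ^ (-p)⁻¹)) a :=
      setLIntegral_mono' measurableSet_Ioi hlevel
    _ = ∫⁻ a in Ioc 0 (δ ^ (-p)), ENNReal.ofReal A * ENNReal.ofReal (a ^ (-p)⁻¹) := by
      rw [lintegral_indicator measurableSet_Ioc, Measure.restrict_restrict measurableSet_Ioc,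
        inter_eq_left.2 Ioc_subset_Ioi_self]
      simp only [ENNReal.ofReal_mul hA]
    _ = ENNReal.ofReal (A * (p / (p - 1)) * δ ^ (1 - p)) := by
      rw [lintegral_const_mul' _ _ ENNReal.ofReal_ne_top, lintegral_Ioc_rpow hexp (by positivity),
        ← rpow_mul hδ.le, mul_add, mul_inv_cancel₀ hp0.ne, mul_one, ← ENNReal.ofReal_mul hA,
        ← sub_eq_add_neg, inv_neg, mul_assoc]
      have hfrac : -p⁻¹ + 1 = (p - 1) / p := by field_simp; ring
      rw [hfrac, div_div_eq_mul_div, mul_comm (p / (p - 1)), mul_div_assoc]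

end Shells

lemma log_div_le_rpow_add_indicator {s t ρ γ : ℝ} (hγ : 1 ≤ γ) (hs : 0 < s) (ht : 0 < t)
    (hρ : 0 ≤ ρ) (hst : s - 3 * ρ ≤ t) :
    log (s / t) ≤ 6 * γ * (ρ / s) ^ (3 / 4 : ℝ) +
      (Ioi (s / 6)).indicator (fun _ => log⁺ (s / t)) ρ := by
  by_cases hsρ : s / 6 < ρ
  · rw [indicator_of_mem (mem_Ioi.2 hsρ)]
    have : 0 ≤ 6 * γ * (ρ / s) ^ (3 / 4 : ℝ) := by positivity
    have : log (s / t) ≤ log⁺ (s / t) := le_max_right _ _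
    linarith
  · rw [indicator_of_notMem (mem_Ioi.not.2 hsρ), add_zero]
    rw [not_lt] at hsρ
    have hlin : s / t - 1 ≤ 6 * (ρ / s) := by
      rw [div_sub_one ht.ne', div_le_iff₀ ht, mul_div_assoc', div_mul_eq_mul_div, le_div_iff₀ hs]
      nlinarith
    have hpow : ρ / s ≤ (ρ / s) ^ (3 / 4 : ℝ) :=
      self_le_rpow_of_le_one (by positivity) ((div_le_one hs).2 (by linarith)) (by norm_num)
    calc log (s / t) ≤ 6 * (ρ / s) := (log_le_sub_one_of_pos (div_pos hs ht)).trans hlin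
      _ ≤ 6 * γ * (ρ / s) ^ (3 / 4 : ℝ) := by gcongr; linarith

lemma div_rpow_inv_le {s t ρ γ : ℝ} (hγ : 4 / 3 ≤ γ) (hs : 0 < s) (ht : 0 ≤ t) (hρ : 0 ≤ ρ)
    (hts : t ≤ s + ρ) : (t / s) ^ γ⁻¹ ≤ 1 + (ρ / s) ^ (3 / 4 : ℝ) := by
  have hγ' : γ⁻¹ ≤ 3 / 4 := by rw [inv_le_comm₀ (by linarith) (by norm_num)]; linarith
  have hρs : 0 ≤ ρ / s := by positivity
  calc (t / s) ^ γ⁻¹ ≤ (1 + ρ / s) ^ γ⁻¹ := by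
        refine rpow_le_rpow (by positivity) ?_ (inv_nonneg.2 (by linarith))
        rwa [div_le_iff₀ hs, add_mul, one_mul, div_mul_cancel₀ _ hs.ne']
    _ ≤ (1 + ρ / s) ^ (3 / 4 : ℝ) := rpow_le_rpow_of_exponent_le (by linarith) hγ'
    _ ≤ 1 ^ (3 / 4 : ℝ) + (ρ / s) ^ (3 / 4 : ℝ) :=
        rpow_add_le_add_rpow zero_le_one hρs (by norm_num) (by norm_num)
    _ = 1 + (ρ / s) ^ (3 / 4 : ℝ) := by rw [one_rpow]

namespace OmegaHyp

variable {ω ω' : ℝ → ℝ} {γ : ℝ}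

lemma pos (hω : OmegaHyp ω ω' γ) {t : ℝ} (h0 : 0 < t) (h1 : t ≤ π) : 0 < ω t := hω.2.1 t ⟨h0, h1⟩

lemma mono (hω : OmegaHyp ω ω' γ) {s t : ℝ} (h0 : 0 < s) (hst : s ≤ t) (h1 : t ≤ π) : ω s ≤ ω t :=
  hω.2.2.1 ⟨h0, hst.trans h1⟩ ⟨h0.trans_le hst, h1⟩ hst

lemma hasDerivAt (hω : OmegaHyp ω ω' γ) {t : ℝ} (ht : t ∈ Ioo 0 π) : HasDerivAt ω (ω' t) t :=
  hω.2.2.2.1 t ht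

lemma deriv_nonneg (hω : OmegaHyp ω ω' γ) {t : ℝ} (ht : t ∈ Ioo 0 π) : 0 ≤ ω' t := by
  have h := (hω.hasDerivAt ht).hasDerivWithinAt (s := Ioo 0 π)
  refine h.nonneg_of_monotoneOn ?_ (hω.2.2.1.mono Ioo_subset_Ioc_self)
  rw [accPt_principal_iff_nhdsWithin, sdiff_eq, nhdsWithin_inter,
      nhdsWithin_eq_nhds.2 (Ioo_mem_nhds ht.1 ht.2),
    inf_eq_right.2 nhdsWithin_le_nhds]
  infer_instance

lemma mul_deriv_div_mono (hω : OmegaHyp ω ω' γ) {s t : ℝ} (h0 : 0 < s) (hst : s ≤ t) (h1 : t < π) :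
    s * ω' s / ω s ≤ t * ω' t / ω t :=
  hω.2.2.2.2.2 ⟨h0, hst.trans_lt h1⟩ ⟨h0.trans_le hst, h1⟩ hst

lemma sub_le_mul_rpow_sub_rpow (hω : OmegaHyp ω ω' γ) (hγ : 0 < γ) {s t : ℝ} (hs : s ∈ Ioo 0 π)
    (ht : t ∈ Ioc 0 π) :
    ω t - ω s ≤ γ * (s ^ (1 - γ⁻¹) * ω' s) * (t ^ γ⁻¹ - s ^ γ⁻¹) := by
  have hβ : 0 < γ⁻¹ := inv_pos.2 hγ
  have hconc := hω.2.2.2.2.1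
  have hinv : ∀ x : ℝ, 0 < x → (x ^ γ⁻¹) ^ γ = x := fun x hx => by
    rw [← rpow_mul hx.le, inv_mul_cancel₀ hγ.ne', rpow_one]
  have hmem : ∀ x ∈ Ioc 0 π, x ^ γ⁻¹ ∈ Ioc 0 (π ^ γ⁻¹) := fun x hx =>
    ⟨rpow_pos_of_pos hx.1 _, rpow_le_rpow hx.1.le hx.2 hβ.le⟩
  have hderiv : HasDerivAt (fun x => ω (x ^ γ)) (γ * (s ^ (1 - γ⁻¹) * ω' s)) (s ^ γ⁻¹) := by
    have hpow : HasDerivAt (fun x : ℝ => x ^ γ) (γ * (s ^ γ⁻¹) ^ (γ - 1)) (s ^ γ⁻¹) :=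
      Real.hasDerivAt_rpow_const (Or.inl (rpow_pos_of_pos hs.1 _).ne')
    have hω' : HasDerivAt ω (ω' s) ((s ^ γ⁻¹) ^ γ) := by rw [hinv s hs.1]; exact hω.hasDerivAt hs
    refine (HasDerivAt.comp (h₂ := ω) (h := fun x : ℝ => x ^ γ) (s ^ γ⁻¹) hω' hpow).congr_deriv ?_
    rw [← rpow_mul hs.1.le, mul_sub, inv_mul_cancel₀ hγ.ne', mul_one]
    ring
  have hs' : s ∈ Ioc 0 π := ⟨hs.1, hs.2.le⟩
  rcases lt_trichotomy s t with h | h | h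
  · have hlt : s ^ γ⁻¹ < t ^ γ⁻¹ := rpow_lt_rpow hs.1.le h hβ
    have hslope := hconc.slope_le_of_hasDerivAt (hmem s hs') (hmem t ht) hlt hderiv
    rw [slope_def_field, div_le_iff₀ (by linarith), hinv s hs.1, hinv t ht.1] at hslope
    exact hslope
  · rw [h]; simp
  · have hlt : t ^ γ⁻¹ < s ^ γ⁻¹ := rpow_lt_rpow ht.1.le h hβ
    have hslope := hconc.le_slope_of_hasDerivAt (hmem t ht) (hmem s hs') hlt hderiv
    rw [slope_def_field, le_div_iff₀ (by linarith), hinv s hs.1, hinv t ht.1] at hslope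
    linarith

lemma sub_le_mul_rpow_sub_one (hω : OmegaHyp ω ω' γ) (hγ : 0 < γ) {s t : ℝ} (hs : s ∈ Ioo 0 π)
    (ht : t ∈ Ioc 0 π) : ω t - ω s ≤ γ * (s * ω' s) * ((t / s) ^ γ⁻¹ - 1) := by
  refine (hω.sub_le_mul_rpow_sub_rpow hγ hs ht).trans (le_of_eq ?_)
  have := rpow_pos_of_pos hs.1 γ⁻¹
  rw [div_rpow ht.1.le hs.1.le, rpow_sub hs.1, rpow_one]
  generalize s ^ γ⁻¹ = a at *
  field_simp

lemma rpow_mul_deriv_anti (hω : OmegaHyp ω ω' γ) (hγ : 0 < γ) {s t : ℝ} (hs : 0 < s) (hst : s ≤ t)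
    (ht : t < π) : t ^ (1 - γ⁻¹) * ω' t ≤ s ^ (1 - γ⁻¹) * ω' s := by
  rcases hst.eq_or_lt with rfl | hlt
  · rfl
  have ht0 := hs.trans hlt
  have hat_s := hω.sub_le_mul_rpow_sub_rpow hγ ⟨hs, hlt.trans ht⟩ ⟨ht0, ht.le⟩
  have hat_t := hω.sub_le_mul_rpow_sub_rpow hγ ⟨ht0, ht⟩ ⟨hs, (hlt.trans ht).le⟩
  have hpow : 0 < t ^ γ⁻¹ - s ^ γ⁻¹ := sub_pos.2 (rpow_lt_rpow hs.le hlt (inv_pos.2 hγ))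
  by_contra! h
  have := mul_pos (mul_pos hγ (sub_pos.2 h)) hpow
  nlinarith

lemma deriv_le_mul_rpow (hω : OmegaHyp ω ω' γ) (hγ : 0 < γ) {s t : ℝ} (hs : 0 < s) (hst : s ≤ t)
    (ht : t < π) : ω' t ≤ ω' s * (s / t) ^ (1 - γ⁻¹) := by
  have ht0 := hs.trans_le hst
  rw [div_rpow hs.le ht0.le, mul_div_assoc', le_div_iff₀ (rpow_pos_of_pos ht0 _), mul_comm,
    mul_comm (ω' s)]
  exact hω.rpow_mul_deriv_anti hγ hs hst ht

lemma sub_le_deriv_mul_sub (hω : OmegaHyp ω ω' γ) (hγ : 1 ≤ γ) {s t : ℝ} (hs : s ∈ Ioo 0 π)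
    (ht : t ∈ Ioc 0 π) : ω t - ω s ≤ ω' s * (t - s) := by
  have hγ0 : 0 < γ := by linarith
  have hs0 := hs.1
  have hbernoulli : (t / s) ^ γ⁻¹ - 1 ≤ γ⁻¹ * (t / s - 1) := by
    have h := rpow_one_add_le_one_add_mul_self (s := t / s - 1)
      (by linarith [div_pos ht.1 hs0]) (inv_pos.2 hγ0).le (inv_le_one_of_one_le₀ hγ)
    rw [add_sub_cancel] at h
    linarith
  have hd := hω.deriv_nonneg hs
  calc ω t - ω s ≤ γ * (s * ω' s) * ((t / s) ^ γ⁻¹ - 1) := hω.sub_le_mul_rpow_sub_one hγ0 hs ht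
    _ ≤ γ * (s * ω' s) * (γ⁻¹ * (t / s - 1)) := by gcongr
    _ = ω' s * (t - s) := by field_simp

lemma mul_deriv_div_le_one (hω : OmegaHyp ω ω' γ) (hγ : 1 ≤ γ) {s : ℝ} (hs : s ∈ Ioo 0 π) :
    s * ω' s / ω s ≤ 1 := by
  have hωs := hω.pos hs.1 hs.2.le
  rw [div_le_one hωs]
  by_contra! h
  have hd : 0 < ω' s := pos_of_mul_pos_right (hωs.trans h) hs.1.le
  -- `t` is where the tangent line at `s` would reach zero.
  obtain ⟨t, ht⟩ : ∃ t, t = (s * ω' s - ω s) / ω' s := ⟨_, rfl⟩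
  have htd : t * ω' s = s * ω' s - ω s := by rw [ht, div_mul_cancel₀ _ hd.ne']
  have ht0 : 0 < t := ht ▸ div_pos (by linarith) hd
  have hts : t < s := by rw [ht, div_lt_iff₀ hd]; linarith
  have htπ : t ≤ π := (hts.trans hs.2).le
  linarith [hω.sub_le_deriv_mul_sub hγ hs ⟨ht0, htπ⟩, hω.pos ht0 htπ]

lemma mul_deriv_div_nonneg (hω : OmegaHyp ω ω' γ) {s : ℝ} (hs : s ∈ Ioo 0 π) :
    0 ≤ s * ω' s / ω s :=
  div_nonneg (mul_nonneg hs.1.le (hω.deriv_nonneg hs)) (hω.pos hs.1 hs.2.le).le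

lemma log_sub_log_le_mul_log (hω : OmegaHyp ω ω' γ) {s t : ℝ} (ht : 0 < t) (hts : t ≤ s)
    (hs : s < π) : log (ω s) - log (ω t) ≤ s * ω' s / ω s * log (s / t) := by
  set k := s * ω' s / ω s
  have hs0 := ht.trans_le hts
  have hder : ∀ x ∈ Icc t s, HasDerivAt (fun x => log (ω x) - k * log x)
      (ω' x / ω x - k * x⁻¹) x := fun x hx => by
    have hx' : x ∈ Ioo 0 π := ⟨ht.trans_le hx.1, hx.2.trans_lt hs⟩
    exact ((hω.hasDerivAt hx').log (hω.pos hx'.1 hx'.2.le).ne').sub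
      ((Real.hasDerivAt_log hx'.1.ne').const_mul k)
  have hanti : AntitoneOn (fun x => log (ω x) - k * log x) (Icc t s) := by
    refine antitoneOn_of_deriv_nonpos (convex_Icc _ _)
      (fun x hx => (hder x hx).continuousAt.continuousWithinAt)
      (fun x hx => (hder x (interior_subset hx)).differentiableAt.differentiableWithinAt)
      fun x hx => ?_
    have hx := interior_subset hx
    have hx0 := ht.trans_le hx.1
    have hslope : ω' x / ω x = x * ω' x / ω x * x⁻¹ := by field_simp
    rw [(hder x hx).deriv, hslope, ← sub_mul]
    exact mul_nonpos_of_nonpos_of_nonneg (sub_nonpos.2 (hω.mul_deriv_div_mono hx0 hx.2 hs))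
      (inv_pos.2 hx0).le
  have hends : log (ω s) - k * log s ≤ log (ω t) - k * log t :=
    hanti (left_mem_Icc.2 hts) (right_mem_Icc.2 hts) hts
  rw [log_div hs0.ne' ht.ne']
  linarith

lemma log_sub_log_le_mul_rpow_sub_one (hω : OmegaHyp ω ω' γ) (hγ : 0 < γ) {s t : ℝ}
    (hs : s ∈ Ioo 0 π) (ht : t ∈ Ioc 0 π) :
    log (ω t) - log (ω s) ≤ s * ω' s / ω s * (γ * ((t / s) ^ γ⁻¹ - 1)) := by
  have hωs := hω.pos hs.1 hs.2.le
  have hωt := hω.pos ht.1 ht.2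
  calc log (ω t) - log (ω s) = log (ω t / ω s) := (log_div hωt.ne' hωs.ne').symm
    _ ≤ ω t / ω s - 1 := log_le_sub_one_of_pos (div_pos hωt hωs)
    _ = (ω t - ω s) / ω s := div_sub_one hωs.ne'
    _ ≤ γ * (s * ω' s) * ((t / s) ^ γ⁻¹ - 1) / ω s := by
        gcongr; exact hω.sub_le_mul_rpow_sub_one hγ hs ht
    _ = s * ω' s / ω s * (γ * ((t / s) ^ γ⁻¹ - 1)) := by ring

lemma abs_log_sub_log_le (hω : OmegaHyp ω ω' γ) (hγ : 4 / 3 ≤ γ) {s t ρ : ℝ} (hs : s ∈ Ioo 0 π)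
    (ht : t ∈ Ioc 0 π) (hρ : 0 ≤ ρ) (hts : t ≤ s + ρ) (hst : s - 3 * ρ ≤ t) :
    |log (ω t) - log (ω s)| ≤ s * ω' s / ω s *
      (6 * γ * (ρ / s) ^ (3 / 4 : ℝ) + (Ioi (s / 6)).indicator (fun _ => log⁺ (s / t)) ρ) := by
  have hs0 := hs.1
  have hslope := hω.mul_deriv_div_nonneg hs
  have hind : 0 ≤ (Ioi (s / 6)).indicator (fun _ => log⁺ (s / t)) ρ :=
    indicator_nonneg (fun _ _ => posLog_nonneg) _
  have hpow : 0 ≤ (ρ / s) ^ (3 / 4 : ℝ) := by positivity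
  rw [abs_le', neg_sub]
  constructor
  · refine (hω.log_sub_log_le_mul_rpow_sub_one (by linarith) hs ht).trans
      (mul_le_mul_of_nonneg_left ?_ hslope)
    nlinarith [div_rpow_inv_le hγ hs0 ht.1.le hρ hts]
  · rcases le_total s t with hle | hle
    · have hlog : log (ω s) ≤ log (ω t) :=
        log_le_log (hω.pos hs0 hs.2.le) (hω.mono hs0 hle ht.2)
      exact (sub_nonpos.2 hlog).trans (mul_nonneg hslope (by positivity))
    · exact (hω.log_sub_log_le_mul_log ht.1 hle hs.2).trans (mul_le_mul_of_nonneg_left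
        (log_div_le_rpow_add_indicator (by linarith) hs0 ht.1 hρ hst) hslope)

lemma antitoneOn_mul_deriv_sq (hω : OmegaHyp ω ω' γ) (hγ : 2 ≤ γ) :
    AntitoneOn (fun s => s * ω' s ^ 2) (Ioo 0 π) := by
  intro s hs t ht hst
  have ht0 := ht.1
  have hratio : 0 < s / t := div_pos hs.1 ht0
  have hds := hω.deriv_nonneg hs
  have hdt := hω.deriv_nonneg ht
  have hexp : 1 / 2 ≤ 1 - γ⁻¹ := by
    have : γ⁻¹ ≤ 1 / 2 := by rw [inv_le_comm₀ (by linarith) (by norm_num)]; linarith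
    linarith
  have hsqrt : ω' t ≤ ω' s * √(s / t) := by
    refine (hω.deriv_le_mul_rpow (by linarith) hs.1 hst ht.2).trans ?_
    rw [sqrt_eq_rpow]
    gcongr ω' s * ?_
    exact rpow_le_rpow_of_exponent_ge hratio ((div_le_one ht0).2 hst) hexp
  calc t * ω' t ^ 2 ≤ t * (ω' s * √(s / t)) ^ 2 := by gcongr
    _ = s * ω' s ^ 2 := by rw [mul_pow, sq_sqrt hratio.le]; field_simp

end OmegaHyp

section Herglotz

/-- The Herglotz integral of the function `u` of the angle, the holomorphic function on the disc
whose real part is the Poisson integral of `u`. -/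
noncomputable def herglotz (u : ℝ → ℝ) (z : ℂ) : ℂ :=
  (((2 * π)⁻¹ : ℝ) : ℂ) * ∫ φ, ((cpt φ + z) / (cpt φ - z)) * ((u φ : ℝ) : ℂ) ∂circMeas

lemma cpt_sub_ne_zero {z : ℂ} (hz : ‖z‖ < 1) (φ : ℝ) : cpt φ - z ≠ 0 := by
  intro h
  rw [sub_eq_zero] at h
  rw [← h, norm_cpt] at hz
  exact lt_irrefl _ hz

lemma one_sub_norm_le (z : ℂ) (φ : ℝ) : 1 - ‖z‖ ≤ ‖cpt φ - z‖ := by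
  have := norm_sub_norm_le (cpt φ) z
  rwa [norm_cpt] at this

lemma circleIntegral_eq_integral_cpt (f : ℂ → ℂ) :
    (∮ z in C(0, 1), f z) = Complex.I * ∫ φ, cpt φ * f (cpt φ) ∂circMeas := by
  rw [circleIntegral, intervalIntegral.integral_of_le (by positivity), ← integral_const_mul]
  refine integral_congr_ae (Eventually.of_forall fun φ => ?_)
  have : circleMap 0 1 φ = cpt φ := by simp [circleMap, cpt]
  simp only [deriv_circleMap, this, smul_eq_mul]
  ring

lemma integral_cpt_div {z : ℂ} (hz : ‖z‖ < 1) :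
    ∫ φ, cpt φ / (cpt φ - z) ∂circMeas = 2 * π := by
  have h := circleIntegral.integral_sub_inv_of_mem_ball (c := 0) (R := 1) (w := z)
      (by simpa using hz)
  rw [circleIntegral_eq_integral_cpt, mul_comm] at h
  exact mul_right_cancel₀ Complex.I_ne_zero h

lemma continuous_div_cpt_sub_pow {z : ℂ} (hz : ‖z‖ < 1) (f : ℂ → ℂ) (hf : Continuous f) (n : ℕ) :
    Continuous fun φ => f (cpt φ) / (cpt φ - z) ^ n :=
  (hf.comp continuous_cpt).div (by fun_prop) fun φ => pow_ne_zero _ (cpt_sub_ne_zero hz φ)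

lemma integrable_circMeas_of_continuous {f : ℝ → ℂ} (hf : Continuous f) : Integrable f circMeas :=
  (hf.integrableOn_Icc (a := 0) (b := 2 * π)).mono_set Ioc_subset_Icc_self

lemma integral_herglotz_kernel {z : ℂ} (hz : ‖z‖ < 1) :
    ∫ φ, (cpt φ + z) / (cpt φ - z) ∂circMeas = 2 * π := by
  have hkernel : ∀ φ, (cpt φ + z) / (cpt φ - z) = 2 * (cpt φ / (cpt φ - z)) - 1 := fun φ => by
    have := cpt_sub_ne_zero hz φ
    field_simp; ring
  simp_rw [hkernel]
  have hc : Continuous fun φ => cpt φ / (cpt φ - z) := by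
    simpa using continuous_div_cpt_sub_pow hz id continuous_id 1
  rw [integral_sub ((integrable_circMeas_of_continuous hc).const_mul 2) (integrable_const _),
    integral_const_mul, integral_cpt_div hz]
  simp [Measure.real, pi_pos.le]
  ring

lemma integrable_kernel_mul {K : ℝ → ℂ} (hK : Continuous K) {u : ℝ → ℝ}
    (hu : Integrable u circMeas) :
    Integrable (fun φ => K φ * (u φ : ℂ)) circMeas := by
  obtain ⟨B, hB⟩ := (isCompact_Icc (a := (0 : ℝ)) (b := 2 * π)).exists_bound_of_continuousOn
    hK.continuousOn
  refine hu.ofReal.bdd_mul (c := B) hK.aestronglyMeasurable ?_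
  exact (ae_restrict_mem measurableSet_Ioc).mono fun φ hφ => hB φ (Ioc_subset_Icc_self hφ)

lemma continuous_herglotz_kernel {z : ℂ} (hz : ‖z‖ < 1) :
    Continuous fun φ => (cpt φ + z) / (cpt φ - z) := by
  simpa using continuous_div_cpt_sub_pow hz (fun w => w + z) (by fun_prop) 1

lemma hasDerivAt_herglotz {u : ℝ → ℝ} (hu : Integrable u circMeas) {z : ℂ} (hz : ‖z‖ < 1) :
    HasDerivAt (herglotz u)
      ((((2 * π)⁻¹ : ℝ) : ℂ) * ∫ φ, 2 * (cpt φ / (cpt φ - z) ^ 2) * (u φ : ℂ) ∂circMeas) z := by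
  set ε := (1 - ‖z‖) / 2 with hε
  have hε0 : 0 < ε := by rw [hε]; linarith
  refine HasDerivAt.const_mul _ ?_
  have hball : ∀ w ∈ Metric.ball z ε, ‖w‖ < 1 ∧ ∀ φ, ε ≤ ‖cpt φ - w‖ := by
    intro w hw
    have h1 : ‖w‖ < ‖z‖ + ε := by
      have := norm_le_norm_add_norm_sub' w z
      rw [Metric.mem_ball, dist_eq_norm] at hw
      linarith
    refine ⟨by rw [hε] at h1; linarith, fun φ => le_trans ?_ (one_sub_norm_le w φ)⟩
    rw [hε] at h1 ⊢; linarith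
  refine (hasDerivAt_integral_of_dominated_loc_of_deriv_le (s := Metric.ball z ε)
    (bound := fun φ => 2 / ε ^ 2 * ‖u φ‖)
    (F := fun w φ => ((cpt φ + w) / (cpt φ - w)) * (u φ : ℂ))
    (F' := fun w φ => 2 * (cpt φ / (cpt φ - w) ^ 2) * (u φ : ℂ))
    (Metric.ball_mem_nhds z hε0) ?_ ?_ ?_ ?_ ?_ ?_).2
  · filter_upwards [Metric.ball_mem_nhds z hε0] with w hw
    exact (integrable_kernel_mul (continuous_herglotz_kernel
        (hball w hw).1) hu).aestronglyMeasurable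
  · exact integrable_kernel_mul (continuous_herglotz_kernel hz) hu
  · exact (integrable_kernel_mul (continuous_const.mul
      (continuous_div_cpt_sub_pow hz id continuous_id 2)) hu).aestronglyMeasurable
  · refine Eventually.of_forall fun φ w hw => ?_
    have h := (hball w hw).2 φ
    simp only [norm_mul, norm_div, norm_pow, norm_cpt, Complex.norm_real, Complex.norm_ofNat]
    gcongr
    rw [mul_one_div]
    gcongr
  · exact hu.norm.const_mul _
  · refine Eventually.of_forall fun φ w hw => ?_
    have h := cpt_sub_ne_zero (hball w hw).1 φ
    have h1 := (((hasDerivAt_id w).const_add (cpt φ)).div ((hasDerivAt_id w).const_sub (cpt φ)) h)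
    refine (h1.mul_const (u φ : ℂ)).congr_deriv ?_
    simp only [id]
    field_simp
    ring

lemma herglotz_const (c : ℝ) {z : ℂ} (hz : ‖z‖ < 1) : herglotz (fun _ => c) z = c := by
  have hp : (π : ℂ) ≠ 0 := by exact_mod_cast pi_ne_zero
  rw [herglotz, integral_mul_const, integral_herglotz_kernel hz]
  push_cast
  field_simp

lemma herglotz_sub_const {u : ℝ → ℝ} (hu : Integrable u circMeas) (c : ℝ) {z : ℂ} (hz : ‖z‖ < 1) :
    herglotz (fun φ => u φ - c) z = herglotz u z - c := by
  rw [← herglotz_const c hz]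
  simp only [herglotz]
  rw [← mul_sub, ← integral_sub (integrable_kernel_mul (continuous_herglotz_kernel hz) hu)
    (integrable_kernel_mul (continuous_herglotz_kernel hz) (integrable_const c))]
  congr 1
  refine integral_congr_ae (Eventually.of_forall fun φ => ?_)
  push_cast; ring

lemma re_herglotz_kernel (φ : ℝ) (z : ℂ) :
    ((cpt φ + z) / (cpt φ - z)).re = (1 - ‖z‖ ^ 2) / ‖cpt φ - z‖ ^ 2 := by
  have hcpt : Complex.normSq (cpt φ) = 1 := by rw [Complex.normSq_eq_norm_sq, norm_cpt, one_pow]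
  rw [Complex.div_re, ← Complex.normSq_eq_norm_sq, ← Complex.normSq_eq_norm_sq, ← add_div, ← hcpt]
  simp only [Complex.normSq_apply, Complex.add_re, Complex.add_im, Complex.sub_re, Complex.sub_im]
  ring

lemma re_herglotz {u : ℝ → ℝ} (hu : Integrable u circMeas) {z : ℂ} (hz : ‖z‖ < 1) :
    (herglotz u z).re =
      (2 * π)⁻¹ * ∫ φ, (1 - ‖z‖ ^ 2) / ‖cpt φ - z‖ ^ 2 * u φ ∂circMeas := by
  rw [herglotz, Complex.re_ofReal_mul]
  congr 1
  refine (integral_re (integrable_kernel_mul (continuous_herglotz_kernel hz) hu)).symm.trans ?_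
  refine integral_congr_ae (Eventually.of_forall fun φ => ?_)
  simp only [RCLike.re_eq_complex_re, Complex.mul_re, Complex.ofReal_re, Complex.ofReal_im,
    mul_zero, sub_zero,
    re_herglotz_kernel]

/-- The weighted oscillation `∫ |u - c| / |ζ - z|² |dζ|` of `u` about the value `c`, which controls
the deviation of the Herglotz integral from `c` and its derivative at `z`. -/
noncomputable def oscInt (u : ℝ → ℝ) (c : ℝ) (z : ℂ) : ℝ≥0∞ :=
  ∫⁻ φ, ENNReal.ofReal |u φ - c| * ENNReal.ofReal (‖cpt φ - z‖ ^ (-2 : ℝ)) ∂circMeas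

lemma enorm_integral_kernel_mul_sub_le {K : ℝ → ℂ} (u : ℝ → ℝ) (c : ℝ) {b : ℝ} (hb : 0 ≤ b) {z : ℂ}
    (hK : ∀ φ, ‖K φ‖ ≤ 2 * π * b * ‖cpt φ - z‖ ^ (-2 : ℝ)) :
    ‖(((2 * π)⁻¹ : ℝ) : ℂ) * ∫ φ, K φ * ((u φ - c : ℝ) : ℂ) ∂circMeas‖ₑ ≤
      ENNReal.ofReal b * oscInt u c z := by
  have hpi : 0 < 2 * π := by positivity
  rw [← integral_const_mul, oscInt, ← lintegral_const_mul' _ _ ENNReal.ofReal_ne_top]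
  refine (enorm_integral_le_lintegral_enorm _).trans (lintegral_mono fun φ => ?_)
  rw [← ofReal_norm, ← ENNReal.ofReal_mul (abs_nonneg _), ← ENNReal.ofReal_mul hb, norm_mul,
    norm_mul, Complex.norm_real, Complex.norm_real, Real.norm_eq_abs (u φ - c),
    Real.norm_of_nonneg (inv_pos.2 hpi).le]
  apply ENNReal.ofReal_le_ofReal
  calc (2 * π)⁻¹ * (‖K φ‖ * |u φ - c|)
      ≤ (2 * π)⁻¹ * (2 * π * b * ‖cpt φ - z‖ ^ (-2 : ℝ) * |u φ - c|) := by gcongr; exact hK φ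
    _ = b * (|u φ - c| * ‖cpt φ - z‖ ^ (-2 : ℝ)) := by field_simp

lemma enorm_deriv_herglotz_le {u : ℝ → ℝ} (hu : Integrable u circMeas) (c : ℝ) {z : ℂ}
    (hz : ‖z‖ < 1) : ‖deriv (herglotz u) z‖ₑ ≤ oscInt u c z := by
  have hderiv : HasDerivAt (herglotz fun φ => u φ - c) (deriv (herglotz u) z) z := by
    have h := ((hasDerivAt_herglotz hu hz).differentiableAt.hasDerivAt).sub_const (c : ℂ)
    refine h.congr_of_eventuallyEq ?_
    filter_upwards [(isOpen_lt continuous_norm continuous_const).mem_nhds hz] with w hw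
    exact herglotz_sub_const hu c hw
  rw [hderiv.unique (hasDerivAt_herglotz (hu.sub (integrable_const c)) hz)]
  refine (enorm_integral_kernel_mul_sub_le (z := z) u c zero_le_one fun φ => ?_).trans_eq ?_
  · rw [norm_mul, norm_div, norm_pow, norm_cpt, rpow_neg (norm_nonneg _), rpow_two,
      Complex.norm_ofNat, one_div, mul_one]
    gcongr
    linarith [pi_gt_three]
  · rw [ENNReal.ofReal_one, one_mul]

lemma enorm_re_herglotz_sub_le {u : ℝ → ℝ} (hu : Integrable u circMeas) (c : ℝ) {z : ℂ} {δ : ℝ}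
    (hδ : 0 < δ) (hz : ‖z‖ = 1 - δ) :
    ‖(herglotz u z).re - c‖ₑ ≤ ENNReal.ofReal δ * oscInt u c z := by
  have hz1 : ‖z‖ < 1 := by linarith
  have hδ1 : δ ≤ 1 := by linarith [norm_nonneg z]
  have hre : (herglotz u z).re - c = (herglotz (fun φ => u φ - c) z).re := by
    rw [herglotz_sub_const hu c hz1, Complex.sub_re, Complex.ofReal_re]
  rw [hre, re_herglotz (u := fun φ => u φ - c) (hu.sub (integrable_const c)) hz1, ← ofReal_norm,
    ← Complex.norm_real, ofReal_norm, Complex.ofReal_mul, ← integral_complex_ofReal]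
  simp only [Complex.ofReal_mul _ (u _ - c)]
  refine enorm_integral_kernel_mul_sub_le u c hδ.le fun φ => ?_
  rw [Complex.norm_real, Real.norm_of_nonneg (div_nonneg (by nlinarith) (by positivity)),
    rpow_neg (norm_nonneg _), rpow_two, ← div_eq_mul_inv, hz]
  gcongr
  nlinarith [pi_gt_three]

end Herglotz

section Pointwise

variable {E : Set ℂ} {ω ω' : ℝ → ℝ} {C η γ : ℝ}

/-- The point of the disc at angle `θ` and at distance `δ` from the circle. -/
noncomputable def diskPt (δ θ : ℝ) : ℂ := ((1 - δ : ℝ) : ℂ) * cpt θ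

lemma norm_diskPt {δ : ℝ} (hδ : δ ≤ 1) (θ : ℝ) : ‖diskPt δ θ‖ = 1 - δ := by
  rw [diskPt, norm_mul, norm_cpt, mul_one, Complex.norm_real, Real.norm_of_nonneg (by linarith)]

lemma norm_cpt_sub_diskPt {δ : ℝ} (hδ : 0 ≤ δ) (θ : ℝ) : ‖cpt θ - diskPt δ θ‖ = δ := by
  rw [diskPt, show cpt θ - ((1 - δ : ℝ) : ℂ) * cpt θ = (δ : ℂ) * cpt θ by push_cast; ring,
    norm_mul, norm_cpt, mul_one, Complex.norm_real, Real.norm_of_nonneg hδ]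

@[fun_prop]
lemma continuous_diskPt : Continuous fun p : ℝ × ℝ => diskPt p.1 p.2 := by
  unfold diskPt; fun_prop

/-- The constant in the oscillation estimate `RegularSet.oscInt_le`. -/
noncomputable def oscConst (C η γ : ℝ) : ℝ := 60 * π * γ + 72 * C / η

lemma RegularSet.oscConst_pos (hE : RegularSet E C η) (hγ : 0 < γ) : 0 < oscConst C η γ := by
  have := hE.pos
  have := hE.exp_mem.1
  unfold oscConst
  positivity

lemma lintegral_norm_cpt_sub_rpow_neg_le {z : ℂ} {δ p : ℝ} (hδ : 0 < δ) (hz : δ ≤ 1 - ‖z‖)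
    (hp : 1 < p) :
    ∫⁻ φ, ENNReal.ofReal (‖cpt φ - z‖ ^ (-p)) ∂circMeas ≤
      ENNReal.ofReal (2 * π * (p / (p - 1)) * δ ^ (1 - p)) :=
  lintegral_rpow_neg_le (by fun_prop) hδ hp (by positivity)
    (Eventually.of_forall fun φ => hz.trans (one_sub_norm_le z φ))
    fun R _ => circMeas_closedBall_le z R

/-- The function `log (s / dist(·, E))` away from the ball of radius `s / 6` about `z`. -/
noncomputable def farLog (E : Set ℂ) (s : ℝ) (z : ℂ) : ℝ → ℝ≥0∞ :=
  {φ | s / 6 < ‖cpt φ - z‖}.indicator fun φ => ENNReal.ofReal (log (s / dE E (cpt φ)))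

@[fun_prop]
lemma measurable_farLog (E : Set ℂ) (s : ℝ) (z : ℂ) : Measurable (farLog E s z) :=
  Measurable.indicator (by fun_prop) (measurableSet_lt (by fun_prop) (by fun_prop))

lemma farLog_le {s R : ℝ} (hs : 0 < s) (hR : s / 6 ≤ R) (z : ℂ) (φ : ℝ) :
    farLog E s z φ ≤ ENNReal.ofReal (log (6 * R / dE E (cpt φ))) := by
  refine (indicator_le_self _ _ φ).trans (ENNReal.ofReal_le_ofReal ?_)
  rcases (dE_nonneg E (cpt φ)).eq_or_lt with h | h
  · rw [← h, div_zero, div_zero]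
  · exact log_le_log (by positivity) (by gcongr; linarith)

lemma RegularSet.lintegral_farLog_le (hE : RegularSet E C η) {s : ℝ} (hs : 0 < s) (z : ℂ) :
    ∫⁻ φ, farLog E s z φ * ENNReal.ofReal (‖cpt φ - z‖ ^ (-2 : ℝ)) ∂circMeas ≤
      ENNReal.ofReal (72 * C / η / s) := by
  have hC := hE.pos
  have hη := hE.exp_mem.1
  have hfar : ∀ᵐ φ ∂circMeas.withDensity (farLog E s z), s / 6 ≤ ‖cpt φ - z‖ := by
    rw [ae_withDensity_iff (by fun_prop)]
    refine Eventually.of_forall fun φ hφ => le_of_lt ?_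
    by_contra h
    exact hφ (indicator_of_notMem (by exact h) _)
  have hball : ∀ R, s / 6 ≤ R → circMeas.withDensity (farLog E s z) {φ | ‖cpt φ - z‖ ≤ R} ≤
      ENNReal.ofReal (6 * C / η * R) := fun R hR => by
    have hR0 : 0 < R := by linarith
    rw [withDensity_apply _ (measurableSet_norm_cpt_sub_le z R)]
    calc ∫⁻ φ in {φ | ‖cpt φ - z‖ ≤ R}, farLog E s z φ ∂circMeas
        ≤ ∫⁻ φ in {φ | ‖cpt φ - z‖ ≤ R},
            ENNReal.ofReal (log (6 * R / dE E (cpt φ))) ∂circMeas :=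
          lintegral_mono (farLog_le hs hR z)
      _ ≤ ∫⁻ φ in {φ | ‖cpt φ - z‖ ≤ 6 * R},
            ENNReal.ofReal (log (6 * R / dE E (cpt φ))) ∂circMeas :=
          lintegral_mono_set fun φ (hφ : ‖cpt φ - z‖ ≤ R) => hφ.trans (by linarith)
      _ ≤ ENNReal.ofReal (6 * C / η * R) :=
          (hE.lintegral_log_le (by positivity) z).trans_eq (by ring_nf)
  calc _ = ∫⁻ φ, ENNReal.ofReal (‖cpt φ - z‖ ^ (-2 : ℝ)) ∂circMeas.withDensity (farLog E s z) :=
      (lintegral_withDensity_eq_lintegral_mul _ (by fun_prop) (by fun_prop)).symm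
    _ ≤ ENNReal.ofReal (6 * C / η * (2 / (2 - 1)) * (s / 6) ^ (1 - 2 : ℝ)) :=
      lintegral_rpow_neg_le (by fun_prop) (by positivity) one_lt_two (by positivity) hfar hball
    _ = ENNReal.ofReal (72 * C / η / s) := by
      rw [show (1 : ℝ) - 2 = -1 by norm_num, rpow_neg_one]
      congr 1
      field_simp; norm_num

lemma RegularSet.add_mem (hE : RegularSet E C η) {δ : ℝ} (hδ : δ ∈ Ioc 0 1) (θ : ℝ) :
    dE E (cpt θ) + δ ∈ Ioo 0 π :=
  ⟨add_pos_of_nonneg_of_pos (dE_nonneg _ _) hδ.1,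
    by linarith [dE_cpt_le_two hE θ, hδ.2, pi_gt_three]⟩

lemma RegularSet.abs_log_dE_sub_log_le (hE : RegularSet E C η) (hω : OmegaHyp ω ω' γ)
    (hγ : 4 / 3 ≤ γ) {δ : ℝ} (hδ : δ ∈ Ioc 0 1) (θ : ℝ) {s : ℝ} (hs : s = dE E (cpt θ) + δ)
    {φ : ℝ} (hφ : 0 < dE E (cpt φ)) :
    |log (ω (dE E (cpt φ))) - log (ω s)| ≤ s * ω' s / ω s *
      (6 * γ * (‖cpt φ - diskPt δ θ‖ / s) ^ (3 / 4 : ℝ) +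
        (Ioi (s / 6)).indicator (fun _ => log⁺ (s / dE E (cpt φ))) ‖cpt φ - diskPt δ θ‖) := by
  have hθz : ‖cpt θ - diskPt δ θ‖ = δ := norm_cpt_sub_diskPt hδ.1.le θ
  have hδρ : δ ≤ ‖cpt φ - diskPt δ θ‖ := by
    have := one_sub_norm_le (diskPt δ θ) φ
    rw [norm_diskPt hδ.2] at this
    linarith
  refine hω.abs_log_sub_log_le hγ (hs ▸ hE.add_mem hδ θ) ⟨hφ, (dE_cpt_lt_pi hE φ).le⟩
    (norm_nonneg _) ?_ ?_
  · have hφz := dE_le_add E (cpt φ) (diskPt δ θ)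
    have hzθ := dE_le_add E (diskPt δ θ) (cpt θ)
    rw [norm_sub_rev, hθz] at hzθ
    linarith
  · have hθφ := dE_le_add E (cpt θ) (cpt φ)
    have htri := norm_sub_le_norm_sub_add_norm_sub (cpt θ) (diskPt δ θ) (cpt φ)
    rw [hθz, norm_sub_rev (diskPt δ θ)] at htri
    linarith

lemma RegularSet.ofReal_abs_log_dE_sub_log_mul_le (hE : RegularSet E C η)
    (hω : OmegaHyp ω ω' γ) (hγ : 4 / 3 ≤ γ) {δ : ℝ} (hδ : δ ∈ Ioc 0 1) (θ : ℝ) {s : ℝ}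
    (hs : s = dE E (cpt θ) + δ) {φ : ℝ} (hφ : 0 < dE E (cpt φ)) :
    ENNReal.ofReal |log (ω (dE E (cpt φ))) - log (ω s)| *
        ENNReal.ofReal (‖cpt φ - diskPt δ θ‖ ^ (-2 : ℝ)) ≤
      ENNReal.ofReal (s * ω' s / ω s) *
        (ENNReal.ofReal (6 * γ * s ^ (-(3 / 4) : ℝ)) *
            ENNReal.ofReal (‖cpt φ - diskPt δ θ‖ ^ (-(5 / 4) : ℝ)) +
          farLog E s (diskPt δ θ) φ * ENNReal.ofReal (‖cpt φ - diskPt δ θ‖ ^ (-2 : ℝ))) := by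
  have hsI : s ∈ Ioo 0 π := hs ▸ hE.add_mem hδ θ
  have hs0 := hsI.1
  have hslope := hω.mul_deriv_div_nonneg hsI
  have hosc := hE.abs_log_dE_sub_log_le hω hγ hδ θ hs hφ
  have hρ0 : 0 < ‖cpt φ - diskPt δ θ‖ := norm_pos_iff.2 (cpt_sub_ne_zero
    (by rw [norm_diskPt hδ.2]; linarith [hδ.1]) φ)
  set ρ := ‖cpt φ - diskPt δ θ‖ with hρ
  have hpow : 6 * γ * (ρ / s) ^ (3 / 4 : ℝ) * ρ ^ (-2 : ℝ) =
      6 * γ * s ^ (-(3 / 4) : ℝ) * ρ ^ (-(5 / 4) : ℝ) := by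
    rw [div_rpow hρ0.le hs0.le, rpow_neg hs0.le,
      show (-(5 / 4) : ℝ) = 3 / 4 + -2 by norm_num, rpow_add hρ0]
    ring
  have hfar : ENNReal.ofReal ((Ioi (s / 6)).indicator (fun _ => log⁺ (s / dE E (cpt φ))) ρ) =
      farLog E s (diskPt δ θ) φ := by
    simp only [farLog, indicator, mem_Ioi, mem_ofPred_eq, ← hρ]
    split_ifs
    · rw [posLog_apply, ENNReal.ofReal_max, ENNReal.ofReal_zero, max_eq_right zero_le]
    · exact ENNReal.ofReal_zero
  refine (mul_le_mul_left (ENNReal.ofReal_le_ofReal hosc) _).trans_eq ?_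
  rw [ENNReal.ofReal_mul hslope, mul_assoc, ENNReal.ofReal_add (by positivity)
    (indicator_nonneg (fun _ _ => posLog_nonneg) _), add_mul, hfar,
    ← ENNReal.ofReal_mul (by positivity), hpow, ENNReal.ofReal_mul (by positivity)]

lemma RegularSet.oscInt_le (hE : RegularSet E C η) (hω : OmegaHyp ω ω' γ) (hγ : 4 / 3 ≤ γ)
    {δ : ℝ} (hδ : δ ∈ Ioc 0 1) (θ : ℝ) {s : ℝ} (hs : s = dE E (cpt θ) + δ) :
    oscInt (fun φ => log (ω (dE E (cpt φ)))) (log (ω s)) (diskPt δ θ) ≤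
      ENNReal.ofReal (s * ω' s / ω s * (oscConst C η γ / s * (s / δ) ^ (1 / 4 : ℝ))) := by
  have hC := hE.pos
  have hη := hE.exp_mem.1
  have hδ0 := hδ.1
  have hsI : s ∈ Ioo 0 π := hs ▸ hE.add_mem hδ θ
  have hs0 := hsI.1
  have hδs : 1 ≤ (s / δ) ^ (1 / 4 : ℝ) := by
    refine one_le_rpow ((one_le_div hδ0).2 ?_) (by norm_num)
    linarith [dE_nonneg E (cpt θ)]
  have hnear := lintegral_norm_cpt_sub_rpow_neg_le (z := diskPt δ θ) (p := 5 / 4) hδ0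
    (by rw [norm_diskPt hδ.2]; linarith) (by norm_num)
  refine (lintegral_mono_ae (hE.ae_pos.mono fun φ hφ =>
    hE.ofReal_abs_log_dE_sub_log_mul_le hω hγ hδ θ hs hφ)).trans ?_
  rw [lintegral_const_mul' _ _ ENNReal.ofReal_ne_top, lintegral_add_right _ (by fun_prop),
    lintegral_const_mul' _ _ ENNReal.ofReal_ne_top,
    ENNReal.ofReal_mul (hω.mul_deriv_div_nonneg hsI)]
  gcongr
  refine (add_le_add (mul_le_mul_right hnear _) (hE.lintegral_farLog_le hs0 _)).trans ?_
  rw [← ENNReal.ofReal_mul (by positivity), ← ENNReal.ofReal_add (by positivity) (by positivity)]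
  apply ENNReal.ofReal_le_ofReal
  have hscale : s ^ (-(3 / 4) : ℝ) * δ ^ (1 - 5 / 4 : ℝ) = (s / δ) ^ (1 / 4 : ℝ) / s := by
    rw [div_rpow hs0.le hδ0.le, show (1 - 5 / 4 : ℝ) = -(1 / 4) by norm_num, rpow_neg hδ0.le,
      show (-(3 / 4) : ℝ) = 1 / 4 - 1 by norm_num, rpow_sub hs0, rpow_one]
    ring
  calc _ = 60 * π * γ * (s ^ (-(3 / 4) : ℝ) * δ ^ (1 - 5 / 4 : ℝ)) + 72 * C / η / s := by ring
    _ = 60 * π * γ / s * (s / δ) ^ (1 / 4 : ℝ) + 72 * C / η / s := by rw [hscale]; ring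
    _ ≤ 60 * π * γ / s * (s / δ) ^ (1 / 4 : ℝ) + 72 * C / η / s * (s / δ) ^ (1 / 4 : ℝ) := by
      gcongr; exact le_mul_of_one_le_right (by positivity) hδs
    _ = oscConst C η γ / s * (s / δ) ^ (1 / 4 : ℝ) := by rw [oscConst]; ring

end Pointwise

section OuterBounds

variable {E : Set ℂ} {C η γ : ℝ} {ω ω' : ℝ → ℝ}

lemma diskPt_mem {δ : ℝ} (hδ : δ ∈ Ioc 0 1) (θ : ℝ) : diskPt δ θ ∈ unitDisc := by
  rw [unitDisc, mem_ball_zero_iff, norm_diskPt hδ.2]; linarith [hδ.1]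

lemma exists_diskPt_eq {z : ℂ} (hz : z ∈ unitDisc) : ∃ δ ∈ Ioc 0 1, ∃ θ, diskPt δ θ = z := by
  rw [unitDisc, mem_ball_zero_iff] at hz
  refine ⟨1 - ‖z‖, ⟨by linarith, by linarith [norm_nonneg z]⟩, Complex.arg z, ?_⟩
  rw [diskPt, sub_sub_cancel, cpt, Complex.norm_mul_exp_arg_mul_I]

lemma outerFun_eq (ω : ℝ → ℝ) (E : Set ℂ) :
    outerFun ω E = fun z => Complex.exp (herglotz (fun φ => log (ω (dE E (cpt φ)))) z) := rfl

lemma hasDerivAt_outerFun (hlog : LogOmegaInt ω E) {z : ℂ} (hz : z ∈ unitDisc) :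
    HasDerivAt (outerFun ω E)
      (outerFun ω E z * deriv (herglotz (fun φ => log (ω (dE E (cpt φ))))) z) z :=
  (hasDerivAt_herglotz hlog (mem_ball_zero_iff.1 hz)).differentiableAt.hasDerivAt.cexp

lemma differentiableOn_outerFun (hlog : LogOmegaInt ω E) :
    DifferentiableOn ℂ (outerFun ω E) unitDisc := fun _ hz =>
  (hasDerivAt_outerFun hlog hz).differentiableAt.differentiableWithinAt

lemma RegularSet.abs_log_norm_outerFun_sub_le (hE : RegularSet E C η) (hω : OmegaHyp ω ω' γ)
    (hγ : 4 / 3 ≤ γ) (hlog : LogOmegaInt ω E) {δ : ℝ} (hδ : δ ∈ Ioc 0 1) (θ : ℝ) :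
    |log ‖outerFun ω E (diskPt δ θ)‖ - log (ω (dE E (cpt θ) + δ))| ≤
      oscConst C η γ * (δ / (dE E (cpt θ) + δ)) ^ (3 / 4 : ℝ) := by
  have hδ0 := hδ.1
  have hosc := hE.oscInt_le hω hγ hδ θ rfl
  have hsI := hE.add_mem hδ θ
  generalize dE E (cpt θ) + δ = s at *
  have hs0 := hsI.1
  have hK := hE.oscConst_pos (γ := γ) (by linarith)
  have hslope := hω.mul_deriv_div_nonneg hsI
  have hslope_one := hω.mul_deriv_div_le_one (by linarith) hsI
  have hre := (enorm_re_herglotz_sub_le hlog (log (ω s)) hδ0 (norm_diskPt hδ.2 θ)).trans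
    (mul_le_mul_right hosc _)
  rw [← ENNReal.ofReal_mul hδ0.le, ← ofReal_norm, ENNReal.ofReal_le_ofReal_iff (by positivity),
    Real.norm_eq_abs] at hre
  rw [outerFun_eq, Complex.norm_exp, log_exp]
  refine hre.trans ?_
  have hscale : δ / s * (s / δ) ^ (1 / 4 : ℝ) = (δ / s) ^ (3 / 4 : ℝ) := by
    rw [← inv_div δ s, inv_rpow (by positivity), show (3 / 4 : ℝ) = 1 - 1 / 4 by norm_num,
      rpow_sub (by positivity), rpow_one, ← div_eq_mul_inv]
  calc _ = s * ω' s / ω s * (oscConst C η γ * (δ / s * (s / δ) ^ (1 / 4 : ℝ))) := by ring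
    _ ≤ 1 * (oscConst C η γ * (δ / s * (s / δ) ^ (1 / 4 : ℝ))) := by gcongr
    _ = _ := by rw [one_mul, hscale]

lemma RegularSet.norm_outerFun_le (hE : RegularSet E C η) (hω : OmegaHyp ω ω' γ)
    (hγ : 4 / 3 ≤ γ) (hlog : LogOmegaInt ω E) {δ : ℝ} (hδ : δ ∈ Ioc 0 1) (θ : ℝ) :
    ‖outerFun ω E (diskPt δ θ)‖ ≤ exp (oscConst C η γ) * ω (dE E (cpt θ) + δ) := by
  have hδ0 := hδ.1
  have hsI := hE.add_mem hδ θ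
  have hK := hE.oscConst_pos (γ := γ) (by linarith)
  have hdiff := (abs_le.1 (hE.abs_log_norm_outerFun_sub_le hω hγ hlog hδ θ)).2
  have hpos : 0 < ‖outerFun ω E (diskPt δ θ)‖ := by
    rw [outerFun_eq, Complex.norm_exp]; exact exp_pos _
  have hωs := hω.pos hsI.1 hsI.2.le
  have hpow : (δ / (dE E (cpt θ) + δ)) ^ (3 / 4 : ℝ) ≤ 1 := by
    refine rpow_le_one (div_nonneg hδ0.le hsI.1.le) ?_ (by norm_num)
    rw [div_le_one hsI.1]
    linarith [dE_nonneg E (cpt θ)]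
  rw [← log_le_log_iff hpos (by positivity), log_mul (exp_ne_zero _) hωs.ne', log_exp]
  linarith [mul_le_of_le_one_right hK.le hpow]

lemma RegularSet.norm_outerFun_le_const (hE : RegularSet E C η) (hω : OmegaHyp ω ω' γ)
    (hγ : 4 / 3 ≤ γ) (hlog : LogOmegaInt ω E) {z : ℂ} (hz : z ∈ unitDisc) :
    ‖outerFun ω E z‖ ≤ exp (oscConst C η γ) * ω 3 := by
  obtain ⟨δ, hδ, θ, rfl⟩ := exists_diskPt_eq hz
  refine (hE.norm_outerFun_le hω hγ hlog hδ θ).trans ?_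
  gcongr
  exact hω.mono (hE.add_mem hδ θ).1 (by linarith [dE_cpt_le_two hE θ, hδ.2]) pi_gt_three.le

lemma RegularSet.norm_deriv_outerFun_le (hE : RegularSet E C η) (hω : OmegaHyp ω ω' γ)
    (hγ : 4 / 3 ≤ γ) (hlog : LogOmegaInt ω E) {δ : ℝ} (hδ : δ ∈ Ioc 0 1) (θ : ℝ) :
    ‖deriv (outerFun ω E) (diskPt δ θ)‖ ≤ exp (oscConst C η γ) * oscConst C η γ *
      (ω' (dE E (cpt θ) + δ) * ((dE E (cpt θ) + δ) / δ) ^ (1 / 4 : ℝ)) := by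
  have hδ0 := hδ.1
  have hz := diskPt_mem hδ θ
  have hnorm := hE.norm_outerFun_le hω hγ hlog hδ θ
  have hosc := hE.oscInt_le hω hγ hδ θ rfl
  have hsI := hE.add_mem hδ θ
  generalize dE E (cpt θ) + δ = s at *
  have hs0 := hsI.1
  have hK := hE.oscConst_pos (γ := γ) (by linarith)
  have hωs := hω.pos hsI.1 hsI.2.le
  have hslope := hω.mul_deriv_div_nonneg hsI
  have hderiv := (enorm_deriv_herglotz_le hlog (log (ω s)) (mem_ball_zero_iff.1 hz)).trans hosc
  rw [← ofReal_norm, ENNReal.ofReal_le_ofReal_iff (by positivity)] at hderiv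
  rw [(hasDerivAt_outerFun hlog hz).deriv, norm_mul]
  refine (mul_le_mul hnorm hderiv (norm_nonneg _) (by positivity)).trans_eq ?_
  field_simp

end OuterBounds

section Radial

variable {E : Set ℂ} {C η γ : ℝ} {ω ω' : ℝ → ℝ}

lemma lintegral_Ioc_div_rpow {a p : ℝ} (ha : 0 < a) (hp : p < 1) :
    ∫⁻ x in Ioc 0 a, ENNReal.ofReal ((a / x) ^ p) = ENNReal.ofReal (a / (1 - p)) := by
  have hsplit : ∀ x ∈ Ioc 0 a, ENNReal.ofReal ((a / x) ^ p) =
      ENNReal.ofReal (a ^ p) * ENNReal.ofReal (x ^ (-p)) := fun x hx => by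
    rw [← ENNReal.ofReal_mul (by positivity), div_rpow ha.le hx.1.le, rpow_neg hx.1.le,
      div_eq_mul_inv]
  rw [setLIntegral_congr_fun measurableSet_Ioc hsplit,
    lintegral_const_mul' _ _ ENNReal.ofReal_ne_top, lintegral_Ioc_rpow (by linarith) ha.le,
    ← ENNReal.ofReal_mul (by positivity), mul_div_assoc', ← rpow_add ha, add_neg_cancel_left,
    rpow_one, neg_add_eq_sub]

lemma lintegral_Ioi_div_rpow {a p : ℝ} (ha : 0 < a) (hp : 1 < p) :
    ∫⁻ x in Ioi a, ENNReal.ofReal ((a / x) ^ p) = ENNReal.ofReal (a / (p - 1)) := by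
  have hsplit : ∀ x ∈ Ioi a, ENNReal.ofReal ((a / x) ^ p) =
      ENNReal.ofReal (a ^ p) * ENNReal.ofReal (x ^ (-p)) := fun x hx => by
    have hx0 : 0 < x := ha.trans hx
    rw [← ENNReal.ofReal_mul (by positivity), div_rpow ha.le hx0.le, rpow_neg hx0.le,
      div_eq_mul_inv]
  rw [setLIntegral_congr_fun measurableSet_Ioi hsplit,
    lintegral_const_mul' _ _ ENNReal.ofReal_ne_top, lintegral_Ioi_rpow (by linarith) ha,
    ← ENNReal.ofReal_mul (by positivity), mul_div_assoc', ← rpow_add ha, add_neg_cancel_left,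
    rpow_one, neg_neg]

/-- The constant in the radial estimate `RegularSet.lintegral_radial_le`. -/
noncomputable def radialConst (C η γ : ℝ) : ℝ :=
  (exp (oscConst C η γ) * oscConst C η γ) ^ 2 * (2 * (2 + (1 - 2 * γ⁻¹)⁻¹))

lemma two_mul_inv_lt_one (hγ : 2 < γ) : 2 * γ⁻¹ < 1 := by
  rw [← div_eq_mul_inv, div_lt_one (by linarith)]
  exact hγ

lemma RegularSet.radialConst_pos (hE : RegularSet E C η) (hγ : 2 < γ) : 0 < radialConst C η γ := by
  have : 0 < 1 - 2 * γ⁻¹ := sub_pos.2 (two_mul_inv_lt_one hγ)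
  have := hE.oscConst_pos (γ := γ) (by linarith)
  unfold radialConst
  positivity

lemma OmegaHyp.sq_deriv_mul_rpow_le (hω : OmegaHyp ω ω' γ) (hγ : 0 < γ) {a δ : ℝ} (ha : 0 < a)
    (hδ : 0 < δ) (hs : a + δ < π) :
    (ω' (a + δ) * ((a + δ) / δ) ^ (1 / 4 : ℝ)) ^ 2 ≤
      ω' a ^ 2 * ((a / (a + δ)) ^ (2 - 2 * γ⁻¹) * ((a + δ) / δ) ^ (1 / 2 : ℝ)) := by
  have hds := hω.deriv_nonneg (t := a + δ) ⟨by linarith, hs⟩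
  calc _ ≤ (ω' a * (a / (a + δ)) ^ (1 - γ⁻¹) * ((a + δ) / δ) ^ (1 / 4 : ℝ)) ^ 2 := by
        gcongr
        exact hω.deriv_le_mul_rpow hγ ha (by linarith) hs
    _ = _ := by
      rw [mul_pow, mul_pow, ← rpow_mul_natCast (by positivity), ← rpow_mul_natCast (by positivity),
        mul_assoc]
      congr 3 <;> push_cast <;> ring

lemma two_mul_rpow_half_le {x : ℝ} (hx : 0 ≤ x) :
    (2 * x) ^ (1 / 2 : ℝ) ≤ 2 * x ^ (1 / 2 : ℝ) := by
  rw [mul_rpow zero_le_two hx]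
  gcongr
  exact rpow_le_self_of_one_le one_le_two (by norm_num)

lemma OmegaHyp.sq_deriv_mul_rpow_le_of_le (hω : OmegaHyp ω ω' γ) (hγ : 1 ≤ γ) {a δ : ℝ}
    (hδ : 0 < δ) (hδa : δ ≤ a) (hs : a + δ < π) :
    (ω' (a + δ) * ((a + δ) / δ) ^ (1 / 4 : ℝ)) ^ 2 ≤ 2 * ω' a ^ 2 * (a / δ) ^ (1 / 2 : ℝ) := by
  have ha : 0 < a := hδ.trans_le hδa
  have hγ' : γ⁻¹ ≤ 1 := inv_le_one_of_one_le₀ hγ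
  have hdecay : (a / (a + δ)) ^ (2 - 2 * γ⁻¹) ≤ 1 :=
    rpow_le_one (by positivity) (div_le_one_of_le₀ (by linarith) (by positivity)) (by linarith)
  have hratio : ((a + δ) / δ) ^ (1 / 2 : ℝ) ≤ 2 * (a / δ) ^ (1 / 2 : ℝ) := by
    refine le_trans ?_ (two_mul_rpow_half_le (by positivity))
    rw [mul_div_assoc']
    gcongr
    linarith
  calc _ ≤ ω' a ^ 2 * ((a / (a + δ)) ^ (2 - 2 * γ⁻¹) * ((a + δ) / δ) ^ (1 / 2 : ℝ)) :=
        hω.sq_deriv_mul_rpow_le (by linarith) ha hδ hs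
    _ ≤ ω' a ^ 2 * (1 * (2 * (a / δ) ^ (1 / 2 : ℝ))) := by gcongr
    _ = _ := by ring

lemma OmegaHyp.sq_deriv_mul_rpow_le_of_ge (hω : OmegaHyp ω ω' γ) (hγ : 1 ≤ γ) {a δ : ℝ}
    (ha : 0 < a) (haδ : a ≤ δ) (hs : a + δ < π) :
    (ω' (a + δ) * ((a + δ) / δ) ^ (1 / 4 : ℝ)) ^ 2 ≤
      2 * ω' a ^ 2 * (a / δ) ^ (2 - 2 * γ⁻¹) := by
  have hδ : 0 < δ := ha.trans_le haδ
  have hγ' : γ⁻¹ ≤ 1 := inv_le_one_of_one_le₀ hγ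
  have hdecay : (a / (a + δ)) ^ (2 - 2 * γ⁻¹) ≤ (a / δ) ^ (2 - 2 * γ⁻¹) := by
    apply rpow_le_rpow (by positivity) _ (by linarith)
    gcongr
    linarith
  have hratio : ((a + δ) / δ) ^ (1 / 2 : ℝ) ≤ 2 := by
    calc ((a + δ) / δ) ^ (1 / 2 : ℝ) ≤ 2 ^ (1 / 2 : ℝ) := by
          gcongr; rw [div_le_iff₀ hδ]; linarith
      _ ≤ 2 := rpow_le_self_of_one_le one_le_two (by norm_num)
  calc _ ≤ ω' a ^ 2 * ((a / (a + δ)) ^ (2 - 2 * γ⁻¹) * ((a + δ) / δ) ^ (1 / 2 : ℝ)) :=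
        hω.sq_deriv_mul_rpow_le (by linarith) ha hδ hs
    _ ≤ ω' a ^ 2 * ((a / δ) ^ (2 - 2 * γ⁻¹) * 2) := by gcongr
    _ = _ := by ring

lemma OmegaHyp.lintegral_sq_deriv_mul_rpow_le (hω : OmegaHyp ω ω' γ) (hγ : 2 < γ) {a : ℝ}
    (ha : 0 < a) (haπ : a + 1 < π) :
    ∫⁻ δ in Ioc 0 1, ENNReal.ofReal ((ω' (a + δ) * ((a + δ) / δ) ^ (1 / 4 : ℝ)) ^ 2) ≤
      ENNReal.ofReal (2 * (2 + (1 - 2 * γ⁻¹)⁻¹) * (a * ω' a ^ 2)) := by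
  have hγ' : 0 < 1 - 2 * γ⁻¹ := sub_pos.2 (two_mul_inv_lt_one hγ)
  set F : ℝ → ℝ≥0∞ := fun δ =>
    ENNReal.ofReal ((ω' (a + δ) * ((a + δ) / δ) ^ (1 / 4 : ℝ)) ^ 2)
  have hnear : ∫⁻ δ in Ioc 0 a ∩ Ioc 0 1, F δ ≤
      ENNReal.ofReal (2 * ω' a ^ 2) * ENNReal.ofReal (a / (1 - 1 / 2)) := by
    rw [← lintegral_Ioc_div_rpow ha (by norm_num), ← lintegral_const_mul' _ _ ENNReal.ofReal_ne_top]
    refine (setLIntegral_mono' (measurableSet_Ioc.inter measurableSet_Ioc) fun δ hδ => ?_).trans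
      (lintegral_mono_set inter_subset_left)
    rw [← ENNReal.ofReal_mul (by positivity)]
    exact ENNReal.ofReal_le_ofReal (hω.sq_deriv_mul_rpow_le_of_le (by linarith) hδ.1.1 hδ.1.2
      (by linarith [hδ.2.2]))
  have hfar : ∫⁻ δ in Ioi a ∩ Ioc 0 1, F δ ≤
      ENNReal.ofReal (2 * ω' a ^ 2) * ENNReal.ofReal (a / (2 - 2 * γ⁻¹ - 1)) := by
    rw [← lintegral_Ioi_div_rpow ha (by linarith), ← lintegral_const_mul' _ _ ENNReal.ofReal_ne_top]
    refine (setLIntegral_mono' (measurableSet_Ioi.inter measurableSet_Ioc) fun δ hδ => ?_).trans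
      (lintegral_mono_set inter_subset_left)
    rw [← ENNReal.ofReal_mul (by positivity)]
    exact ENNReal.ofReal_le_ofReal (hω.sq_deriv_mul_rpow_le_of_ge (by linarith) ha
      (le_of_lt hδ.1) (by linarith [hδ.2.2]))
  have hcover : Ioc (0 : ℝ) 1 ⊆ Ioc 0 a ∩ Ioc 0 1 ∪ Ioi a ∩ Ioc 0 1 := fun δ hδ =>
    (le_or_gt δ a).imp (fun h => ⟨⟨hδ.1, h⟩, hδ⟩) fun h => ⟨h, hδ⟩
  refine ((lintegral_mono_set hcover).trans (lintegral_union_le _ _ _)).trans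
    ((add_le_add hnear hfar).trans_eq ?_)
  have hexp : 2 - 2 * γ⁻¹ - 1 = 1 - 2 * γ⁻¹ := by ring
  rw [hexp, ← mul_add, ← ENNReal.ofReal_add (by positivity) (by positivity),
    ← ENNReal.ofReal_mul (by positivity)]
  congr 1
  ring

lemma RegularSet.lintegral_radial_le (hE : RegularSet E C η) (hω : OmegaHyp ω ω' γ)
    (hγ : 2 < γ) (hlog : LogOmegaInt ω E) {θ : ℝ} (hθ : 0 < dE E (cpt θ)) :
    ∫⁻ δ in Ioc 0 1, ENNReal.ofReal (‖deriv (outerFun ω E) (diskPt δ θ)‖ ^ 2) ≤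
      ENNReal.ofReal (radialConst C η γ * (dE E (cpt θ) * ω' (dE E (cpt θ)) ^ 2)) := by
  set a := dE E (cpt θ)
  set B := exp (oscConst C η γ) * oscConst C η γ with hB
  have hpt : ∀ δ ∈ Ioc (0 : ℝ) 1, ENNReal.ofReal (‖deriv (outerFun ω E) (diskPt δ θ)‖ ^ 2) ≤
      ENNReal.ofReal (B ^ 2) *
        ENNReal.ofReal ((ω' (a + δ) * ((a + δ) / δ) ^ (1 / 4 : ℝ)) ^ 2) := fun δ hδ => by
    rw [← ENNReal.ofReal_mul (by positivity), ← mul_pow]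
    gcongr
    exact hE.norm_deriv_outerFun_le hω (by linarith) hlog hδ θ
  refine (setLIntegral_mono' measurableSet_Ioc hpt).trans ?_
  rw [lintegral_const_mul' _ _ ENNReal.ofReal_ne_top]
  refine (mul_le_mul_right (hω.lintegral_sq_deriv_mul_rpow_le hγ hθ
    (by linarith [dE_cpt_le_two hE θ, pi_gt_three])) _).trans_eq ?_
  rw [← ENNReal.ofReal_mul (by positivity), radialConst, ← hB]
  ring_nf

end Radial

section PlaneIntegrals

lemma rpow_half_sq (x : ℝ≥0∞) : (x ^ (1 / 2 : ℝ)) ^ 2 = x := by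
  rw [← ENNReal.rpow_natCast, ← ENNReal.rpow_mul]
  norm_num

lemma lintegral_mul_sq_le {α : Type*} [MeasurableSpace α] (μ : Measure α) {f g : α → ℝ≥0∞}
    (hf : AEMeasurable f μ) (hg : AEMeasurable g μ) :
    (∫⁻ x, f x * g x ∂μ) ^ 2 ≤ (∫⁻ x, f x ^ 2 ∂μ) * ∫⁻ x, g x ^ 2 ∂μ := by
  have h := ENNReal.lintegral_mul_le_Lp_mul_Lq μ Real.HolderConjugate.two_two hf hg
  simp only [Pi.mul_apply, ENNReal.rpow_two] at h
  refine (pow_le_pow_left₀ zero_le h 2).trans_eq ?_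
  rw [mul_pow, rpow_half_sq, rpow_half_sq]

lemma lintegral_polar {G : ℂ → ℝ≥0∞} (hG : Measurable G) :
    ∫⁻ z, G z = ∫⁻ r in Ioi (0 : ℝ), ENNReal.ofReal r * ∫⁻ θ, G (r * cpt θ) ∂circMeas := by
  rw [← Complex.lintegral_comp_polarCoord_symm, polarCoord_target, Measure.volume_eq_prod,
    setLIntegral_prod]
  · refine setLIntegral_congr_fun measurableSet_Ioi fun r _ => ?_
    have hper : Function.Periodic (fun θ => G (r * cpt θ)) (2 * π) := fun θ => by
      simp only [cpt_periodic θ]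
    have hcirc := lintegral_Ioc_eq_of_periodic hper (-π)
    rw [show -π + 2 * π = π by ring] at hcirc
    simp only [smul_eq_mul]
    rw [lintegral_const_mul' _ _ ENNReal.ofReal_ne_top, ← hcirc, restrict_Ioo_eq_restrict_Ioc]
    congr 1
    refine lintegral_congr fun θ => ?_
    rw [Complex.polarCoord_symm_apply, cpt, Complex.exp_mul_I]
    push_cast
    rfl
  · simp only [smul_eq_mul, Complex.polarCoord_symm_apply]
    fun_prop

lemma lintegral_ball {G : ℂ → ℝ≥0∞} {z : ℂ} {r : ℝ}
    (hG : Measurable ((Metric.ball z r).indicator G)) :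
    ∫⁻ v in Metric.ball z r, G v =
      ∫⁻ ρ in Ioo 0 r, ENNReal.ofReal ρ * ∫⁻ θ, G (z + ρ * cpt θ) ∂circMeas := by
  have hball : MeasurableSet (Metric.ball z r) := Metric.isOpen_ball.measurableSet
  have hslice : ∀ ρ ∈ Ioi (0 : ℝ), ENNReal.ofReal ρ *
      ∫⁻ θ, (Metric.ball z r).indicator G (z + ρ * cpt θ) ∂circMeas =
      (Iio r).indicator (fun ρ => ENNReal.ofReal ρ * ∫⁻ θ, G (z + ρ * cpt θ) ∂circMeas) ρ := by
    intro ρ hρ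
    have hmem : ∀ θ, z + ρ * cpt θ ∈ Metric.ball z r ↔ ρ ∈ Iio r := fun θ => by
      rw [mem_ball_iff_norm, add_sub_cancel_left, norm_mul, norm_cpt, mul_one, Complex.norm_real,
        Real.norm_of_nonneg (le_of_lt hρ), mem_Iio]
    by_cases h : ρ ∈ Iio r
    · simp only [indicator_of_mem h, indicator_of_mem ((hmem _).2 h)]
    · simp only [indicator_of_notMem h, indicator_of_notMem (mt (hmem _).1 h), lintegral_zero,
        mul_zero]
  rw [← lintegral_indicator hball, ← lintegral_add_left_eq_self _ z,
    lintegral_polar (G := fun v => (Metric.ball z r).indicator G (z + v))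
      (hG.comp (measurable_const_add z)),
    setLIntegral_congr_fun measurableSet_Ioi hslice, setLIntegral_indicator measurableSet_Iio,
    Iio_inter_Ioi]

lemma lintegral_unitDisc {G : ℂ → ℝ≥0∞} (hG : Measurable (unitDisc.indicator G)) :
    ∫⁻ z in unitDisc, G z =
      ∫⁻ δ in Ioc 0 1, ENNReal.ofReal (1 - δ) * ∫⁻ θ, G (diskPt δ θ) ∂circMeas := by
  rw [unitDisc, lintegral_ball hG, ← restrict_Ioo_eq_restrict_Ioc,
    ← lintegral_indicator measurableSet_Ioo, ← lintegral_indicator measurableSet_Ioo,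
    ← lintegral_sub_left_eq_self _ 1]
  refine lintegral_congr fun δ => ?_
  have hmem : 1 - δ ∈ Ioo (0 : ℝ) 1 ↔ δ ∈ Ioo (0 : ℝ) 1 := by
    simp only [mem_Ioo]
    constructor <;> rintro ⟨h₀, h₁⟩ <;> constructor <;> linarith
  by_cases h : δ ∈ Ioo (0 : ℝ) 1
  · rw [indicator_of_mem (hmem.2 h), indicator_of_mem h]
    simp only [zero_add, diskPt]
  · rw [indicator_of_notMem (mt hmem.1 h), indicator_of_notMem h]

lemma enorm_sq_le_lintegral_circle {g : ℂ → ℂ} {z : ℂ} {ρ : ℝ} (hρ : 0 ≤ ρ)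
    (hg : DifferentiableOn ℂ g (Metric.closedBall z ρ)) :
    ENNReal.ofReal (2 * π) * ‖g z‖ₑ ^ 2 ≤ ∫⁻ θ, ‖g (z + ρ * cpt θ)‖ₑ ^ 2 ∂circMeas := by
  have hmean : (2 * π) • g z ^ 2 = ∫ θ, g (z + ρ * cpt θ) ^ 2 ∂circMeas := by
    have hdiff : DifferentiableOn ℂ (fun v => g v ^ 2) (Metric.closedBall z |ρ|) := by
      rw [abs_of_nonneg hρ]
      exact hg.pow 2
    rw [← (hdiff.diffContOnCl_ball le_rfl).circleAverage, Real.circleAverage,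
      intervalIntegral.integral_of_le two_pi_pos.le, smul_smul, mul_inv_cancel₀ (by positivity),
      one_smul]
    rfl
  have hle := enorm_integral_le_lintegral_enorm (μ := circMeas) fun θ => g (z + ρ * cpt θ) ^ 2
  rw [← hmean, enorm_smul, Real.enorm_of_nonneg (by positivity)] at hle
  simpa only [enorm_pow] using hle

lemma enorm_sq_le_lintegral_ball {g : ℂ → ℂ} {z : ℂ} {r : ℝ} (hr : 0 < r)
    (hg : DifferentiableOn ℂ g (Metric.ball z r)) (hgm : Measurable g) :
    ENNReal.ofReal (π * r ^ 2) * ‖g z‖ₑ ^ 2 ≤ ∫⁻ v in Metric.ball z r, ‖g v‖ₑ ^ 2 := by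
  have harea : ∫⁻ ρ in Ioo 0 r, ENNReal.ofReal ρ = ENNReal.ofReal (r ^ 2 / 2) := by
    have h := lintegral_Ioc_rpow (q := 1) (by norm_num) hr.le
    norm_num at h
    rw [restrict_Ioo_eq_restrict_Ioc, h]
  calc ENNReal.ofReal (π * r ^ 2) * ‖g z‖ₑ ^ 2
      = ∫⁻ ρ in Ioo 0 r, ENNReal.ofReal ρ * (ENNReal.ofReal (2 * π) * ‖g z‖ₑ ^ 2) := by
        rw [lintegral_mul_const _ (by fun_prop), harea, ← mul_assoc,
          ← ENNReal.ofReal_mul (by positivity)]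
        ring_nf
    _ ≤ ∫⁻ ρ in Ioo 0 r, ENNReal.ofReal ρ * ∫⁻ θ, ‖g (z + ρ * cpt θ)‖ₑ ^ 2 ∂circMeas := by
        refine setLIntegral_mono' measurableSet_Ioo fun ρ hρ => ?_
        gcongr
        exact enorm_sq_le_lintegral_circle hρ.1.le
          (hg.mono (Metric.closedBall_subset_ball hρ.2))
    _ = _ := (lintegral_ball ((by fun_prop : Measurable fun v => ‖g v‖ₑ ^ 2).indicator
        measurableSet_ball)).symm

end PlaneIntegrals

section Carleson

variable {E : Set ℂ} {C η : ℝ}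

lemma measurableSet_unitDisc : MeasurableSet unitDisc := measurableSet_ball

lemma isOpen_unitDisc : IsOpen unitDisc := Metric.isOpen_ball

lemma measurable_indicator_unitDisc {f : ℂ → ℂ} (hf : ContinuousOn f unitDisc) :
    Measurable (unitDisc.indicator f) := by
  classical
  rw [← piecewise_eq_indicator]
  exact hf.measurable_piecewise continuousOn_const measurableSet_unitDisc

lemma diskPt_periodic (δ : ℝ) : Function.Periodic (diskPt δ) (2 * π) := fun θ => by
  simp only [diskPt, cpt_periodic θ]

lemma hasDerivAt_diskPt_slant (σ s θ : ℝ) : HasDerivAt (fun s => diskPt s (θ + σ * s))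
    (-cpt (θ + σ * s) + ((1 - s : ℝ) : ℂ) * (σ * (cpt (θ + σ * s) * Complex.I))) s := by
  have hradius : HasDerivAt (fun s : ℝ => ((1 - s : ℝ) : ℂ)) ((-1 : ℝ) : ℂ) s :=
    ((hasDerivAt_id s).const_sub 1).ofReal_comp
  have hangle : HasDerivAt (fun s : ℝ => θ + σ * s) σ s := by
    simpa using ((hasDerivAt_id s).const_mul σ).const_add θ
  have hcpt : HasDerivAt (fun s : ℝ => cpt (θ + σ * s))
      (σ • (cpt (θ + σ * s) * Complex.I)) s :=
    HasDerivAt.scomp (g₁ := cpt) (h := fun s : ℝ => θ + σ * s) s (hasDerivAt_cpt _) hangle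
  refine (hradius.fun_mul hcpt).congr_deriv ?_
  simp

lemma norm_deriv_diskPt_slant_le {s : ℝ} (hs : s ∈ Icc 0 1) (σ θ : ℝ) :
    ‖-cpt (θ + σ * s) + ((1 - s : ℝ) : ℂ) * (σ * (cpt (θ + σ * s) * Complex.I))‖ ≤ 1 + |σ| := by
  refine (norm_add_le _ _).trans ?_
  rw [norm_neg, norm_mul, norm_mul, norm_mul, norm_cpt, Complex.norm_I, Complex.norm_real,
    Complex.norm_real, Real.norm_eq_abs, Real.norm_eq_abs, abs_of_nonneg (by linarith [hs.2])]
  nlinarith [hs.1, hs.2, abs_nonneg σ]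

lemma enorm_diskPt_slant_sub_le {g : ℂ → ℂ} (hg : DifferentiableOn ℂ g unitDisc) {a b : ℝ}
    (ha : 0 < a) (hab : a ≤ b) (hb : b ≤ 1) (θ σ : ℝ) :
    ‖g (diskPt a (θ + σ * a)) - g (diskPt b (θ + σ * b))‖ₑ ≤
      ENNReal.ofReal (1 + |σ|) * ∫⁻ s in Ioc a b, ‖deriv g (diskPt s (θ + σ * s))‖ₑ := by
  set v : ℝ → ℂ := fun s =>
    -cpt (θ + σ * s) + ((1 - s : ℝ) : ℂ) * (σ * (cpt (θ + σ * s) * Complex.I))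
  have hmem : ∀ s ∈ uIcc a b, diskPt s (θ + σ * s) ∈ unitDisc := fun s hs => by
    rw [uIcc_of_le hab] at hs
    exact diskPt_mem ⟨ha.trans_le hs.1, hs.2.trans hb⟩ _
  have hderiv : ∀ s ∈ uIcc a b, HasDerivAt (fun s => g (diskPt s (θ + σ * s)))
      (deriv g (diskPt s (θ + σ * s)) * v s) s := fun s hs =>
    (hg.differentiableAt (isOpen_unitDisc.mem_nhds (hmem s hs))).hasDerivAt.comp s
      (hasDerivAt_diskPt_slant σ s θ)
  have hcont : ContinuousOn (fun s => deriv g (diskPt s (θ + σ * s)) * v s) (uIcc a b) := by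
    have hdisk : Continuous fun s => diskPt s (θ + σ * s) :=
      continuous_diskPt.comp (by fun_prop : Continuous fun s : ℝ => (s, θ + σ * s))
    have hv : Continuous v := by fun_prop
    exact ((hg.deriv isOpen_unitDisc).continuousOn.comp hdisk.continuousOn hmem).mul
      hv.continuousOn
  rw [← enorm_neg, neg_sub, ← intervalIntegral.integral_eq_sub_of_hasDerivAt hderiv
    hcont.intervalIntegrable, intervalIntegral.integral_of_le hab,
    ← lintegral_const_mul' _ _ ENNReal.ofReal_ne_top]
  refine (enorm_integral_le_lintegral_enorm _).trans
    (setLIntegral_mono' measurableSet_Ioc fun s hs => ?_)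
  rw [enorm_mul, mul_comm, ← ofReal_norm (v s)]
  gcongr
  exact norm_deriv_diskPt_slant_le ⟨ha.le.trans hs.1.le, hs.2.trans hb⟩ σ θ

lemma enorm_diskPt_sub_le {g : ℂ → ℂ} (hg : DifferentiableOn ℂ g unitDisc) {a b : ℝ} (ha : 0 < a)
    (hab : a ≤ b) (hb : b ≤ 1) (θ : ℝ) :
    ‖g (diskPt a θ) - g (diskPt b θ)‖ₑ ≤ ∫⁻ s in Ioc a b, ‖deriv g (diskPt s θ)‖ₑ := by
  simpa using enorm_diskPt_slant_sub_le hg ha hab hb θ 0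

/-- The energy of `h` on the radius at angle `θ`, weighted by the size of the neighbourhoods
of `E`. -/
noncomputable def radialEnergy (E : Set ℂ) (h : ℂ → ℂ) (θ : ℝ) : ℝ≥0∞ :=
  ∫⁻ s in Ioc 0 1, nbhdMeas E s * ‖h (diskPt s θ)‖ₑ ^ 2

@[fun_prop]
lemma measurable_nbhdMeas (E : Set ℂ) : Measurable (nbhdMeas E) := (nbhdMeas_mono E).measurable

lemma nbhdMeas_ne_top (E : Set ℂ) (t : ℝ) : nbhdMeas E t ≠ ∞ :=
  ((nbhdMeas_le E t).trans_lt ENNReal.ofReal_lt_top).ne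

lemma measurable_mul_enorm_sq_diskPt {h : ℂ → ℂ} (hh : Measurable h) :
    Measurable fun p : ℝ × ℝ => nbhdMeas E p.2 * ‖h (diskPt p.2 p.1)‖ₑ ^ 2 := by
  have hdisk : Measurable fun p : ℝ × ℝ => diskPt p.2 p.1 :=
    continuous_diskPt.measurable.comp measurable_swap
  fun_prop

lemma measurable_radialEnergy {h : ℂ → ℂ} (hh : Measurable h) : Measurable (radialEnergy E h) :=
  (measurable_mul_enorm_sq_diskPt hh).lintegral_prod_right'

lemma enorm_sub_sq_le_mul_radialEnergy {g : ℂ → ℂ} (hg : DifferentiableOn ℂ g unitDisc)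
    (hpos : ∀ s ∈ Ioc 0 1, nbhdMeas E s ≠ 0) {δ : ℝ} (hδ : δ ∈ Ioc 0 1) (θ : ℝ) :
    ‖g (diskPt δ θ) - g 0‖ₑ ^ 2 ≤
      (∫⁻ s in Ioc 0 1, (nbhdMeas E s)⁻¹) * radialEnergy E (deriv g) θ := by
  have hcenter : diskPt 1 θ = 0 := by simp [diskPt]
  have hradial : ‖g (diskPt δ θ) - g 0‖ₑ ≤ ∫⁻ s in Ioc 0 1,
      (nbhdMeas E s)⁻¹ ^ (1 / 2 : ℝ) *
        (nbhdMeas E s ^ (1 / 2 : ℝ) * ‖deriv g (diskPt s θ)‖ₑ) := by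
    rw [← hcenter]
    refine ((enorm_diskPt_sub_le hg hδ.1 hδ.2 le_rfl θ).trans
      (lintegral_mono_set (Ioc_subset_Ioc_left hδ.1.le))).trans_eq
      (setLIntegral_congr_fun measurableSet_Ioc fun s hs => ?_)
    rw [← mul_assoc, ← ENNReal.mul_rpow_of_nonneg _ _ (by norm_num),
      ENNReal.inv_mul_cancel (hpos s hs) (nbhdMeas_ne_top E s), ENNReal.one_rpow, one_mul]
  refine (pow_le_pow_left₀ zero_le hradial 2).trans
    ((lintegral_mul_sq_le _ (by fun_prop) (by fun_prop)).trans_eq ?_)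
  simp only [mul_pow, rpow_half_sq, radialEnergy]

/-- The annulus of points whose distance to the circle is comparable to `s`. -/
def annulus (s : ℝ) : Set ℂ := {v | s / 2 < 1 - ‖v‖ ∧ 1 - ‖v‖ < 3 * s / 2}

lemma measurableSet_mem_annulus : MeasurableSet {p : ℝ × ℂ | p.2 ∈ annulus p.1} := by
  have hlower : MeasurableSet {p : ℝ × ℂ | p.1 / 2 < 1 - ‖p.2‖} :=
    measurableSet_lt (by fun_prop) (by fun_prop)
  have hupper : MeasurableSet {p : ℝ × ℂ | 1 - ‖p.2‖ < 3 * p.1 / 2} :=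
    measurableSet_lt (by fun_prop) (by fun_prop)
  exact hlower.inter hupper

lemma measurableSet_annulus (s : ℝ) : MeasurableSet (annulus s) :=
  measurableSet_mem_annulus.preimage (measurable_const.prodMk measurable_id)

lemma ball_diskPt_subset_annulus {s : ℝ} (hs : s ≤ 1) (θ : ℝ) :
    Metric.ball (diskPt s θ) (s / 2) ⊆ annulus s := fun v hv => by
  rw [mem_ball_iff_norm] at hv
  have hv₁ := norm_le_norm_add_norm_sub' v (diskPt s θ)
  have hv₂ := norm_le_norm_add_norm_sub' (diskPt s θ) v
  rw [norm_sub_rev _ v] at hv₂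
  rw [norm_diskPt hs] at hv₁ hv₂
  exact ⟨by linarith, by linarith⟩

lemma ball_diskPt_subset_closedBall {s : ℝ} (hs : 0 ≤ s) (θ : ℝ) :
    Metric.ball (diskPt s θ) (s / 2) ⊆ {v | ‖cpt θ - v‖ ≤ 3 * s / 2} := fun v hv => by
  rw [mem_ball_iff_norm'] at hv
  have htri := norm_sub_le_norm_sub_add_norm_sub (cpt θ) (diskPt s θ) v
  rw [norm_cpt_sub_diskPt hs] at htri
  change ‖cpt θ - v‖ ≤ 3 * s / 2
  linarith

lemma annulus_subset_unitDisc {s : ℝ} (hs : 0 ≤ s) : annulus s ⊆ unitDisc := fun v hv => by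
  rw [unitDisc, mem_ball_zero_iff]
  linarith [hv.1]

lemma enorm_sq_diskPt_le {h : ℂ → ℂ} (hh : DifferentiableOn ℂ h unitDisc) (hm : Measurable h)
    {s : ℝ} (hs : s ∈ Ioc 0 1) (θ : ℝ) :
    ‖h (diskPt s θ)‖ₑ ^ 2 ≤ ENNReal.ofReal (4 / (π * s ^ 2)) *
      ∫⁻ v in annulus s, {v | ‖cpt θ - v‖ ≤ 3 * s / 2}.indicator (fun v => ‖h v‖ₑ ^ 2) v := by
  have hs0 := hs.1
  have hsub := ball_diskPt_subset_annulus hs.2 θ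
  calc ‖h (diskPt s θ)‖ₑ ^ 2 = ENNReal.ofReal (4 / (π * s ^ 2)) *
        (ENNReal.ofReal (π * (s / 2) ^ 2) * ‖h (diskPt s θ)‖ₑ ^ 2) := by
        rw [← mul_assoc, ← ENNReal.ofReal_mul (by positivity),
          show 4 / (π * s ^ 2) * (π * (s / 2) ^ 2) = 1 by field_simp; norm_num,
          ENNReal.ofReal_one, one_mul]
    _ ≤ ENNReal.ofReal (4 / (π * s ^ 2)) *
          ∫⁻ v in Metric.ball (diskPt s θ) (s / 2), ‖h v‖ₑ ^ 2 := by
        gcongr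
        exact enorm_sq_le_lintegral_ball (half_pos hs0)
          (hh.mono (hsub.trans (annulus_subset_unitDisc hs0.le))) hm
    _ ≤ _ := by
        refine mul_le_mul_right ?_ _
        rw [setLIntegral_indicator (measurableSet_le (by fun_prop) (by fun_prop))]
        exact lintegral_mono_set (subset_inter (ball_diskPt_subset_closedBall hs0.le θ) hsub)

lemma lintegral_mul_lintegral_indicator {μ : Measure ℂ} [SFinite μ] {W : ℝ → ℝ≥0∞}
    (hW : Measurable W) {D : ℂ → ℝ≥0∞} (hD : Measurable D) (R : ℝ) :
    ∫⁻ θ, W θ * ∫⁻ v, {v | ‖cpt θ - v‖ ≤ R}.indicator D v ∂μ ∂circMeas =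
      ∫⁻ v, D v * ∫⁻ θ in {θ | ‖cpt θ - v‖ ≤ R}, W θ ∂circMeas ∂μ := by
  have hnear : MeasurableSet {p : ℝ × ℂ | ‖cpt p.1 - p.2‖ ≤ R} :=
    measurableSet_le (by fun_prop) (by fun_prop)
  have hleft : ∀ θ, W θ * ∫⁻ v, {v | ‖cpt θ - v‖ ≤ R}.indicator D v ∂μ =
      ∫⁻ v, {p : ℝ × ℂ | ‖cpt p.1 - p.2‖ ≤ R}.indicator (fun p => D p.2 * W p.1) (θ, v) ∂μ :=
    fun θ => by
      rw [← lintegral_const_mul _ (hD.indicator (measurableSet_le (by fun_prop) (by fun_prop)))]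
      refine lintegral_congr fun v => ?_
      simp only [indicator, mem_ofPred_eq, mul_ite, mul_zero, mul_comm]
  have hright : ∀ v, D v * ∫⁻ θ in {θ | ‖cpt θ - v‖ ≤ R}, W θ ∂circMeas =
      ∫⁻ θ, {p : ℝ × ℂ | ‖cpt p.1 - p.2‖ ≤ R}.indicator (fun p => D p.2 * W p.1) (θ, v)
        ∂circMeas := fun v => by
    rw [← lintegral_indicator (measurableSet_norm_cpt_sub_le v R),
      ← lintegral_const_mul _ (hW.indicator (measurableSet_norm_cpt_sub_le v R))]
    refine lintegral_congr fun θ => ?_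
    simp only [indicator, mem_ofPred_eq, mul_ite, mul_zero]
  simp only [hleft, hright]
  exact lintegral_lintegral_swap
    (Measurable.indicator (by fun_prop : Measurable fun p : ℝ × ℂ => D p.2 * W p.1)
      hnear).aemeasurable

lemma RegularSet.nbhdMeas_mul_lintegral_diskPt_le (hE : RegularSet E C η) {w : ℝ → ℝ}
    (hw : Measurable w) (hw0 : ∀ s, 0 ≤ w s) (hanti : AntitoneOn w (Ioo 0 π)) {h : ℂ → ℂ}
    (hh : DifferentiableOn ℂ h unitDisc) (hm : Measurable h) {s : ℝ} (hs : s ∈ Ioc 0 1) :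
    nbhdMeas E s * ∫⁻ θ, ENNReal.ofReal (w (dE E (cpt θ))) * ‖h (diskPt s θ)‖ₑ ^ 2 ∂circMeas ≤
      (∫⁻ φ, ENNReal.ofReal (w (dE E (cpt φ))) ∂circMeas) *
        (ENNReal.ofReal (6 * C / π / s) * ∫⁻ v in annulus s, ‖h v‖ₑ ^ 2) := by
  have hC := hE.pos
  have hs0 := hs.1
  set W : ℝ → ℝ≥0∞ := fun θ => ENNReal.ofReal (w (dE E (cpt θ)))
  have hbox : ∀ v, nbhdMeas E s * ∫⁻ θ in {θ | ‖cpt θ - v‖ ≤ 3 * s / 2}, W θ ∂circMeas ≤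
      ENNReal.ofReal (C * (3 * s / 2)) * ∫⁻ φ, W φ ∂circMeas := fun v => by
    rw [mul_comm]
    exact (mul_le_mul_right (nbhdMeas_mono E (by linarith)) _).trans
      (hE.lintegral_ball_mul_nbhdMeas_le hw hw0 hanti (by positivity) v)
  calc _ ≤ nbhdMeas E s * ∫⁻ θ, ENNReal.ofReal (4 / (π * s ^ 2)) * (W θ *
        ∫⁻ v in annulus s, {v | ‖cpt θ - v‖ ≤ 3 * s / 2}.indicator (fun v => ‖h v‖ₑ ^ 2) v)
          ∂circMeas := by
        refine mul_le_mul_right (lintegral_mono fun θ => ?_) _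
        rw [mul_left_comm]
        exact mul_le_mul_right (enorm_sq_diskPt_le hh hm hs θ) _
    _ = ENNReal.ofReal (4 / (π * s ^ 2)) * ∫⁻ v in annulus s, ‖h v‖ₑ ^ 2 *
          (nbhdMeas E s * ∫⁻ θ in {θ | ‖cpt θ - v‖ ≤ 3 * s / 2}, W θ ∂circMeas) := by
        rw [lintegral_const_mul' _ _ ENNReal.ofReal_ne_top,
          lintegral_mul_lintegral_indicator (by fun_prop) (by fun_prop), mul_left_comm,
          ← lintegral_const_mul' _ _ (nbhdMeas_ne_top E s)]
        simp only [mul_left_comm]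
    _ ≤ ENNReal.ofReal (4 / (π * s ^ 2)) * ∫⁻ v in annulus s, ‖h v‖ₑ ^ 2 *
          (ENNReal.ofReal (C * (3 * s / 2)) * ∫⁻ φ, W φ ∂circMeas) := by
        exact mul_le_mul_right (lintegral_mono fun v => mul_le_mul_right (hbox v) _) _
    _ = _ := by
        rw [lintegral_mul_const _ (by fun_prop),
          show 6 * C / π / s = 4 / (π * s ^ 2) * (C * (3 * s / 2)) by field_simp; norm_num,
          ENNReal.ofReal_mul (p := 4 / (π * s ^ 2)) (by positivity)]
        ring

lemma lintegral_indicator_annulus_le {A : ℝ} (hA : 0 ≤ A) (v : ℂ) (d : ℝ≥0∞) :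
    ∫⁻ s in Ioc 0 1, {s | v ∈ annulus s}.indicator (fun s => ENNReal.ofReal (A / s) * d) s ≤
      unitDisc.indicator (fun _ => ENNReal.ofReal (2 * A) * d) v := by
  by_cases hv : v ∈ unitDisc
  · rw [indicator_of_mem hv]
    rw [unitDisc, mem_ball_zero_iff] at hv
    have hx0 : 0 < 1 - ‖v‖ := by linarith
    calc _ ≤ ∫⁻ s, (Ioc (2 * (1 - ‖v‖) / 3) (2 * (1 - ‖v‖))).indicator
            (fun _ => ENNReal.ofReal (A / (2 * (1 - ‖v‖) / 3)) * d) s := by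
          refine (setLIntegral_le_lintegral _ _).trans (lintegral_mono fun s => ?_)
          refine indicator_le (fun s (hs : v ∈ annulus s) => ?_) s
          have hs₁ : 2 * (1 - ‖v‖) / 3 < s := by linarith [hs.2]
          have hs₂ : s ∈ Ioc (2 * (1 - ‖v‖) / 3) (2 * (1 - ‖v‖)) := ⟨hs₁, by linarith [hs.1]⟩
          rw [indicator_of_mem hs₂]
          gcongr
      _ = ENNReal.ofReal (2 * A) * d := by
          rw [lintegral_indicator measurableSet_Ioc, lintegral_const, Measure.restrict_apply_univ,
            Real.volume_Ioc, mul_right_comm, ← ENNReal.ofReal_mul (by positivity)]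
          congr 2
          field_simp; norm_num
  · have hzero : ∀ s ∈ Ioc (0 : ℝ) 1,
        {s | v ∈ annulus s}.indicator (fun s => ENNReal.ofReal (A / s) * d) s = 0 := fun s hs =>
      indicator_of_notMem (s := {s | v ∈ annulus s})
        (fun h => hv (annulus_subset_unitDisc hs.1.le h)) _
    rw [setLIntegral_congr_fun measurableSet_Ioc hzero, lintegral_zero]
    exact zero_le

lemma measurable_lintegral_annulus {D : ℂ → ℝ≥0∞} (hD : Measurable D) :
    Measurable fun s => ∫⁻ v in annulus s, D v := by
  have hmeas : Measurable ({p : ℝ × ℂ | p.2 ∈ annulus p.1}.indicator fun p => D p.2) :=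
    (hD.comp measurable_snd).indicator measurableSet_mem_annulus
  simp only [← lintegral_indicator (measurableSet_annulus _)]
  exact hmeas.lintegral_prod_right'

lemma lintegral_annulus_le {A : ℝ} (hA : 0 ≤ A) {D : ℂ → ℝ≥0∞} (hD : Measurable D) :
    ∫⁻ s in Ioc 0 1, ENNReal.ofReal (A / s) * ∫⁻ v in annulus s, D v ≤
      ENNReal.ofReal (2 * A) * ∫⁻ v in unitDisc, D v := by
  have hslice : ∀ s : ℝ, ENNReal.ofReal (A / s) * ∫⁻ v in annulus s, D v =
      ∫⁻ v, {s | v ∈ annulus s}.indicator (fun s => ENNReal.ofReal (A / s) * D v) s := fun s => by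
    rw [← lintegral_const_mul' _ _ ENNReal.ofReal_ne_top,
      ← lintegral_indicator (measurableSet_annulus s)]
    rfl
  have hmeas : Measurable fun p : ℝ × ℂ => {p : ℝ × ℂ | p.2 ∈ annulus p.1}.indicator
      (fun p => ENNReal.ofReal (A / p.1) * D p.2) p :=
    Measurable.indicator (by fun_prop) measurableSet_mem_annulus
  simp only [hslice]
  rw [lintegral_lintegral_swap hmeas.aemeasurable,
    ← lintegral_const_mul' _ _ ENNReal.ofReal_ne_top, ← lintegral_indicator measurableSet_unitDisc]
  exact lintegral_mono fun v => lintegral_indicator_annulus_le hA v (D v)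

lemma RegularSet.lintegral_mul_radialEnergy_le (hE : RegularSet E C η) {w : ℝ → ℝ}
    (hw : Measurable w) (hw0 : ∀ s, 0 ≤ w s) (hanti : AntitoneOn w (Ioo 0 π)) {h : ℂ → ℂ}
    (hh : DifferentiableOn ℂ h unitDisc) (hm : Measurable h) :
    ∫⁻ θ, ENNReal.ofReal (w (dE E (cpt θ))) * radialEnergy E h θ ∂circMeas ≤
      (∫⁻ φ, ENNReal.ofReal (w (dE E (cpt φ))) ∂circMeas) *
        (ENNReal.ofReal (2 * (6 * C / π)) * ∫⁻ z in unitDisc, ‖h z‖ₑ ^ 2) := by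
  have hC := hE.pos
  set W : ℝ → ℝ≥0∞ := fun θ => ENNReal.ofReal (w (dE E (cpt θ)))
  have hmeas : Measurable fun p : ℝ × ℝ =>
      W p.1 * (nbhdMeas E p.2 * ‖h (diskPt p.2 p.1)‖ₑ ^ 2) :=
    Measurable.mul (by fun_prop) (measurable_mul_enorm_sq_diskPt hm)
  calc _ = ∫⁻ s in Ioc 0 1, nbhdMeas E s *
        ∫⁻ θ, W θ * ‖h (diskPt s θ)‖ₑ ^ 2 ∂circMeas := by
        simp only [radialEnergy, ← lintegral_const_mul' _ _ ENNReal.ofReal_ne_top]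
        rw [lintegral_lintegral_swap hmeas.aemeasurable]
        simp only [mul_left_comm (ENNReal.ofReal _),
          lintegral_const_mul' _ _ (nbhdMeas_ne_top E _), W]
    _ ≤ ∫⁻ s in Ioc 0 1, (∫⁻ φ, W φ ∂circMeas) *
          (ENNReal.ofReal (6 * C / π / s) * ∫⁻ v in annulus s, ‖h v‖ₑ ^ 2) :=
        setLIntegral_mono' measurableSet_Ioc fun s hs =>
          hE.nbhdMeas_mul_lintegral_diskPt_le hw hw0 hanti hh hm hs
    _ ≤ _ := by
        have hslices : Measurable fun s => ∫⁻ v in annulus s, ‖h v‖ₑ ^ 2 :=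
          measurable_lintegral_annulus (by fun_prop)
        rw [lintegral_const_mul _ (by fun_prop)]
        exact mul_le_mul_right (lintegral_annulus_le (by positivity) (by fun_prop)) _

/-- The measures `Φ dA` are Carleson measures for the Dirichlet space. -/
lemma RegularSet.lintegral_enorm_sub_sq_mul_le (hE : RegularSet E C η) {w : ℝ → ℝ}
    (hw : Measurable w) (hw0 : ∀ s, 0 ≤ w s) (hanti : AntitoneOn w (Ioo 0 π)) {g : ℂ → ℂ}
    (hg : DifferentiableOn ℂ g unitDisc) (hpos : ∀ s ∈ Ioc 0 1, nbhdMeas E s ≠ 0)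
    {Φ : ℂ → ℝ≥0∞} (hΦm : Measurable Φ) (hΦ : ∀ᵐ θ ∂circMeas,
      ∫⁻ δ in Ioc 0 1, Φ (diskPt δ θ) ≤ ENNReal.ofReal (w (dE E (cpt θ)))) :
    ∫⁻ z in unitDisc, ‖g z - g 0‖ₑ ^ 2 * Φ z ≤ (∫⁻ s in Ioc 0 1, (nbhdMeas E s)⁻¹) *
      ((∫⁻ φ, ENNReal.ofReal (w (dE E (cpt φ))) ∂circMeas) *
        (ENNReal.ofReal (2 * (6 * C / π)) * ∫⁻ z in unitDisc, ‖deriv g z‖ₑ ^ 2)) := by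
  have hderiv : Measurable (deriv g) := measurable_deriv g
  have hJ := measurable_radialEnergy (E := E) hderiv
  have hdisk : Measurable fun p : ℝ × ℝ => diskPt p.1 p.2 := continuous_diskPt.measurable
  have hradius : ∀ θ, Measurable fun δ => Φ (diskPt δ θ) := fun θ =>
    hΦm.comp (hdisk.comp measurable_prodMk_right)
  have hmeas : Measurable (unitDisc.indicator fun z => ‖g z - g 0‖ₑ ^ 2 * Φ z) := by
    have hsub : Measurable (unitDisc.indicator fun z => g z - g 0) :=
      measurable_indicator_unitDisc (hg.continuousOn.sub continuousOn_const)
    convert (hsub.enorm.pow_const 2).mul hΦm using 1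
    ext z
    by_cases hz : z ∈ unitDisc <;> simp [hz]
  set M := ∫⁻ s in Ioc 0 1, (nbhdMeas E s)⁻¹
  set J := radialEnergy E (deriv g)
  rw [lintegral_unitDisc hmeas]
  calc _ ≤ ∫⁻ δ in Ioc 0 1, ∫⁻ θ, M * J θ * Φ (diskPt δ θ) ∂circMeas := by
        refine setLIntegral_mono' measurableSet_Ioc fun δ hδ =>
          mul_le_of_le_one_of_le (ENNReal.ofReal_le_one.2 (by linarith [hδ.1])) ?_
        gcongr with θ
        exact enorm_sub_sq_le_mul_radialEnergy hg hpos hδ θ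
    _ = ∫⁻ θ, M * J θ * (∫⁻ δ in Ioc 0 1, Φ (diskPt δ θ)) ∂circMeas := by
        rw [lintegral_lintegral_swap (by fun_prop)]
        exact lintegral_congr fun θ => lintegral_const_mul _ (hradius θ)
    _ ≤ ∫⁻ θ, M * (ENNReal.ofReal (w (dE E (cpt θ))) * J θ) ∂circMeas := by
        refine lintegral_mono_ae ?_
        filter_upwards [hΦ] with θ hθ
        rw [mul_comm (ENNReal.ofReal _), ← mul_assoc]
        gcongr
    _ ≤ _ := by
        rw [lintegral_const_mul _ (by fun_prop)]
        gcongr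
        exact hE.lintegral_mul_radialEnergy_le hw hw0 hanti (hg.deriv isOpen_unitDisc) hderiv

end Carleson

section Multipliers

variable {ω ω' : ℝ → ℝ} {γ : ℝ} {E : Set ℂ} {C η : ℝ}

/-- The weight `s ω'(s)²` on `(0, π)`, extended by zero. -/
noncomputable def derivWeight (ω : ℝ → ℝ) : ℝ → ℝ :=
  (Ioo 0 π).indicator fun s => s * deriv ω s ^ 2

@[fun_prop]
lemma measurable_derivWeight (ω : ℝ → ℝ) : Measurable (derivWeight ω) :=
  (measurable_id.mul ((measurable_deriv ω).pow_const 2)).indicator measurableSet_Ioo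

lemma derivWeight_nonneg (ω : ℝ → ℝ) (s : ℝ) : 0 ≤ derivWeight ω s :=
  indicator_nonneg (fun _ hs => mul_nonneg hs.1.le (sq_nonneg _)) s

lemma OmegaHyp.derivWeight_eq (hω : OmegaHyp ω ω' γ) {s : ℝ} (hs : s ∈ Ioo 0 π) :
    derivWeight ω s = s * ω' s ^ 2 := by
  rw [derivWeight, indicator_of_mem hs, (hω.hasDerivAt hs).deriv]

lemma OmegaHyp.antitoneOn_derivWeight (hω : OmegaHyp ω ω' γ) (hγ : 2 ≤ γ) :
    AntitoneOn (derivWeight ω) (Ioo 0 π) := fun s hs t ht hst => by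
  rw [hω.derivWeight_eq hs, hω.derivWeight_eq ht]
  exact hω.antitoneOn_mul_deriv_sq hγ hs ht hst

lemma RegularSet.integrable_iff (hE : RegularSet E C η) (hω : OmegaHyp ω ω' γ) :
    Integrable (fun θ => dE E (cpt θ) * ω' (dE E (cpt θ)) ^ 2) circMeas ↔
      ∫⁻ θ, ENNReal.ofReal (derivWeight ω (dE E (cpt θ))) ∂circMeas ≠ ∞ := by
  have hae : (fun θ => dE E (cpt θ) * ω' (dE E (cpt θ)) ^ 2) =ᵐ[circMeas]
      fun θ => derivWeight ω (dE E (cpt θ)) := by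
    filter_upwards [hE.ae_pos] with θ hθ
    rw [hω.derivWeight_eq ⟨hθ, dE_cpt_lt_pi hE θ⟩]
  have hmeas : Measurable fun θ => derivWeight ω (dE E (cpt θ)) := by fun_prop
  rw [integrable_congr hae, ← lt_top_iff_ne_top,
    ← hasFiniteIntegral_iff_ofReal (ae_of_all _ fun θ => derivWeight_nonneg ω _)]
  exact ⟨fun h => h.2, fun h => ⟨hmeas.aestronglyMeasurable, h⟩⟩

lemma integrableOn_deriv_sq_iff (f : ℂ → ℂ) :
    IntegrableOn (fun z => ‖deriv f z‖ ^ 2) unitDisc volume ↔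
      ∫⁻ z in unitDisc, ‖deriv f z‖ₑ ^ 2 ≠ ∞ := by
  have hmeas : Measurable fun z => ‖deriv f z‖ ^ 2 := (measurable_deriv f).norm.pow_const 2
  simp only [← ofReal_norm (deriv f _), ← ENNReal.ofReal_pow (norm_nonneg _)]
  rw [← lt_top_iff_ne_top, ← hasFiniteIntegral_iff_ofReal (ae_of_all _ fun _ => sq_nonneg _)]
  exact ⟨fun h => h.2, fun h => ⟨hmeas.aestronglyMeasurable, h⟩⟩

lemma memDirichlet_const (c : ℂ) : MemDirichlet fun _ => c :=
  ⟨differentiableOn_const c, ⟨∫ _ in Ioc 0 (2 * π), ‖c‖ ^ 2, fun _ _ => le_rfl⟩, by simp⟩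

lemma IsMultiplierD.memDirichlet {f : ℂ → ℂ} (hf : IsMultiplierD f) : MemDirichlet f := by
  simpa using hf _ (memDirichlet_const 1)

lemma ofReal_mul_cpt_mem {r : ℝ} (hr : r ∈ Ioo 0 1) (θ : ℝ) : (r : ℂ) * cpt θ ∈ unitDisc := by
  rw [unitDisc, mem_ball_zero_iff, norm_mul, norm_cpt, Complex.norm_of_nonneg hr.1.le, mul_one]
  exact hr.2

lemma integrableOn_norm_sq_circle {h : ℂ → ℂ} (hh : ContinuousOn h unitDisc) {r : ℝ}
    (hr : r ∈ Ioo 0 1) : IntegrableOn (fun θ => ‖h (r * cpt θ)‖ ^ 2) (Ioc 0 (2 * π)) := by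
  have hcont : Continuous fun θ => h (r * cpt θ) :=
    hh.comp_continuous (by fun_prop) (ofReal_mul_cpt_mem hr)
  exact (hcont.norm.pow 2).integrableOn_Ioc

lemma integral_norm_mul_sq_circle_le {f g : ℂ → ℂ} (hf : ContinuousOn f unitDisc)
    (hg : ContinuousOn g unitDisc) {K : ℝ} (hK : ∀ z ∈ unitDisc, ‖f z‖ ≤ K) {r : ℝ}
    (hr : r ∈ Ioo 0 1) :
    ∫ θ in Ioc 0 (2 * π), ‖f (r * cpt θ) * g (r * cpt θ)‖ ^ 2 ≤
      K ^ 2 * ∫ θ in Ioc 0 (2 * π), ‖g (r * cpt θ)‖ ^ 2 := by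
  rw [← integral_const_mul]
  refine integral_mono (integrableOn_norm_sq_circle (hf.mul hg) hr)
    ((integrableOn_norm_sq_circle hg hr).const_mul _) fun θ => ?_
  simp only [norm_mul, mul_pow]
  gcongr
  exact hK _ (ofReal_mul_cpt_mem hr θ)

lemma enorm_add_sq_le {F : Type*} [TopologicalSpace F] [ESeminormedAddMonoid F] (a b : F) :
    ‖a + b‖ₑ ^ 2 ≤ 2 * ‖a‖ₑ ^ 2 + 2 * ‖b‖ₑ ^ 2 := by
  have h := ENNReal.rpow_add_le_mul_rpow_add_rpow ‖a‖ₑ ‖b‖ₑ (p := 2) one_le_two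
  norm_num at h
  rw [← mul_add]
  exact (pow_le_pow_left₀ zero_le (enorm_add_le a b) 2).trans h

lemma enorm_deriv_mul_sq_le {f g : ℂ → ℂ} {z : ℂ} (hf : DifferentiableAt ℂ f z)
    (hg : DifferentiableAt ℂ g z) :
    ‖deriv (fun z => f z * g z) z‖ₑ ^ 2 ≤ 4 * (‖g z - g 0‖ₑ ^ 2 * ‖deriv f z‖ₑ ^ 2) +
      (4 * ‖g 0‖ₑ ^ 2 * ‖deriv f z‖ₑ ^ 2 + 2 * ‖f z‖ₑ ^ 2 * ‖deriv g z‖ₑ ^ 2) := by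
  have hsq := enorm_add_sq_le (g z - g 0) (g 0)
  rw [sub_add_cancel] at hsq
  rw [deriv_fun_mul hf hg]
  calc ‖deriv f z * g z + f z * deriv g z‖ₑ ^ 2
      ≤ 2 * ‖deriv f z * g z‖ₑ ^ 2 + 2 * ‖f z * deriv g z‖ₑ ^ 2 := enorm_add_sq_le _ _
    _ = 2 * (‖g z‖ₑ ^ 2 * ‖deriv f z‖ₑ ^ 2) + 2 * ‖f z‖ₑ ^ 2 * ‖deriv g z‖ₑ ^ 2 := by
        rw [enorm_mul, enorm_mul]; ring
    _ ≤ 2 * ((2 * ‖g z - g 0‖ₑ ^ 2 + 2 * ‖g 0‖ₑ ^ 2) * ‖deriv f z‖ₑ ^ 2) +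
          2 * ‖f z‖ₑ ^ 2 * ‖deriv g z‖ₑ ^ 2 := by gcongr
    _ = _ := by ring

lemma lintegral_deriv_mul_sq_ne_top {f g : ℂ → ℂ} (hf : DifferentiableOn ℂ f unitDisc)
    (hg : DifferentiableOn ℂ g unitDisc) {K : ℝ} (hK : ∀ z ∈ unitDisc, ‖f z‖ ≤ K)
    (hf' : ∫⁻ z in unitDisc, ‖deriv f z‖ₑ ^ 2 ≠ ∞)
    (hg' : ∫⁻ z in unitDisc, ‖deriv g z‖ₑ ^ 2 ≠ ∞)
    (hfg : ∫⁻ z in unitDisc, ‖g z - g 0‖ₑ ^ 2 * ‖deriv f z‖ₑ ^ 2 ≠ ∞) :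
    ∫⁻ z in unitDisc, ‖deriv (fun z => f z * g z) z‖ₑ ^ 2 ≠ ∞ := by
  have hpt : ∀ z ∈ unitDisc, ‖deriv (fun z => f z * g z) z‖ₑ ^ 2 ≤
      4 * (‖g z - g 0‖ₑ ^ 2 * ‖deriv f z‖ₑ ^ 2) +
        (4 * ‖g 0‖ₑ ^ 2 * ‖deriv f z‖ₑ ^ 2 + 2 * ENNReal.ofReal K ^ 2 * ‖deriv g z‖ₑ ^ 2) :=
    fun z hz => by
      have hz' := isOpen_unitDisc.mem_nhds hz
      refine (enorm_deriv_mul_sq_le (hf.differentiableAt hz') (hg.differentiableAt hz')).trans ?_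
      have hfz : ‖f z‖ₑ ≤ ENNReal.ofReal K :=
        (ofReal_norm (f z)).symm.le.trans (ENNReal.ofReal_le_ofReal (hK z hz))
      gcongr
  refine ne_top_of_le_ne_top ?_ (setLIntegral_mono' measurableSet_unitDisc hpt)
  rw [lintegral_add_right _ (by fun_prop), lintegral_add_left (by fun_prop),
    lintegral_const_mul' _ _ (by norm_num), lintegral_const_mul _ (by fun_prop),
    lintegral_const_mul _ (by fun_prop)]
  finiteness

lemma MemDirichlet.mul {f g : ℂ → ℂ} (hg : MemDirichlet g) (hf : DifferentiableOn ℂ f unitDisc)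
    {K : ℝ} (hK : ∀ z ∈ unitDisc, ‖f z‖ ≤ K) (hf' : ∫⁻ z in unitDisc, ‖deriv f z‖ₑ ^ 2 ≠ ∞)
    (hfg : ∫⁻ z in unitDisc, ‖g z - g 0‖ₑ ^ 2 * ‖deriv f z‖ₑ ^ 2 ≠ ∞) :
    MemDirichlet fun z => f z * g z := by
  obtain ⟨hgd, ⟨M, hM⟩, hgi⟩ := hg
  refine ⟨hf.mul hgd, ⟨K ^ 2 * M, fun r hr => ?_⟩, (integrableOn_deriv_sq_iff _).2
    (lintegral_deriv_mul_sq_ne_top hf hgd hK hf' ((integrableOn_deriv_sq_iff g).1 hgi) hfg)⟩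
  exact (integral_norm_mul_sq_circle_le hf.continuousOn hgd.continuousOn hK hr).trans
    (mul_le_mul_of_nonneg_left (hM r hr) (sq_nonneg K))

lemma lintegral_unitDisc_le {G : ℂ → ℝ≥0∞} (hG : Measurable G) :
    ∫⁻ z in unitDisc, G z ≤ ∫⁻ θ, (∫⁻ δ in Ioc 0 1, G (diskPt δ θ)) ∂circMeas := by
  rw [lintegral_unitDisc (hG.indicator measurableSet_unitDisc)]
  calc _ ≤ ∫⁻ δ in Ioc 0 1, ∫⁻ θ, G (diskPt δ θ) ∂circMeas :=
        setLIntegral_mono' measurableSet_Ioc fun δ hδ =>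
          mul_le_of_le_one_left zero_le (ENNReal.ofReal_le_one.2 (by linarith [hδ.1]))
    _ = _ := lintegral_lintegral_swap (hG.comp continuous_diskPt.measurable).aemeasurable

lemma RegularSet.ae_lintegral_deriv_outerFun_le (hE : RegularSet E C η) (hω : OmegaHyp ω ω' γ)
    (hγ : 2 < γ) (hlog : LogOmegaInt ω E) :
    ∀ᵐ θ ∂circMeas, ∫⁻ δ in Ioc 0 1, ‖deriv (outerFun ω E) (diskPt δ θ)‖ₑ ^ 2 ≤
      ENNReal.ofReal (radialConst C η γ * derivWeight ω (dE E (cpt θ))) := by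
  filter_upwards [hE.ae_pos] with θ hθ
  rw [hω.derivWeight_eq ⟨hθ, dE_cpt_lt_pi hE θ⟩]
  simpa only [ENNReal.ofReal_pow (norm_nonneg _), ofReal_norm]
    using hE.lintegral_radial_le hω hγ hlog hθ

lemma RegularSet.isMultiplierD_outerFun (hE : RegularSet E C η) (hω : OmegaHyp ω ω' γ)
    (hγ : 2 < γ) (hlog : LogOmegaInt ω E) (hpos : ∀ s ∈ Ioc 0 1, nbhdMeas E s ≠ 0)
    (hcap : ∫⁻ s in Ioc 0 1, (nbhdMeas E s)⁻¹ ≠ ∞)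
    (hint : ∫⁻ θ, ENNReal.ofReal (derivWeight ω (dE E (cpt θ))) ∂circMeas ≠ ∞) :
    IsMultiplierD (outerFun ω E) := by
  have hR := hE.radialConst_pos hγ
  have hderiv : Measurable fun z => ‖deriv (outerFun ω E) z‖ₑ ^ 2 :=
    (measurable_deriv _).enorm.pow_const 2
  set w : ℝ → ℝ := fun s => radialConst C η γ * derivWeight ω s with hw
  have hw_anti : AntitoneOn w (Ioo 0 π) := fun s hs t ht hst =>
    mul_le_mul_of_nonneg_left (hω.antitoneOn_derivWeight hγ.le hs ht hst) hR.le
  have hw_int : ∫⁻ θ, ENNReal.ofReal (w (dE E (cpt θ))) ∂circMeas ≠ ∞ := by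
    simp only [hw, ENNReal.ofReal_mul hR.le]
    rw [lintegral_const_mul' _ _ ENNReal.ofReal_ne_top]
    exact ENNReal.mul_ne_top ENNReal.ofReal_ne_top hint
  have hradial := hE.ae_lintegral_deriv_outerFun_le hω hγ hlog
  intro g hg
  have hgi := (integrableOn_deriv_sq_iff g).1 hg.2.2
  refine hg.mul (differentiableOn_outerFun hlog)
    (fun z hz => hE.norm_outerFun_le_const hω (by linarith) hlog hz)
    (ne_top_of_le_ne_top hw_int ((lintegral_unitDisc_le hderiv).trans (lintegral_mono_ae hradial)))
    (ne_top_of_le_ne_top ?_ (hE.lintegral_enorm_sub_sq_mul_le (by fun_prop)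
      (fun s => mul_nonneg hR.le (derivWeight_nonneg ω s)) hw_anti hg.1 hpos hderiv hradial))
  finiteness

end Multipliers

section BoundaryDifferences

variable {ω ω' : ℝ → ℝ} {γ : ℝ} {E : Set ℂ} {C η : ℝ}

/-- The boundary values `ω(dist(·, E))` of `|f_{ω,E}|`, set to zero on `E`. -/
noncomputable def boundaryModulus (ω : ℝ → ℝ) (E : Set ℂ) (θ : ℝ) : ℝ :=
  (Ioc 0 π).indicator ω (dE E (cpt θ))

lemma OmegaHyp.measurable_boundaryModulus (hω : OmegaHyp ω ω' γ) (E : Set ℂ) :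
    Measurable (boundaryModulus ω E) := by
  classical
  have hind : Measurable ((Ioc 0 π).indicator ω) := by
    rw [← piecewise_eq_indicator]
    exact hω.1.measurable_piecewise continuousOn_const measurableSet_Ioc
  exact hind.comp (by fun_prop)

lemma boundaryModulus_periodic (ω : ℝ → ℝ) (E : Set ℂ) :
    Function.Periodic (boundaryModulus ω E) (2 * π) := fun θ => by
  simp only [boundaryModulus, cpt_periodic θ]

lemma ae_circMeas_add {p : ℝ → Prop} (hp : Function.Periodic p (2 * π))
    (hmeas : MeasurableSet {θ | p θ}) (hae : ∀ᵐ θ ∂circMeas, p θ) (t : ℝ) :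
    ∀ᵐ θ ∂circMeas, p (θ + t) := by
  have hper : Function.Periodic ({θ | p θ}ᶜ.indicator (1 : ℝ → ℝ≥0∞)) (2 * π) := fun θ => by
    classical simp only [indicator_apply, mem_compl_iff, mem_ofPred_eq, hp θ, Pi.one_apply]
  have hm : Measurable ({θ | p θ}ᶜ.indicator (1 : ℝ → ℝ≥0∞)) :=
    measurable_one.indicator hmeas.compl
  have hzero : ∫⁻ θ, {θ | p θ}ᶜ.indicator (1 : ℝ → ℝ≥0∞) θ ∂circMeas = 0 := by
    rw [lintegral_indicator_one hmeas.compl]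
    exact hae
  rw [← lintegral_circMeas_add hper t, lintegral_eq_zero_iff (by fun_prop)] at hzero
  filter_upwards [hzero] with θ hθ
  by_contra hn
  simp [hn] at hθ

lemma RegularSet.ae_pos_add (hE : RegularSet E C η) (t : ℝ) :
    ∀ᵐ θ ∂circMeas, 0 < dE E (cpt (θ + t)) :=
  ae_circMeas_add (p := fun θ => 0 < dE E (cpt θ)) (fun θ => by simp only [cpt_periodic θ])
    (measurableSet_lt measurable_const (by fun_prop)) hE.ae_pos t

lemma tendsto_dE_slant (E : Set ℂ) (θ σ : ℝ) :
    Tendsto (fun s => dE E (cpt (θ + σ * s)) + s) (𝓝[>] 0) (𝓝 (dE E (cpt θ))) := by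
  have hcont : Continuous fun s => dE E (cpt (θ + σ * s)) + s :=
    ((continuous_dE E).comp (continuous_cpt.comp (by fun_prop))).add continuous_id
  simpa using (hcont.tendsto 0).mono_left nhdsWithin_le_nhds

lemma RegularSet.tendsto_log_norm_outerFun_sub (hE : RegularSet E C η) (hω : OmegaHyp ω ω' γ)
    (hγ : 4 / 3 ≤ γ) (hlog : LogOmegaInt ω E) {θ : ℝ} (hθ : 0 < dE E (cpt θ)) (σ : ℝ) :
    Tendsto (fun s => log ‖outerFun ω E (diskPt s (θ + σ * s))‖ -
      log (ω (dE E (cpt (θ + σ * s)) + s))) (𝓝[>] 0) (𝓝 0) := by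
  have hratio : Tendsto (fun s : ℝ => s / (dE E (cpt (θ + σ * s)) + s)) (𝓝[>] 0) (𝓝 0) := by
    simpa only [zero_div, Pi.div_def, id] using
      (tendsto_id.mono_left nhdsWithin_le_nhds).div (tendsto_dE_slant E θ σ) hθ.ne'
  have herror : Tendsto (fun s => oscConst C η γ *
      (s / (dE E (cpt (θ + σ * s)) + s)) ^ (3 / 4 : ℝ)) (𝓝[>] 0) (𝓝 0) := by
    have hpow := hratio.rpow_const (p := (3 / 4 : ℝ)) (Or.inr (by norm_num))
    rw [zero_rpow (by norm_num)] at hpow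
    simpa using hpow.const_mul (oscConst C η γ)
  refine squeeze_zero_norm' ?_ herror
  filter_upwards [Ioc_mem_nhdsGT one_pos] with s hs
  exact hE.abs_log_norm_outerFun_sub_le hω hγ hlog hs _

lemma RegularSet.tendsto_norm_outerFun (hE : RegularSet E C η) (hω : OmegaHyp ω ω' γ)
    (hγ : 4 / 3 ≤ γ) (hlog : LogOmegaInt ω E) {θ : ℝ} (hθ : 0 < dE E (cpt θ)) (σ : ℝ) :
    Tendsto (fun s => ‖outerFun ω E (diskPt s (θ + σ * s))‖) (𝓝[>] 0)
      (𝓝 (boundaryModulus ω E θ)) := by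
  have hmem : dE E (cpt θ) ∈ Ioo 0 π := ⟨hθ, dE_cpt_lt_pi hE θ⟩
  have hpos := hω.pos hmem.1 hmem.2.le
  have hlogω : Tendsto (fun s => log (ω (dE E (cpt (θ + σ * s)) + s))) (𝓝[>] 0)
      (𝓝 (log (ω (dE E (cpt θ))))) :=
    ((hω.hasDerivAt hmem).continuousAt.tendsto.comp (tendsto_dE_slant E θ σ)).log hpos.ne'
  have hexp := ((hE.tendsto_log_norm_outerFun_sub hω hγ hlog hθ σ).add hlogω).rexp
  rw [zero_add, exp_log hpos] at hexp
  rw [boundaryModulus, indicator_of_mem (Ioo_subset_Ioc_self hmem)]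
  refine hexp.congr fun s => ?_
  rw [sub_add_cancel, exp_log]
  exact norm_pos_iff.2 (Complex.exp_ne_zero _)

/-- The integral of `|h|` along the path of slope `σ` that leaves the circle at angle `θ` and goes
down to depth `b`. -/
noncomputable def slantIntegral (h : ℂ → ℂ) (b σ θ : ℝ) : ℝ≥0∞ :=
  ∫⁻ s in Ioc 0 b, ‖h (diskPt s (θ + σ * s))‖ₑ

/-- The squared `L²` norm of `h` on the circle at depth `s`. -/
noncomputable def circleEnergy (h : ℂ → ℂ) (s : ℝ) : ℝ≥0∞ :=
  ∫⁻ θ, ‖h (diskPt s θ)‖ₑ ^ 2 ∂circMeas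

lemma measurable_diskPt_slant (σ : ℝ) :
    Measurable fun p : ℝ × ℝ => diskPt p.2 (p.1 + σ * p.2) :=
  continuous_diskPt.measurable.comp
    (by fun_prop : Measurable fun p : ℝ × ℝ => (p.2, p.1 + σ * p.2))

lemma measurable_slantIntegral {h : ℂ → ℂ} (hh : Measurable h) (b σ : ℝ) :
    Measurable (slantIntegral h b σ) :=
  (hh.comp (measurable_diskPt_slant σ)).enorm.lintegral_prod_right'

lemma slantIntegral_periodic (h : ℂ → ℂ) (b σ : ℝ) :
    Function.Periodic (slantIntegral h b σ) (2 * π) := fun θ => by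
  simp only [slantIntegral, add_right_comm θ, diskPt_periodic _ _]

lemma measurable_circleEnergy {h : ℂ → ℂ} (hh : Measurable h) : Measurable (circleEnergy h) :=
  ((hh.comp continuous_diskPt.measurable).enorm.pow_const 2).lintegral_prod_right'

lemma RegularSet.enorm_boundaryModulus_sub_le (hE : RegularSet E C η) (hω : OmegaHyp ω ω' γ)
    (hγ : 4 / 3 ≤ γ) (hlog : LogOmegaInt ω E) {θ : ℝ} (hθ : 0 < dE E (cpt θ)) (σ : ℝ) {b : ℝ}
    (hb : b ∈ Ioc 0 1) :
    ‖boundaryModulus ω E θ - ‖outerFun ω E (diskPt b (θ + σ * b))‖‖ₑ ≤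
      ENNReal.ofReal (1 + |σ|) * slantIntegral (deriv (outerFun ω E)) b σ θ := by
  have hlim := ((hE.tendsto_norm_outerFun hω hγ hlog hθ σ).sub_const
    ‖outerFun ω E (diskPt b (θ + σ * b))‖).enorm
  refine le_of_tendsto hlim ?_
  filter_upwards [Ioc_mem_nhdsGT hb.1] with a ha
  calc ‖‖outerFun ω E (diskPt a (θ + σ * a))‖ - ‖outerFun ω E (diskPt b (θ + σ * b))‖‖ₑ
      ≤ ‖outerFun ω E (diskPt a (θ + σ * a)) - outerFun ω E (diskPt b (θ + σ * b))‖ₑ := by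
        rw [← ofReal_norm, ← ofReal_norm (_ - _ : ℂ)]
        exact ENNReal.ofReal_le_ofReal (abs_norm_sub_norm_le _ _)
    _ ≤ _ := enorm_diskPt_slant_sub_le (differentiableOn_outerFun hlog) ha.1 ha.2 hb.2 θ σ
    _ ≤ _ := mul_le_mul_right (lintegral_mono_set (Ioc_subset_Ioc_left ha.1.le)) _

lemma sq_lintegral_Ioc_le {f : ℝ → ℝ≥0∞} (hf : Measurable f) {b : ℝ} (hb : 0 ≤ b) :
    (∫⁻ s in Ioc 0 b, f s) ^ 2 ≤ ENNReal.ofReal (2 * b ^ (1 / 2 : ℝ)) *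
      ∫⁻ s in Ioc 0 b, ENNReal.ofReal (s ^ (1 / 2 : ℝ)) * f s ^ 2 := by
  have hsq : ∀ p : ℝ, ∀ s ∈ Ioc 0 b,
      ENNReal.ofReal (s ^ p) ^ 2 = ENNReal.ofReal (s ^ (p * 2)) := fun p s hs => by
    rw [← ENNReal.ofReal_pow (rpow_nonneg hs.1.le _), ← rpow_mul_natCast hs.1.le, Nat.cast_two]
  calc (∫⁻ s in Ioc 0 b, f s) ^ 2
      = (∫⁻ s in Ioc 0 b, ENNReal.ofReal (s ^ (-(1 / 4) : ℝ)) *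
          (ENNReal.ofReal (s ^ (1 / 4 : ℝ)) * f s)) ^ 2 := by
        congr 1
        refine setLIntegral_congr_fun measurableSet_Ioc fun s hs => ?_
        have hs0 : 0 < s := hs.1
        rw [← mul_assoc, ← ENNReal.ofReal_mul (by positivity), ← rpow_add hs0]
        norm_num
    _ ≤ (∫⁻ s in Ioc 0 b, ENNReal.ofReal (s ^ (-(1 / 4) : ℝ)) ^ 2) *
          ∫⁻ s in Ioc 0 b, (ENNReal.ofReal (s ^ (1 / 4 : ℝ)) * f s) ^ 2 :=
        lintegral_mul_sq_le _ (by fun_prop) (by fun_prop)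
    _ = (∫⁻ s in Ioc 0 b, ENNReal.ofReal (s ^ (-(1 / 2) : ℝ))) *
          ∫⁻ s in Ioc 0 b, ENNReal.ofReal (s ^ (1 / 2 : ℝ)) * f s ^ 2 := by
        congr 1 <;> refine setLIntegral_congr_fun measurableSet_Ioc fun s hs => ?_
        · simp only [hsq _ s hs]
          norm_num
        · simp only [mul_pow, hsq _ s hs]
          norm_num
    _ = _ := by
        rw [lintegral_Ioc_rpow (by norm_num) hb]
        norm_num [mul_comm, div_eq_mul_inv]

lemma lintegral_slantIntegral_sq_le {h : ℂ → ℂ} (hh : Measurable h) {b : ℝ} (hb : 0 ≤ b) (σ : ℝ) :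
    ∫⁻ θ, slantIntegral h b σ θ ^ 2 ∂circMeas ≤ ENNReal.ofReal (2 * b ^ (1 / 2 : ℝ)) *
      ∫⁻ s in Ioc 0 b, ENNReal.ofReal (s ^ (1 / 2 : ℝ)) * circleEnergy h s := by
  have hslant : Measurable fun p : ℝ × ℝ => h (diskPt p.2 (p.1 + σ * p.2)) :=
    hh.comp (measurable_diskPt_slant σ)
  calc ∫⁻ θ, slantIntegral h b σ θ ^ 2 ∂circMeas
      ≤ ∫⁻ θ, ENNReal.ofReal (2 * b ^ (1 / 2 : ℝ)) * (∫⁻ s in Ioc 0 b,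
          ENNReal.ofReal (s ^ (1 / 2 : ℝ)) * ‖h (diskPt s (θ + σ * s))‖ₑ ^ 2) ∂circMeas :=
        lintegral_mono fun θ => sq_lintegral_Ioc_le (hslant.comp measurable_prodMk_left).enorm hb
    _ = ENNReal.ofReal (2 * b ^ (1 / 2 : ℝ)) * ∫⁻ s in Ioc 0 b, ∫⁻ θ,
          ENNReal.ofReal (s ^ (1 / 2 : ℝ)) * ‖h (diskPt s (θ + σ * s))‖ₑ ^ 2 ∂circMeas := by
        rw [lintegral_const_mul' _ _ ENNReal.ofReal_ne_top, lintegral_lintegral_swap]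
        fun_prop
    _ = _ := by
        congr 1
        refine lintegral_congr fun s => ?_
        rw [lintegral_const_mul' _ _ ENNReal.ofReal_ne_top, circleEnergy]
        congr 1
        exact lintegral_circMeas_add (f := fun θ => ‖h (diskPt s θ)‖ₑ ^ 2)
          (fun θ => by simp only [diskPt_periodic s θ]) (σ * s)

lemma lintegral_mul_lintegral_Ioc_half_le {k f : ℝ → ℝ≥0∞} (hk : Measurable k)
    (hf : Measurable f) :
    ∫⁻ t in Ioc 0 1, k t * ∫⁻ s in Ioc 0 (t / 2), f s ≤
      ∫⁻ s in Ioc 0 (1 / 2), (∫⁻ t in Ioi s, k t) * f s := by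
  have hlt : MeasurableSet {p : ℝ × ℝ | p.2 < p.1} := measurableSet_lt (by fun_prop) (by fun_prop)
  have hmeas : Measurable ({p : ℝ × ℝ | p.2 < p.1}.indicator fun p => k p.1 * f p.2) :=
    ((hk.comp measurable_fst).mul (hf.comp measurable_snd)).indicator hlt
  calc ∫⁻ t in Ioc 0 1, k t * ∫⁻ s in Ioc 0 (t / 2), f s
      ≤ ∫⁻ t in Ioc 0 1, ∫⁻ s in Ioc 0 (1 / 2),
          {p : ℝ × ℝ | p.2 < p.1}.indicator (fun p => k p.1 * f p.2) (t, s) := by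
        refine setLIntegral_mono' measurableSet_Ioc fun t ht => ?_
        rw [← lintegral_const_mul _ hf, ← lintegral_indicator measurableSet_Ioc,
          ← lintegral_indicator measurableSet_Ioc]
        refine lintegral_mono fun s => indicator_le' (fun s hs => ?_) (fun _ _ => zero_le) s
        rw [indicator_of_mem (show s ∈ Ioc (0 : ℝ) (1 / 2) from
            ⟨hs.1, hs.2.trans (by linarith [ht.2])⟩),
          indicator_of_mem (show (t, s) ∈ {p : ℝ × ℝ | p.2 < p.1} from
            hs.2.trans_lt (half_lt_self ht.1))]
    _ = ∫⁻ s in Ioc 0 (1 / 2), ∫⁻ t in Ioc 0 1,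
          {p : ℝ × ℝ | p.2 < p.1}.indicator (fun p => k p.1 * f p.2) (t, s) :=
        lintegral_lintegral_swap hmeas.aemeasurable
    _ ≤ ∫⁻ s in Ioc 0 (1 / 2), ∫⁻ t, (Ioi s).indicator (fun t => k t * f s) t :=
        lintegral_mono fun s => setLIntegral_le_lintegral _ _
    _ = _ := by
        refine lintegral_congr fun s => ?_
        rw [lintegral_indicator measurableSet_Ioi, lintegral_mul_const _ hk]

lemma lintegral_hardy_le {Q : ℝ → ℝ≥0∞} (hQ : Measurable Q) :
    ∫⁻ t in Ioc 0 1, ENNReal.ofReal (t ^ (-2 : ℝ)) * (ENNReal.ofReal (2 * (t / 2) ^ (1 / 2 : ℝ)) *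
      ∫⁻ s in Ioc 0 (t / 2), ENNReal.ofReal (s ^ (1 / 2 : ℝ)) * Q s) ≤
      4 * ∫⁻ s in Ioc 0 (1 / 2), Q s := by
  have hkernel : ∀ t ∈ Ioc (0 : ℝ) 1, ENNReal.ofReal (t ^ (-2 : ℝ)) *
      ENNReal.ofReal (2 * (t / 2) ^ (1 / 2 : ℝ)) ≤ 2 * ENNReal.ofReal (t ^ (-(3 / 2) : ℝ)) := by
    intro t ht
    have ht0 := ht.1
    rw [← ENNReal.ofReal_mul (by positivity), ← ENNReal.ofReal_ofNat 2,
      ← ENNReal.ofReal_mul zero_le_two, show (-(3 / 2) : ℝ) = -2 + 1 / 2 by norm_num,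
      rpow_add ht0, mul_left_comm]
    gcongr
    linarith
  have hmass : ∀ s ∈ Ioc (0 : ℝ) (1 / 2), (∫⁻ t in Ioi s, 2 * ENNReal.ofReal (t ^ (-(3 / 2) : ℝ))) *
      ENNReal.ofReal (s ^ (1 / 2 : ℝ)) = 4 := by
    intro s hs
    have hs0 := hs.1
    rw [lintegral_const_mul' _ _ ENNReal.ofNat_ne_top, lintegral_Ioi_rpow (by norm_num) hs0,
      mul_assoc, ← ENNReal.ofReal_mul (by norm_num; positivity), div_mul_eq_mul_div,
      ← rpow_add hs0]
    norm_num
  calc _ ≤ ∫⁻ t in Ioc 0 1, 2 * ENNReal.ofReal (t ^ (-(3 / 2) : ℝ)) *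
          ∫⁻ s in Ioc 0 (t / 2), ENNReal.ofReal (s ^ (1 / 2 : ℝ)) * Q s :=
        setLIntegral_mono' measurableSet_Ioc fun t ht => by
          rw [← mul_assoc]
          exact mul_le_mul_left (hkernel t ht) _
    _ ≤ ∫⁻ s in Ioc 0 (1 / 2), (∫⁻ t in Ioi s, 2 * ENNReal.ofReal (t ^ (-(3 / 2) : ℝ))) *
          (ENNReal.ofReal (s ^ (1 / 2 : ℝ)) * Q s) :=
        lintegral_mul_lintegral_Ioc_half_le (by fun_prop) (by fun_prop)
    _ = ∫⁻ s in Ioc 0 (1 / 2), 4 * Q s := setLIntegral_congr_fun measurableSet_Ioc fun s hs => by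
        simp only [← mul_assoc, hmass s hs]
    _ = _ := lintegral_const_mul _ hQ

lemma RegularSet.ae_enorm_boundaryModulus_add_sub_sq_le (hE : RegularSet E C η)
    (hω : OmegaHyp ω ω' γ) (hγ : 4 / 3 ≤ γ) (hlog : LogOmegaInt ω E) {t : ℝ} (ht : t ∈ Ioc 0 1) :
    ∀ᵐ θ ∂circMeas, ‖boundaryModulus ω E (θ + t) - boundaryModulus ω E θ‖ₑ ^ 2 ≤
      8 * slantIntegral (deriv (outerFun ω E)) (t / 2) (-1) (θ + t) ^ 2 +
        8 * slantIntegral (deriv (outerFun ω E)) (t / 2) 1 θ ^ 2 := by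
  have hb : t / 2 ∈ Ioc 0 1 := ⟨half_pos ht.1, by linarith [ht.2]⟩
  filter_upwards [hE.ae_pos, hE.ae_pos_add t] with θ hθ hθt
  have hleft := hE.enorm_boundaryModulus_sub_le hω hγ hlog hθ 1 hb
  have hright := hE.enorm_boundaryModulus_sub_le hω hγ hlog hθt (-1) hb
  rw [show θ + t + -1 * (t / 2) = θ + 1 * (t / 2) by ring] at hright
  norm_num at hleft hright
  set F := ‖outerFun ω E (diskPt (t / 2) (θ + t / 2))‖
  calc ‖boundaryModulus ω E (θ + t) - boundaryModulus ω E θ‖ₑ ^ 2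
      = ‖(boundaryModulus ω E (θ + t) - F) + -(boundaryModulus ω E θ - F)‖ₑ ^ 2 := by
        congr 2
        ring
    _ ≤ 2 * ‖boundaryModulus ω E (θ + t) - F‖ₑ ^ 2 + 2 * ‖boundaryModulus ω E θ - F‖ₑ ^ 2 := by
        simpa only [enorm_neg] using
          enorm_add_sq_le (boundaryModulus ω E (θ + t) - F) (-(boundaryModulus ω E θ - F))
    _ ≤ 2 * (2 * slantIntegral (deriv (outerFun ω E)) (t / 2) (-1) (θ + t)) ^ 2 +
          2 * (2 * slantIntegral (deriv (outerFun ω E)) (t / 2) 1 θ) ^ 2 := by gcongr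
    _ = _ := by ring

lemma RegularSet.lintegral_enorm_boundaryModulus_add_sub_sq_le (hE : RegularSet E C η)
    (hω : OmegaHyp ω ω' γ) (hγ : 4 / 3 ≤ γ) (hlog : LogOmegaInt ω E) {t : ℝ} (ht : t ∈ Ioc 0 1) :
    ∫⁻ θ, ‖boundaryModulus ω E (θ + t) - boundaryModulus ω E θ‖ₑ ^ 2 ∂circMeas ≤
      16 * (ENNReal.ofReal (2 * (t / 2) ^ (1 / 2 : ℝ)) * ∫⁻ s in Ioc 0 (t / 2),
        ENNReal.ofReal (s ^ (1 / 2 : ℝ)) * circleEnergy (deriv (outerFun ω E)) s) := by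
  set h := deriv (outerFun ω E)
  have hmeas : ∀ σ, Measurable fun θ => slantIntegral h (t / 2) σ θ ^ 2 := fun σ =>
    (measurable_slantIntegral (measurable_deriv _) _ σ).pow_const 2
  have hslant : ∀ σ, ∫⁻ θ, slantIntegral h (t / 2) σ θ ^ 2 ∂circMeas ≤
      ENNReal.ofReal (2 * (t / 2) ^ (1 / 2 : ℝ)) *
        ∫⁻ s in Ioc 0 (t / 2), ENNReal.ofReal (s ^ (1 / 2 : ℝ)) * circleEnergy h s :=
    lintegral_slantIntegral_sq_le (measurable_deriv _) (half_pos ht.1).le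
  refine (lintegral_mono_ae
    (hE.ae_enorm_boundaryModulus_add_sub_sq_le hω hγ hlog ht)).trans ?_
  rw [lintegral_add_right _ ((hmeas 1).const_mul 8),
    lintegral_const_mul' _ _ ENNReal.ofNat_ne_top, lintegral_const_mul' _ _ ENNReal.ofNat_ne_top,
    lintegral_circMeas_add (f := fun θ => slantIntegral h (t / 2) (-1) θ ^ 2)
      (fun θ => by simp only [slantIntegral_periodic h _ _ θ]) t, ← mul_add,
    show (16 : ℝ≥0∞) = 8 * 2 by norm_num, mul_assoc, two_mul]
  gcongr <;> exact hslant _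

lemma lintegral_circleEnergy_le {h : ℂ → ℂ} (hh : Measurable h) :
    ∫⁻ s in Ioc 0 (1 / 2), circleEnergy h s ≤ 2 * ∫⁻ z in unitDisc, ‖h z‖ₑ ^ 2 := by
  rw [lintegral_unitDisc ((hh.enorm.pow_const 2).indicator measurableSet_unitDisc),
    ← lintegral_const_mul' _ _ ENNReal.ofNat_ne_top]
  refine (setLIntegral_mono' measurableSet_Ioc fun s hs => ?_).trans
    (lintegral_mono_set (Ioc_subset_Ioc_right (by norm_num)))
  rw [← mul_assoc, ← ENNReal.ofReal_ofNat 2, ← ENNReal.ofReal_mul zero_le_two]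
  exact le_mul_of_one_le_left zero_le (ENNReal.one_le_ofReal.2 (by linarith [hs.2]))

/-- One half of Douglas' formula, for the modulus of `f_{ω,E}`. -/
lemma RegularSet.lintegral_diff_le (hE : RegularSet E C η) (hω : OmegaHyp ω ω' γ)
    (hγ : 4 / 3 ≤ γ) (hlog : LogOmegaInt ω E) :
    ∫⁻ t in Ioc 0 1, ENNReal.ofReal (t ^ (-2 : ℝ)) *
      ∫⁻ θ, ‖boundaryModulus ω E (θ + t) - boundaryModulus ω E θ‖ₑ ^ 2 ∂circMeas ≤
      128 * ∫⁻ z in unitDisc, ‖deriv (outerFun ω E) z‖ₑ ^ 2 := by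
  set h := deriv (outerFun ω E)
  have hh : Measurable h := measurable_deriv _
  calc _ ≤ ∫⁻ t in Ioc 0 1, 16 * (ENNReal.ofReal (t ^ (-2 : ℝ)) *
          (ENNReal.ofReal (2 * (t / 2) ^ (1 / 2 : ℝ)) *
            ∫⁻ s in Ioc 0 (t / 2), ENNReal.ofReal (s ^ (1 / 2 : ℝ)) * circleEnergy h s)) :=
        setLIntegral_mono' measurableSet_Ioc fun t ht => by
          rw [mul_left_comm]
          exact mul_le_mul_right
            (hE.lintegral_enorm_boundaryModulus_add_sub_sq_le hω hγ hlog ht) _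
    _ ≤ 16 * (4 * ∫⁻ s in Ioc 0 (1 / 2), circleEnergy h s) := by
        rw [lintegral_const_mul' _ _ ENNReal.ofNat_ne_top]
        exact mul_le_mul_right (lintegral_hardy_le (measurable_circleEnergy hh)) _
    _ ≤ 16 * (4 * (2 * ∫⁻ z in unitDisc, ‖h z‖ₑ ^ 2)) :=
        mul_le_mul_right (mul_le_mul_right (lintegral_circleEnergy_le hh) _) _
    _ = _ := by rw [← mul_assoc, ← mul_assoc]; norm_num

end BoundaryDifferences

section Converse

variable {ω ω' : ℝ → ℝ} {γ : ℝ} {E : Set ℂ} {C η : ℝ}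

lemma RegularSet.exists_signed_nearest (hE : RegularSet E C η) (θ : ℝ) :
    ∃ σ : ℝ, (σ = 1 ∨ σ = -1) ∧ ∃ x : ℝ, 0 ≤ x ∧ x ≤ π / 2 * dE E (cpt θ) ∧
      ∀ t ∈ Icc 0 x, dE E (cpt (θ + σ * t)) ≤ x - t := by
  obtain ⟨w, hw, hdist⟩ := hE.compact.exists_infDist_eq_dist hE.nonempty (cpt θ)
  obtain ⟨φ, rfl⟩ : ∃ φ : ℝ, cpt φ = w := (Complex.norm_eq_one_iff w).1 (hE.norm_eq w hw)
  obtain ⟨n, -, hn⟩ := exists_int_abs_sub_le_norm_cpt_sub θ φ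
  rw [← dist_eq_norm, ← hdist] at hn
  set ψ := φ + n * (2 * π) with hψ
  have hψE : cpt ψ ∈ E := by rwa [hψ, cpt_periodic.int_mul n φ]
  obtain ⟨σ, hσ, habs⟩ : ∃ σ : ℝ, (σ = 1 ∨ σ = -1) ∧ ψ - θ = σ * |θ - ψ| := by
    rcases abs_choice (θ - ψ) with h | h
    · exact ⟨-1, .inr rfl, by rw [h]; ring⟩
    · exact ⟨1, .inl rfl, by rw [h]; ring⟩
  refine ⟨σ, hσ, |θ - ψ|, abs_nonneg _, hn, fun t ht => ?_⟩
  have hσ1 : |σ| = 1 := by rcases hσ with rfl | rfl <;> simp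
  calc dE E (cpt (θ + σ * t)) ≤ |θ + σ * t - ψ| :=
        (dE_le_norm_sub hψE).trans (norm_cpt_sub_le _ _)
    _ = |σ * (t - |θ - ψ|)| := by rw [mul_sub, ← habs]; ring_nf
    _ = |θ - ψ| - t := by
        rw [abs_mul, hσ1, one_mul, abs_of_nonpos (sub_nonpos.2 ht.2), neg_sub]

lemma RegularSet.deriv_mul_le (hE : RegularSet E C η) (hω : OmegaHyp ω ω' γ) (hγ : 1 ≤ γ)
    {θ φ a : ℝ} (ha : 0 ≤ a) (haθ : a < dE E (cpt θ)) (hφ : dE E (cpt φ) ≤ dE E (cpt θ) - a) :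
    ω' (dE E (cpt θ)) * a ≤ boundaryModulus ω E θ - boundaryModulus ω E φ := by
  have hmem : dE E (cpt θ) ∈ Ioo 0 π := ⟨ha.trans_lt haθ, dE_cpt_lt_pi hE θ⟩
  have hsub : dE E (cpt θ) - a ∈ Ioc 0 π := ⟨by linarith, by linarith [hmem.2]⟩
  have htangent := hω.sub_le_deriv_mul_sub hγ hmem hsub
  have hle : boundaryModulus ω E φ ≤ ω (dE E (cpt θ) - a) :=
    indicator_apply_le' (fun h => hω.mono h.1 hφ hsub.2) fun _ => (hω.pos hsub.1 hsub.2).le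
  rw [boundaryModulus, indicator_of_mem (Ioo_subset_Ioc_self hmem)]
  linarith

lemma RegularSet.deriv_mul_le_abs_boundaryModulus_sub (hE : RegularSet E C η)
    (hω : OmegaHyp ω ω' γ) (hγ : 1 ≤ γ) {θ σ x t : ℝ} (hx : x ≤ π / 2 * dE E (cpt θ))
    (hnear : ∀ t ∈ Icc 0 x, dE E (cpt (θ + σ * t)) ≤ x - t) (hxt : x / 2 < t) (ht : t ≤ x) :
    ω' (dE E (cpt θ)) * t ≤ 10 * |boundaryModulus ω E (θ + σ * t) - boundaryModulus ω E θ| := by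
  have hxd : 63 / 100 * x ≤ dE E (cpt θ) := by
    nlinarith [pi_lt_d2, dE_nonneg E (cpt θ)]
  have hdrop := hE.deriv_mul_le hω hγ (θ := θ) (φ := θ + σ * t) (a := t / 10) (by linarith)
    (by linarith) ((hnear t ⟨by linarith, ht⟩).trans (by linarith))
  linarith [neg_abs_le (boundaryModulus ω E (θ + σ * t) - boundaryModulus ω E θ)]

/-- The contribution of the pairs `θ`, `θ + σ * t`, `0 < t ≤ 1`, to the Douglas integral
of `g`. -/
noncomputable def differenceEnergy (g : ℝ → ℝ) (σ θ : ℝ) : ℝ≥0∞ :=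
  ∫⁻ t in Ioc 0 1, ENNReal.ofReal (t ^ (-2 : ℝ)) * ‖g (θ + σ * t) - g θ‖ₑ ^ 2

lemma RegularSet.derivWeight_le_differenceEnergy (hE : RegularSet E C η) (hω : OmegaHyp ω ω' γ)
    (hγ : 1 ≤ γ) {θ σ x : ℝ} (hθ : 0 < dE E (cpt θ)) (hx0 : 0 ≤ x)
    (hx1 : x ≤ 1) (hx : x ≤ π / 2 * dE E (cpt θ))
    (hnear : ∀ t ∈ Icc 0 x, dE E (cpt (θ + σ * t)) ≤ x - t) :
    ENNReal.ofReal (derivWeight ω (dE E (cpt θ))) ≤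
      200 * differenceEnergy (boundaryModulus ω E) σ θ := by
  have hmem : dE E (cpt θ) ∈ Ioo 0 π := ⟨hθ, dE_cpt_lt_pi hE θ⟩
  have hD := hω.deriv_nonneg hmem
  have hdx : dE E (cpt θ) ≤ x := by simpa using hnear 0 ⟨le_rfl, hx0⟩
  set D := ω' (dE E (cpt θ))
  have hlow : ∀ t ∈ Ioc (x / 2) x, ENNReal.ofReal (D ^ 2 / 100) ≤ ENNReal.ofReal (t ^ (-2 : ℝ)) *
      ‖boundaryModulus ω E (θ + σ * t) - boundaryModulus ω E θ‖ₑ ^ 2 := by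
    intro t ht
    have ht0 : 0 < t := by linarith [ht.1]
    have hDt := hE.deriv_mul_le_abs_boundaryModulus_sub hω hγ hx hnear ht.1 ht.2
    rw [← ofReal_norm, ← ENNReal.ofReal_pow (norm_nonneg _), ← ENNReal.ofReal_mul (by positivity)]
    refine ENNReal.ofReal_le_ofReal ?_
    rw [Real.norm_eq_abs, rpow_neg ht0.le, rpow_two, inv_mul_eq_div, le_div_iff₀ (by positivity)]
    linarith [pow_le_pow_left₀ (mul_nonneg hD ht0.le) hDt 2, mul_pow D t 2, mul_pow 10
      |boundaryModulus ω E (θ + σ * t) - boundaryModulus ω E θ| 2]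
  calc ENNReal.ofReal (derivWeight ω (dE E (cpt θ)))
      ≤ 200 * (ENNReal.ofReal (D ^ 2 / 100) * ENNReal.ofReal (x - x / 2)) := by
        rw [hω.derivWeight_eq hmem, ← ENNReal.ofReal_mul (by positivity),
          ← ENNReal.ofReal_ofNat 200, ← ENNReal.ofReal_mul (by norm_num)]
        refine ENNReal.ofReal_le_ofReal ?_
        linarith [mul_le_mul_of_nonneg_right hdx (sq_nonneg D)]
    _ = 200 * ∫⁻ t in Ioc (x / 2) x, ENNReal.ofReal (D ^ 2 / 100) := by
        rw [lintegral_const, Measure.restrict_apply_univ, Real.volume_Ioc]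
    _ ≤ 200 * ∫⁻ t in Ioc (x / 2) x, ENNReal.ofReal (t ^ (-2 : ℝ)) *
          ‖boundaryModulus ω E (θ + σ * t) - boundaryModulus ω E θ‖ₑ ^ 2 :=
        mul_le_mul_right (setLIntegral_mono' measurableSet_Ioc hlow) _
    _ ≤ _ := mul_le_mul_right (lintegral_mono_set (Ioc_subset_Ioc (by linarith) hx1)) _

lemma measurable_differenceEnergy_integrand {g : ℝ → ℝ} (hg : Measurable g) (σ : ℝ) :
    Measurable fun p : ℝ × ℝ =>
      ENNReal.ofReal (p.2 ^ (-2 : ℝ)) * ‖g (p.1 + σ * p.2) - g p.1‖ₑ ^ 2 := by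
  fun_prop

lemma measurable_differenceEnergy {g : ℝ → ℝ} (hg : Measurable g) (σ : ℝ) :
    Measurable (differenceEnergy g σ) :=
  (measurable_differenceEnergy_integrand hg σ).lintegral_prod_right'

lemma lintegral_differenceEnergy {g : ℝ → ℝ} (hg : Measurable g) (σ : ℝ) :
    ∫⁻ θ, differenceEnergy g σ θ ∂circMeas = ∫⁻ t in Ioc 0 1, ENNReal.ofReal (t ^ (-2 : ℝ)) *
      ∫⁻ θ, ‖g (θ + σ * t) - g θ‖ₑ ^ 2 ∂circMeas := by
  simp only [differenceEnergy]
  rw [lintegral_lintegral_swap (measurable_differenceEnergy_integrand hg σ).aemeasurable]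
  exact lintegral_congr fun t => lintegral_const_mul' _ _ ENNReal.ofReal_ne_top

lemma lintegral_differenceEnergy_neg {g : ℝ → ℝ} (hg : Measurable g)
    (hper : Function.Periodic g (2 * π)) (σ : ℝ) :
    ∫⁻ θ, differenceEnergy g (-σ) θ ∂circMeas = ∫⁻ θ, differenceEnergy g σ θ ∂circMeas := by
  rw [lintegral_differenceEnergy hg, lintegral_differenceEnergy hg]
  refine lintegral_congr fun t => ?_
  congr 1
  have hdiff : Function.Periodic (fun θ => ‖g (θ + -σ * t) - g θ‖ₑ ^ 2) (2 * π) := fun θ => by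
    simp only [add_right_comm θ, hper _]
  rw [← lintegral_circMeas_add hdiff (σ * t)]
  refine lintegral_congr fun θ => ?_
  rw [show θ + σ * t + -σ * t = θ by ring, ← enorm_neg, neg_sub]

lemma RegularSet.ae_derivWeight_le (hE : RegularSet E C η) (hω : OmegaHyp ω ω' γ) (hγ : 2 ≤ γ) :
    ∀ᵐ θ ∂circMeas, ENNReal.ofReal (derivWeight ω (dE E (cpt θ))) ≤
      ENNReal.ofReal (derivWeight ω (1 / 2)) + 200 *
        (differenceEnergy (boundaryModulus ω E) 1 θ +
          differenceEnergy (boundaryModulus ω E) (-1) θ) := by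
  filter_upwards [hE.ae_pos] with θ hθ
  obtain ⟨σ, hσ, x, hx0, hx, hnear⟩ := hE.exists_signed_nearest θ
  rcases le_or_gt x 1 with hx1 | hx1
  · refine ((hE.derivWeight_le_differenceEnergy hω (by linarith) hθ hx0 hx1 hx hnear).trans
      ?_).trans le_add_self
    refine mul_le_mul_right ?_ _
    rcases hσ with rfl | rfl
    · exact le_self_add
    · exact le_add_self
  · refine (ENNReal.ofReal_le_ofReal ?_).trans le_self_add
    exact hω.antitoneOn_derivWeight hγ ⟨by norm_num, by linarith [pi_gt_three]⟩
      ⟨hθ, dE_cpt_lt_pi hE θ⟩ (by nlinarith [pi_lt_four])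

lemma RegularSet.lintegral_derivWeight_ne_top (hE : RegularSet E C η) (hω : OmegaHyp ω ω' γ)
    (hγ : 2 ≤ γ) (hlog : LogOmegaInt ω E)
    (henergy : ∫⁻ z in unitDisc, ‖deriv (outerFun ω E) z‖ₑ ^ 2 ≠ ∞) :
    ∫⁻ θ, ENNReal.ofReal (derivWeight ω (dE E (cpt θ))) ∂circMeas ≠ ∞ := by
  have hG := hω.measurable_boundaryModulus E
  have hright : ∫⁻ θ, differenceEnergy (boundaryModulus ω E) 1 θ ∂circMeas ≠ ∞ := by
    rw [lintegral_differenceEnergy hG]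
    simp only [one_mul]
    exact ne_top_of_le_ne_top (ENNReal.mul_ne_top ENNReal.ofNat_ne_top henergy)
      (hE.lintegral_diff_le hω (by linarith) hlog)
  have hleft : ∫⁻ θ, differenceEnergy (boundaryModulus ω E) (-1) θ ∂circMeas ≠ ∞ := by
    rwa [lintegral_differenceEnergy_neg hG (boundaryModulus_periodic ω E)]
  refine ne_top_of_le_ne_top ?_ (lintegral_mono_ae (hE.ae_derivWeight_le hω hγ))
  rw [lintegral_add_left measurable_const, lintegral_const, circMeas_univ,
    lintegral_const_mul' _ _ ENNReal.ofNat_ne_top,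
    lintegral_add_left (measurable_differenceEnergy hG 1)]
  finiteness

end Converse

section Equivalence

variable {E : Set ℂ} {C η : ℝ}

lemma RegularSet.nbhdMeas_ne_zero (hE : RegularSet E C η) {t : ℝ} (ht : t ∈ Ioc 0 1) :
    nbhdMeas E t ≠ 0 := by
  obtain ⟨w, hw⟩ := hE.nonempty
  obtain ⟨x, rfl⟩ : ∃ x : ℝ, cpt x = w := (Complex.norm_eq_one_iff w).1 (hE.norm_eq w hw)
  have hball : ENNReal.ofReal (2 * t) ≤ nbhdMeas E t :=
    (le_circMeas_closedBall x (by linarith [ht.2, pi_gt_three])).trans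
      (measure_mono fun φ hφ => (dE_le_norm_sub hw).trans hφ)
  exact ((ENNReal.ofReal_pos.2 (by linarith [ht.1])).trans_le hball).ne'

lemma lintegral_inv_nbhdMeas_ne_top (hpos : ∀ t ∈ Ioc 0 1, nbhdMeas E t ≠ 0)
    (hcap : IntegrableOn (fun t => (EtMeas E t)⁻¹) (Ioc 0 1)) :
    ∫⁻ t in Ioc 0 1, (nbhdMeas E t)⁻¹ ≠ ∞ := by
  refine ne_of_eq_of_ne (setLIntegral_congr_fun measurableSet_Ioc fun t ht => ?_) hcap.2.ne
  have htoReal := ENNReal.toReal_pos (hpos t ht) (nbhdMeas_ne_top E t)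
  change _ = ‖(EtMeas E t)⁻¹‖ₑ
  rw [← toReal_nbhdMeas, Real.enorm_of_nonneg (inv_nonneg.2 htoReal.le),
    ENNReal.ofReal_inv_of_pos htoReal, ENNReal.ofReal_toReal (nbhdMeas_ne_top E t)]

theorem statement18_general (hE : RegularSet E C η)
    (hcap : IntegrableOn (fun t => (EtMeas E t)⁻¹) (Ioc 0 1)) {ω ω' : ℝ → ℝ} {γ : ℝ}
    (hγ : 2 < γ) (hω : OmegaHyp ω ω' γ) (hlog : LogOmegaInt ω E) :
    (MemDirichlet (outerFun ω E) ↔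
      IntegrableOn (fun θ => dE E (cpt θ) * ω' (dE E (cpt θ)) ^ 2) (Ioc 0 (2 * π))) ∧
    (IsMultiplierD (outerFun ω E) ↔
      IntegrableOn (fun θ => dE E (cpt θ) * ω' (dE E (cpt θ)) ^ 2) (Ioc 0 (2 * π))) := by
  have hpos : ∀ t ∈ Ioc 0 1, nbhdMeas E t ≠ 0 := fun t ht => hE.nbhdMeas_ne_zero ht
  have hmul : IntegrableOn (fun θ => dE E (cpt θ) * ω' (dE E (cpt θ)) ^ 2) (Ioc 0 (2 * π)) →
      IsMultiplierD (outerFun ω E) := fun h =>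
    hE.isMultiplierD_outerFun hω hγ hlog hpos (lintegral_inv_nbhdMeas_ne_top hpos hcap)
      ((hE.integrable_iff hω).1 h)
  have hint : MemDirichlet (outerFun ω E) →
      IntegrableOn (fun θ => dE E (cpt θ) * ω' (dE E (cpt θ)) ^ 2) (Ioc 0 (2 * π)) := fun h =>
    (hE.integrable_iff hω).2
      (hE.lintegral_derivWeight_ne_top hω hγ.le hlog ((integrableOn_deriv_sq_iff _).1 h.2.2))
  exact ⟨⟨hint, fun h => (hmul h).memDirichlet⟩, ⟨fun h => hint h.memDirichlet, hmul⟩⟩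

end Equivalence

section Cantor

/-- The length of the intervals of generation `n` in the Cantor construction. -/
noncomputable def cantorLength (ξ : ℕ → ℝ) (n : ℕ) : ℝ := ∏ k ∈ Finset.range n, ξ k

/-- The displacement from the left endpoint of an interval of generation `n` to that of the
interval of generation `n + 1` selected by `ε`. -/
noncomputable def cantorDigit (ξ : ℕ → ℝ) (ε : ℕ → Bool) (n : ℕ) : ℝ :=
  (if ε n then (1 : ℝ) else 0) * cantorLength ξ n * (1 - ξ n)

/-- The left endpoint of the interval of generation `n` containing the point coded by `ε`. -/
noncomputable def cantorLeft (ξ : ℕ → ℝ) (ε : ℕ → Bool) (n : ℕ) : ℝ :=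
  ∑ k ∈ Finset.range n, cantorDigit ξ ε k

/-- The point of the Cantor subset of `[0, 1]` coded by `ε`. -/
noncomputable def cantorPoint (ξ : ℕ → ℝ) (ε : ℕ → Bool) : ℝ := ∑' n, cantorDigit ξ ε n

/-- The point of the Cantor subset of the circle coded by `ε`. -/
noncomputable def cantorCirclePoint (ξ : ℕ → ℝ) (ε : ℕ → Bool) : ℂ :=
  cpt (2 * π * cantorPoint ξ ε)

variable {ξ : ℕ → ℝ}

@[simp]
lemma cantorLength_zero (ξ : ℕ → ℝ) : cantorLength ξ 0 = 1 := by simp [cantorLength]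

lemma cantorLength_succ (ξ : ℕ → ℝ) (n : ℕ) :
    cantorLength ξ (n + 1) = cantorLength ξ n * ξ n :=
  Finset.prod_range_succ ξ n

lemma cantorLeft_succ (ξ : ℕ → ℝ) (ε : ℕ → Bool) (n : ℕ) :
    cantorLeft ξ ε (n + 1) = cantorLeft ξ ε n + cantorDigit ξ ε n :=
  Finset.sum_range_succ _ n

lemma cantorLeft_congr {ε ε' : ℕ → Bool} {n : ℕ} (h : ∀ k < n, ε k = ε' k) :
    cantorLeft ξ ε n = cantorLeft ξ ε' n :=
  Finset.sum_congr rfl fun k hk => by simp only [cantorDigit, h k (Finset.mem_range.1 hk)]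

lemma cantorLength_pos (hξ : ∀ n, ξ n ∈ Ioo (0 : ℝ) (1 / 2)) (n : ℕ) : 0 < cantorLength ξ n :=
  Finset.prod_pos fun k _ => (hξ k).1

lemma two_mul_cantorLength_succ_le (hξ : ∀ n, ξ n ∈ Ioo (0 : ℝ) (1 / 2)) (n : ℕ) :
    2 * cantorLength ξ (n + 1) ≤ cantorLength ξ n := by
  rw [cantorLength_succ]
  nlinarith [cantorLength_pos hξ n, (hξ n).2]

lemma cantorLength_add_le (hξ : ∀ n, 0 ≤ ξ n) {l : ℝ} (hl : ∀ n, ξ n ≤ l) (k j : ℕ) :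
    cantorLength ξ (k + j) ≤ l ^ j * cantorLength ξ k := by
  rw [cantorLength, Finset.prod_range_add, mul_comm]
  refine mul_le_mul_of_nonneg_right ?_ (Finset.prod_nonneg fun i _ => hξ i)
  simpa using Finset.prod_le_prod (s := Finset.range j) (fun i _ => hξ (k + i))
    fun i _ => hl (k + i)

lemma cantorLength_le_pow (hξ : ∀ n, ξ n ∈ Ioo (0 : ℝ) (1 / 2)) (n : ℕ) :
    cantorLength ξ n ≤ (1 / 2) ^ n := by
  simpa using cantorLength_add_le (fun k => (hξ k).1.le) (fun k => (hξ k).2.le) 0 n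

lemma summable_cantorLength (hξ : ∀ n, ξ n ∈ Ioo (0 : ℝ) (1 / 2)) : Summable (cantorLength ξ) :=
  .of_nonneg_of_le (fun n => (cantorLength_pos hξ n).le) (cantorLength_le_pow hξ)
    summable_geometric_two

lemma cantorDigit_eq (ξ : ℕ → ℝ) (ε : ℕ → Bool) (n : ℕ) :
    cantorDigit ξ ε n = if ε n then cantorLength ξ n - cantorLength ξ (n + 1) else 0 := by
  rw [cantorDigit, cantorLength_succ]
  split_ifs <;> ring

lemma cantorDigit_mem_Icc (hξ : ∀ n, ξ n ∈ Ioo (0 : ℝ) (1 / 2)) (ε : ℕ → Bool) (n : ℕ) :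
    cantorDigit ξ ε n ∈ Icc 0 (cantorLength ξ n - cantorLength ξ (n + 1)) := by
  have hdrop := two_mul_cantorLength_succ_le hξ n
  have hpos := cantorLength_pos hξ (n + 1)
  rw [cantorDigit_eq]
  split_ifs <;> constructor <;> linarith

lemma cantorLeft_sub_mem_Icc (hξ : ∀ n, ξ n ∈ Ioo (0 : ℝ) (1 / 2)) (ε : ℕ → Bool) {m n : ℕ}
    (h : m ≤ n) :
    cantorLeft ξ ε n - cantorLeft ξ ε m ∈ Icc 0 (cantorLength ξ m - cantorLength ξ n) := by
  induction n, h using Nat.le_induction with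
  | base => simp
  | succ n _ ih =>
    have hdigit := cantorDigit_mem_Icc hξ ε n
    rw [cantorLeft_succ]
    constructor <;> linarith [ih.1, ih.2, hdigit.1, hdigit.2]

lemma norm_cantorDigit_le (hξ : ∀ n, ξ n ∈ Ioo (0 : ℝ) (1 / 2)) (ε : ℕ → Bool) (n : ℕ) :
    ‖cantorDigit ξ ε n‖ ≤ cantorLength ξ n := by
  have hdigit := cantorDigit_mem_Icc hξ ε n
  rw [Real.norm_of_nonneg hdigit.1]
  linarith [hdigit.2, cantorLength_pos hξ (n + 1)]

lemma cantorPoint_sub_cantorLeft_mem_Icc (hξ : ∀ n, ξ n ∈ Ioo (0 : ℝ) (1 / 2)) (ε : ℕ → Bool)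
    (n : ℕ) : cantorPoint ξ ε - cantorLeft ξ ε n ∈ Icc 0 (cantorLength ξ n) := by
  have hsum : Summable (cantorDigit ξ ε) :=
    .of_norm_bounded (summable_cantorLength hξ) (norm_cantorDigit_le hξ ε)
  refine isClosed_Icc.mem_of_tendsto (hsum.hasSum.tendsto_sum_nat.sub_const _)
    (eventually_atTop.2 ⟨n, fun m hm => ?_⟩)
  have hmem := cantorLeft_sub_mem_Icc hξ ε hm
  exact ⟨hmem.1, hmem.2.trans (sub_le_self _ (cantorLength_pos hξ m).le)⟩

lemma cantorPoint_mem_Icc (hξ : ∀ n, ξ n ∈ Ioo (0 : ℝ) (1 / 2)) (ε : ℕ → Bool) :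
    cantorPoint ξ ε ∈ Icc 0 1 := by
  simpa [cantorLeft] using cantorPoint_sub_cantorLeft_mem_Icc hξ ε 0

lemma continuous_cantorPoint (hξ : ∀ n, ξ n ∈ Ioo (0 : ℝ) (1 / 2)) :
    Continuous (cantorPoint ξ) := by
  refine continuous_tsum (fun n => ?_) (summable_cantorLength hξ)
    fun n ε => norm_cantorDigit_le hξ ε n
  exact (continuous_of_discreteTopology (f := fun b : Bool =>
    (if b then (1 : ℝ) else 0) * cantorLength ξ n * (1 - ξ n))).comp (continuous_apply n)

lemma continuous_cantorCirclePoint (hξ : ∀ n, ξ n ∈ Ioo (0 : ℝ) (1 / 2)) :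
    Continuous (cantorCirclePoint ξ) :=
  continuous_cpt.comp (continuous_const.mul (continuous_cantorPoint hξ))

lemma eq_of_abs_cantorDigit_sub_lt (hξ : ∀ n, ξ n ∈ Ioo (0 : ℝ) (1 / 2)) {ε ε' : ℕ → Bool} {n : ℕ}
    (h : |cantorDigit ξ ε n - cantorDigit ξ ε' n| < cantorLength ξ (n + 1)) : ε n = ε' n := by
  have hdrop := two_mul_cantorLength_succ_le hξ n
  rw [cantorDigit_eq, cantorDigit_eq, abs_lt] at h
  cases hε : ε n <;> cases hε' : ε' n <;>
    simp only [hε, hε', if_true, if_false, Bool.false_eq_true] at h ⊢ <;> linarith [h.1, h.2]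

lemma eq_of_abs_cantorLeft_sub_lt (hξ : ∀ n, ξ n ∈ Ioo (0 : ℝ) (1 / 2)) {ε ε' : ℕ → Bool} {n : ℕ}
    (h : |cantorLeft ξ ε n - cantorLeft ξ ε' n| < cantorLength ξ n) : ∀ k < n, ε k = ε' k := by
  induction n with
  | zero => exact fun k hk => absurd hk k.not_lt_zero
  | succ n ih =>
    have hinit : ∀ k < n, ε k = ε' k := by
      refine ih (abs_lt.2 ?_)
      have hdigit := cantorDigit_mem_Icc hξ ε n
      have hdigit' := cantorDigit_mem_Icc hξ ε' n
      rw [cantorLeft_succ, cantorLeft_succ, abs_lt] at h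
      constructor <;> linarith [h.1, h.2, hdigit.1, hdigit.2, hdigit'.1, hdigit'.2]
    rw [cantorLeft_succ, cantorLeft_succ, cantorLeft_congr hinit, add_sub_add_left_eq_sub] at h
    intro k hk
    rcases Nat.lt_succ_iff_lt_or_eq.1 hk with hk | rfl
    · exact hinit k hk
    · exact eq_of_abs_cantorDigit_sub_lt hξ h

/-- The law of an infinite sequence of fair coin tosses. -/
noncomputable def coinTosses : Measure (ℕ → Bool) :=
  Measure.infinitePi fun _ => (PMF.uniformOfFintype Bool).toMeasure

instance : IsProbabilityMeasure coinTosses :=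
  inferInstanceAs (IsProbabilityMeasure (Measure.infinitePi _))

lemma coinTosses_cylinder (ε₀ : ℕ → Bool) (n : ℕ) :
    coinTosses {ε | ∀ k < n, ε k = ε₀ k} = ENNReal.ofReal ((1 / 2) ^ n) := by
  have hpi : {ε : ℕ → Bool | ∀ k < n, ε k = ε₀ k} =
      Set.pi (Finset.range n : Finset ℕ) fun k => {ε₀ k} := by
    ext ε; simp [Set.mem_pi]
  rw [hpi, coinTosses, Measure.infinitePi_pi _ fun i _ => measurableSet_singleton _,
    ENNReal.ofReal_pow (by norm_num), one_div, ENNReal.ofReal_inv_of_pos two_pos,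
    ENNReal.ofReal_ofNat]
  simp

lemma coinTosses_abs_cantorPoint_sub_le (hξ : ∀ n, ξ n ∈ Ioo (0 : ℝ) (1 / 2)) (x : ℝ)
    (k M : ℕ) :
    coinTosses {ε | |cantorPoint ξ ε - x| ≤ M * cantorLength ξ k} ≤
      (2 * M + 2) * ENNReal.ofReal ((1 / 2) ^ k) := by
  have hlen := cantorLength_pos hξ k
  let cell : (ℕ → Bool) → ℤ := fun ε => ⌊(cantorLeft ξ ε k - x) / cantorLength ξ k⌋
  have hcover : {ε | |cantorPoint ξ ε - x| ≤ M * cantorLength ξ k} ⊆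
      ⋃ j ∈ Finset.Icc (-(M : ℤ) - 1) M, {ε | cell ε = j} := by
    intro ε hε
    obtain ⟨hlo, hhi⟩ := abs_le.1 (mem_ofPred_eq ▸ hε)
    have hleft := cantorPoint_sub_cantorLeft_mem_Icc hξ ε k
    refine mem_biUnion (Finset.mem_Icc.2 ⟨?_, ?_⟩) rfl
    · rw [Int.le_floor, le_div_iff₀ hlen]
      push_cast
      linarith [hleft.2]
    · rw [← Int.lt_add_one_iff, Int.floor_lt, div_lt_iff₀ hlen]
      push_cast
      linarith [hleft.1]
  have hcell : ∀ j, coinTosses {ε | cell ε = j} ≤ ENNReal.ofReal ((1 / 2) ^ k) := by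
    intro j
    rcases Set.eq_empty_or_nonempty {ε | cell ε = j} with hempty | ⟨ε₀, hε₀⟩
    · simp [hempty]
    rw [← coinTosses_cylinder ε₀ k]
    refine measure_mono fun ε hε => eq_of_abs_cantorLeft_sub_lt hξ ?_
    have hclose := Int.abs_sub_lt_one_of_floor_eq_floor (hε.trans hε₀.symm)
    rwa [← sub_div, abs_div, abs_of_pos hlen, div_lt_one hlen, sub_sub_sub_cancel_right] at hclose
  calc coinTosses {ε | |cantorPoint ξ ε - x| ≤ M * cantorLength ξ k}
      ≤ ∑ j ∈ Finset.Icc (-(M : ℤ) - 1) M, coinTosses {ε | cell ε = j} :=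
        (measure_mono hcover).trans (measure_biUnion_finset_le _ _)
    _ ≤ ∑ j ∈ Finset.Icc (-(M : ℤ) - 1) M, ENNReal.ofReal ((1 / 2) ^ k) :=
        Finset.sum_le_sum fun j _ => hcell j
    _ = (2 * M + 2) * ENNReal.ofReal ((1 / 2) ^ k) := by
        rw [Finset.sum_const, Int.card_Icc, nsmul_eq_mul,
          show ((M : ℤ) + 1 - (-M - 1)).toNat = 2 * M + 2 by omega]
        push_cast
        rfl

lemma gCantorSet_eq_range (ξ : ℕ → ℝ) : gCantorSet ξ = range (cantorCirclePoint ξ) := by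
  ext z
  refine exists_congr fun ε => ?_
  rw [eq_comm, cantorCirclePoint, cpt, cantorPoint]
  simp only [cantorDigit, cantorLength]
  push_cast
  rw [mul_right_comm]

lemma cantorCirclePoint_mem_gCantorSet (ξ : ℕ → ℝ) (ε : ℕ → Bool) :
    cantorCirclePoint ξ ε ∈ gCantorSet ξ := by
  rw [gCantorSet_eq_range]
  exact mem_range_self ε

lemma isCompact_gCantorSet (hξ : ∀ n, ξ n ∈ Ioo (0 : ℝ) (1 / 2)) : IsCompact (gCantorSet ξ) := by
  rw [gCantorSet_eq_range]
  exact isCompact_range (continuous_cantorCirclePoint hξ)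

lemma norm_eq_one_of_mem_gCantorSet {z : ℂ} (hz : z ∈ gCantorSet ξ) : ‖z‖ = 1 := by
  rw [gCantorSet_eq_range] at hz
  obtain ⟨ε, rfl⟩ := hz
  exact norm_cpt _

/-- The natural measure of the generalized Cantor set: the intervals of generation `n` have
mass `2⁻ⁿ`. -/
noncomputable def cantorMeasure (ξ : ℕ → ℝ) : Measure ℂ := coinTosses.map (cantorCirclePoint ξ)

lemma isProbabilityMeasure_cantorMeasure (hξ : ∀ n, ξ n ∈ Ioo (0 : ℝ) (1 / 2)) :
    IsProbabilityMeasure (cantorMeasure ξ) :=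
  Measure.isProbabilityMeasure_map (continuous_cantorCirclePoint hξ).aemeasurable

lemma cantorMeasure_closedBall (hξ : ∀ n, ξ n ∈ Ioo (0 : ℝ) (1 / 2)) (z : ℂ) (r : ℝ) :
    cantorMeasure ξ (Metric.closedBall z r) =
      coinTosses {ε | ‖cantorCirclePoint ξ ε - z‖ ≤ r} := by
  rw [cantorMeasure, Measure.map_apply (continuous_cantorCirclePoint hξ).measurable
    measurableSet_closedBall]
  simp only [Metric.closedBall, dist_eq_norm, preimage_ofPred_eq]

lemma exists_int_abs_cantorPoint_sub_le (hξ : ∀ n, ξ n ∈ Ioo (0 : ℝ) (1 / 2))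
    (ε ε' : ℕ → Bool) :
    ∃ n ∈ Finset.Icc (-1 : ℤ) 1, |cantorPoint ξ ε - (cantorPoint ξ ε' + n)| ≤
      ‖cantorCirclePoint ξ ε - cantorCirclePoint ξ ε'‖ / 2 := by
  obtain ⟨n, hpi, hn⟩ := exists_int_abs_sub_le_norm_cpt_sub (2 * π * cantorPoint ξ ε)
    (2 * π * cantorPoint ξ ε')
  rw [show 2 * π * cantorPoint ξ ε - (2 * π * cantorPoint ξ ε' + n * (2 * π)) =
      2 * π * (cantorPoint ξ ε - (cantorPoint ξ ε' + n)) by ring, abs_mul,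
    abs_of_pos two_pi_pos] at hpi hn
  refine ⟨n, ?_, ?_⟩
  · have hhalf : |cantorPoint ξ ε - (cantorPoint ξ ε' + n)| ≤ 1 / 2 :=
      le_of_mul_le_mul_left (by linarith) two_pi_pos
    have hε := cantorPoint_mem_Icc hξ ε
    have hε' := cantorPoint_mem_Icc hξ ε'
    rw [abs_le] at hhalf
    have hlo : ((-2 : ℤ) : ℝ) < n := by push_cast; linarith [hε.1, hε'.2]
    have hhi : (n : ℝ) < (2 : ℤ) := by push_cast; linarith [hε.2, hε'.1]
    rw [Int.cast_lt] at hlo hhi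
    exact Finset.mem_Icc.2 ⟨by omega, by omega⟩
  · refine le_of_mul_le_mul_left (hn.trans ?_) two_pi_pos
    change _ ≤ 2 * π * (‖cpt _ - cpt _‖ / 2)
    nlinarith [pi_pos, norm_nonneg (cpt (2 * π * cantorPoint ξ ε) -
      cpt (2 * π * cantorPoint ξ ε'))]

lemma cantorMeasure_closedBall_le (hξ : ∀ n, ξ n ∈ Ioo (0 : ℝ) (1 / 2)) (z : ℂ) (k M : ℕ) {r : ℝ}
    (hr : r ≤ M * cantorLength ξ k) :
    cantorMeasure ξ (Metric.closedBall z r) ≤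
      3 * ((2 * M + 2) * ENNReal.ofReal ((1 / 2) ^ k)) := by
  rw [cantorMeasure_closedBall hξ]
  rcases Set.eq_empty_or_nonempty {ε | ‖cantorCirclePoint ξ ε - z‖ ≤ r} with hempty | ⟨ε₀, hε₀⟩
  · simp [hempty]
  have hcover : {ε | ‖cantorCirclePoint ξ ε - z‖ ≤ r} ⊆ ⋃ n ∈ Finset.Icc (-1 : ℤ) 1,
      {ε | |cantorPoint ξ ε - (cantorPoint ξ ε₀ + n)| ≤ M * cantorLength ξ k} := by
    intro ε hε
    obtain ⟨n, hn, hle⟩ := exists_int_abs_cantorPoint_sub_le hξ ε ε₀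
    refine mem_biUnion hn (hle.trans ?_)
    rw [mem_ofPred_eq, norm_sub_rev] at hε₀
    linarith [norm_sub_le_norm_sub_add_norm_sub (cantorCirclePoint ξ ε) z
      (cantorCirclePoint ξ ε₀), mem_ofPred_eq ▸ hε]
  calc coinTosses {ε | ‖cantorCirclePoint ξ ε - z‖ ≤ r}
      ≤ ∑ n ∈ Finset.Icc (-1 : ℤ) 1, coinTosses
          {ε | |cantorPoint ξ ε - (cantorPoint ξ ε₀ + n)| ≤ M * cantorLength ξ k} :=
        (measure_mono hcover).trans (measure_biUnion_finset_le _ _)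
    _ ≤ ∑ n ∈ Finset.Icc (-1 : ℤ) 1, (2 * M + 2) * ENNReal.ofReal ((1 / 2) ^ k) :=
        Finset.sum_le_sum fun n _ => coinTosses_abs_cantorPoint_sub_le hξ _ k M
    _ = 3 * ((2 * M + 2) * ENNReal.ofReal ((1 / 2) ^ k)) := by
        rw [Finset.sum_const, Int.card_Icc, nsmul_eq_mul]
        rfl

lemma le_cantorMeasure_closedBall (hξ : ∀ n, ξ n ∈ Ioo (0 : ℝ) (1 / 2)) {w : ℂ}
    (hw : w ∈ gCantorSet ξ) (n : ℕ) {r : ℝ} (hr : 7 * cantorLength ξ n ≤ r) :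
    ENNReal.ofReal ((1 / 2) ^ n) ≤ cantorMeasure ξ (Metric.closedBall w r) := by
  rw [gCantorSet_eq_range] at hw
  obtain ⟨ε₀, rfl⟩ := hw
  rw [cantorMeasure_closedBall hξ, ← coinTosses_cylinder ε₀ n]
  refine measure_mono fun ε hε => (norm_cpt_sub_le _ _).trans (le_trans ?_ hr)
  have hmem := cantorPoint_sub_cantorLeft_mem_Icc hξ ε n
  have hmem₀ := cantorPoint_sub_cantorLeft_mem_Icc hξ ε₀ n
  rw [cantorLeft_congr hε] at hmem
  have hclose : |cantorPoint ξ ε - cantorPoint ξ ε₀| ≤ cantorLength ξ n :=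
    abs_le.2 ⟨by linarith [hmem.1, hmem₀.2], by linarith [hmem.2, hmem₀.1]⟩
  rw [← mul_sub, abs_mul, abs_of_pos two_pi_pos]
  nlinarith [pi_lt_d2, abs_nonneg (cantorPoint ξ ε - cantorPoint ξ ε₀)]

end Cantor

section UniformDistribution

/-- `μ` is a probability measure concentrated on `E` which gives to every disc of radius
comparable to `t` centred on `E` a mass comparable to `h t`. The factors `7` and `9` leave room for
replacing a point at distance at most `t` from `E` by a point of `E`. -/
structure IsUniformlyDistributed (μ : Measure ℂ) (E : Set ℂ) (h : ℝ → ℝ) (K : ℝ) : Prop where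
  isProbabilityMeasure : IsProbabilityMeasure μ
  ae_mem : ∀ᵐ w ∂μ, w ∈ E
  pos : ∀ t, 0 < h t
  le_closedBall : ∀ t > 0, ∀ w ∈ E, ENNReal.ofReal (h t) ≤ μ (Metric.closedBall w (7 * t))
  closedBall_le : ∀ t > 0, ∀ z, μ (Metric.closedBall z (9 * t)) ≤ ENNReal.ofReal (K * h t)

lemma lintegral_measure_closedBall_cpt (μ : Measure ℂ) [SFinite μ] (A : Set ℝ) (r : ℝ) :
    ∫⁻ φ in A, μ (Metric.closedBall (cpt φ) r) ∂circMeas =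
      ∫⁻ w, circMeas ({φ | ‖cpt φ - w‖ ≤ r} ∩ A) ∂μ := by
  have hS : MeasurableSet {p : ℝ × ℂ | ‖cpt p.1 - p.2‖ ≤ r} :=
    measurableSet_le (by fun_prop) measurable_const
  have hsection : ∀ φ, Prod.mk φ ⁻¹' {p : ℝ × ℂ | ‖cpt p.1 - p.2‖ ≤ r} =
      Metric.closedBall (cpt φ) r := fun φ => by
    ext w
    rw [Metric.mem_closedBall, dist_eq_norm, norm_sub_rev]
    rfl
  calc ∫⁻ φ in A, μ (Metric.closedBall (cpt φ) r) ∂circMeas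
      = ((circMeas.restrict A).prod μ) {p : ℝ × ℂ | ‖cpt p.1 - p.2‖ ≤ r} := by
        simp only [Measure.prod_apply hS, hsection]
    _ = ∫⁻ w, circMeas ({φ | ‖cpt φ - w‖ ≤ r} ∩ A) ∂μ := by
        rw [Measure.prod_apply_symm hS]
        exact lintegral_congr fun w => Measure.restrict_apply (measurableSet_norm_cpt_sub_le w r)

namespace IsUniformlyDistributed

variable {μ : Measure ℂ} {E : Set ℂ} {h : ℝ → ℝ} {K t R : ℝ}

lemma nonempty (hμ : IsUniformlyDistributed μ E h K) : E.Nonempty :=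
  have := hμ.isProbabilityMeasure
  hμ.ae_mem.exists

lemma const_nonneg (hμ : IsUniformlyDistributed μ E h K) : 0 ≤ K := by
  obtain ⟨w, hw⟩ := hμ.nonempty
  have hle := (hμ.le_closedBall 1 one_pos w hw).trans
    ((measure_mono (Metric.closedBall_subset_closedBall (by norm_num))).trans
      (hμ.closedBall_le 1 one_pos w))
  have hpos : 0 < K * h 1 := ENNReal.ofReal_pos.1 ((ENNReal.ofReal_pos.2 (hμ.pos 1)).trans_le hle)
  exact (pos_of_mul_pos_left hpos (hμ.pos 1).le).le

lemma ofReal_mul_circMeas_le (hμ : IsUniformlyDistributed μ E h K) (hE : IsCompact E) (ht : 0 < t)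
    {A : Set ℝ} (hA : MeasurableSet A) (hAE : ∀ φ ∈ A, dE E (cpt φ) ≤ t) :
    ENNReal.ofReal (h t) * circMeas A ≤
      ∫⁻ w, circMeas ({φ | ‖cpt φ - w‖ ≤ 8 * t} ∩ A) ∂μ := by
  have := hμ.isProbabilityMeasure
  rw [← lintegral_measure_closedBall_cpt, ← setLIntegral_const]
  refine setLIntegral_mono' hA fun φ hφ => ?_
  obtain ⟨w, hw, hdist⟩ := hE.exists_infDist_eq_dist hμ.nonempty (cpt φ)
  refine (hμ.le_closedBall t ht w hw).trans
    (measure_mono (Metric.closedBall_subset_closedBall' ?_))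
  have hdE : dist w (cpt φ) ≤ t := by
    rw [dist_comm, ← hdist]
    exact hAE φ hφ
  linarith

lemma circMeas_dE_le_inter_le (hμ : IsUniformlyDistributed μ E h K) (hE : IsCompact E)
    (ht : 0 < t) (htR : t ≤ R) (z : ℂ) :
    circMeas {φ | dE E (cpt φ) ≤ t ∧ ‖cpt φ - z‖ ≤ R} ≤
      ENNReal.ofReal (16 * π * t * K * h R / h t) := by
  set A := {φ | dE E (cpt φ) ≤ t ∧ ‖cpt φ - z‖ ≤ R}
  have hA : MeasurableSet A := (measurableSet_dE_le E t).inter (measurableSet_norm_cpt_sub_le z R)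
  have hpoint : ∀ w, circMeas ({φ | ‖cpt φ - w‖ ≤ 8 * t} ∩ A) ≤
      (Metric.closedBall z (9 * R)).indicator (fun _ => ENNReal.ofReal (16 * π * t)) w := by
    intro w
    rcases Set.eq_empty_or_nonempty ({φ | ‖cpt φ - w‖ ≤ 8 * t} ∩ A) with hempty | ⟨φ, hφw, hφA⟩
    · simp [hempty]
    have hwz : w ∈ Metric.closedBall z (9 * R) := by
      rw [Metric.mem_closedBall, dist_eq_norm]
      rw [mem_ofPred_eq, norm_sub_rev] at hφw
      linarith [norm_sub_le_norm_sub_add_norm_sub w (cpt φ) z, hφA.2]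
    rw [indicator_of_mem hwz]
    refine (measure_mono inter_subset_left).trans ((circMeas_closedBall_le w _).trans_eq ?_)
    ring_nf
  have hmass : ENNReal.ofReal (h t) * circMeas A ≤ ENNReal.ofReal (16 * π * t * K * h R) :=
    calc ENNReal.ofReal (h t) * circMeas A
        ≤ ∫⁻ w, circMeas ({φ | ‖cpt φ - w‖ ≤ 8 * t} ∩ A) ∂μ :=
          hμ.ofReal_mul_circMeas_le hE ht hA fun φ hφ => hφ.1
      _ ≤ ENNReal.ofReal (16 * π * t) * μ (Metric.closedBall z (9 * R)) :=
          (lintegral_mono hpoint).trans_eq (lintegral_indicator_const measurableSet_closedBall _)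
      _ ≤ ENNReal.ofReal (16 * π * t) * ENNReal.ofReal (K * h R) :=
          mul_le_mul_right (hμ.closedBall_le R (ht.trans_le htR) z) _
      _ = ENNReal.ofReal (16 * π * t * K * h R) := by
          rw [← ENNReal.ofReal_mul (by positivity), mul_assoc (16 * π * t)]
  rw [ENNReal.ofReal_div_of_pos (hμ.pos t), ENNReal.le_div_iff_mul_le
    (.inl (ENNReal.ofReal_pos.2 (hμ.pos t)).ne') (.inl ENNReal.ofReal_ne_top), mul_comm]
  exact hmass

lemma nbhdMeas_le (hμ : IsUniformlyDistributed μ E h K) (hE : IsCompact E) (hR : 0 < R) :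
    nbhdMeas E R ≤ ENNReal.ofReal (16 * π * R / h R) := by
  have := hμ.isProbabilityMeasure
  have hmass : ENNReal.ofReal (h R) * nbhdMeas E R ≤ ENNReal.ofReal (16 * π * R) :=
    calc ENNReal.ofReal (h R) * nbhdMeas E R
        ≤ ∫⁻ w, circMeas ({φ | ‖cpt φ - w‖ ≤ 8 * R} ∩ {φ | dE E (cpt φ) ≤ R}) ∂μ :=
          hμ.ofReal_mul_circMeas_le hE hR (measurableSet_dE_le E R) fun φ hφ => hφ
      _ ≤ ∫⁻ _, ENNReal.ofReal (2 * π * (8 * R)) ∂μ := lintegral_mono fun w =>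
          (measure_mono inter_subset_left).trans (circMeas_closedBall_le w _)
      _ = ENNReal.ofReal (16 * π * R) := by
          rw [lintegral_const, measure_univ, mul_one]
          ring_nf
  rw [ENNReal.ofReal_div_of_pos (hμ.pos R), ENNReal.le_div_iff_mul_le
    (.inl (ENNReal.ofReal_pos.2 (hμ.pos R)).ne') (.inl ENNReal.ofReal_ne_top), mul_comm]
  exact hmass

lemma ofReal_le_nbhdMeas (hμ : IsUniformlyDistributed μ E h K) (hE : ∀ w ∈ E, ‖w‖ = 1)
    (ht : 0 < t) (htπ : t < π) :
    ENNReal.ofReal (2 * t) ≤ ENNReal.ofReal (K * h t) * nbhdMeas E t := by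
  have := hμ.isProbabilityMeasure
  have hpoint : ∀ w ∈ E, ENNReal.ofReal (2 * t) ≤
      circMeas ({φ | ‖cpt φ - w‖ ≤ t} ∩ {φ | dE E (cpt φ) ≤ t}) := by
    intro w hw
    obtain ⟨x, rfl⟩ : ∃ x : ℝ, cpt x = w := (Complex.norm_eq_one_iff w).1 (hE w hw)
    exact (le_circMeas_closedBall x htπ).trans
      (measure_mono fun φ hφ => ⟨hφ, (dE_le_norm_sub hw).trans hφ⟩)
  calc ENNReal.ofReal (2 * t) = ∫⁻ _, ENNReal.ofReal (2 * t) ∂μ := by simp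
    _ ≤ ∫⁻ w, circMeas ({φ | ‖cpt φ - w‖ ≤ t} ∩ {φ | dE E (cpt φ) ≤ t}) ∂μ :=
        lintegral_mono_ae (hμ.ae_mem.mono hpoint)
    _ = ∫⁻ φ in {φ | dE E (cpt φ) ≤ t}, μ (Metric.closedBall (cpt φ) t) ∂circMeas :=
        (lintegral_measure_closedBall_cpt μ _ t).symm
    _ ≤ ∫⁻ _ in {φ | dE E (cpt φ) ≤ t}, ENNReal.ofReal (K * h t) ∂circMeas :=
        lintegral_mono fun φ => (measure_mono (Metric.closedBall_subset_closedBall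
          (by linarith))).trans (hμ.closedBall_le t ht (cpt φ))
    _ = ENNReal.ofReal (K * h t) * nbhdMeas E t := setLIntegral_const _ _

lemma box (hμ : IsUniformlyDistributed μ E h K) (hE : IsCompact E) (hnorm : ∀ w ∈ E, ‖w‖ = 1)
    (ht : 0 < t) (hR : 0 < R) (z : ℂ) :
    circMeas {φ | dE E (cpt φ) ≤ t ∧ ‖cpt φ - z‖ ≤ R} * nbhdMeas E R ≤
      ENNReal.ofReal (max (2 * π) (128 * π ^ 2 * K ^ 2) * R) * nbhdMeas E t := by
  by_cases hmono : nbhdMeas E R ≤ nbhdMeas E t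
  · refine mul_le_mul' ((measure_mono fun φ hφ => hφ.2).trans
      ((circMeas_closedBall_le z R).trans (ENNReal.ofReal_le_ofReal ?_))) hmono
    exact mul_le_mul_of_nonneg_right (le_max_left _ _) hR.le
  have htR : t ≤ R := le_of_not_ge fun hle => hmono (nbhdMeas_mono E hle)
  have htπ : t < π := by
    by_contra! hπ
    obtain ⟨w, hw⟩ := hμ.nonempty
    refine hmono (measure_mono fun φ _ => (dE_le_norm_sub hw).trans ((norm_sub_le _ _).trans ?_))
    rw [norm_cpt, hnorm w hw]
    linarith [pi_gt_three]
  have hK := hμ.const_nonneg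
  have hht := hμ.pos t
  have hhR := hμ.pos R
  calc circMeas {φ | dE E (cpt φ) ≤ t ∧ ‖cpt φ - z‖ ≤ R} * nbhdMeas E R
      ≤ ENNReal.ofReal (16 * π * t * K * h R / h t) * ENNReal.ofReal (16 * π * R / h R) :=
        mul_le_mul' (hμ.circMeas_dE_le_inter_le hE ht htR z) (hμ.nbhdMeas_le hE hR)
    _ = ENNReal.ofReal (128 * π ^ 2 * K * R / h t) * ENNReal.ofReal (2 * t) := by
        rw [← ENNReal.ofReal_mul (by positivity), ← ENNReal.ofReal_mul (by positivity)]
        congr 1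
        field_simp
        ring
    _ ≤ ENNReal.ofReal (128 * π ^ 2 * K * R / h t) *
          (ENNReal.ofReal (K * h t) * nbhdMeas E t) :=
        mul_le_mul_right (hμ.ofReal_le_nbhdMeas hnorm ht htπ) _
    _ = ENNReal.ofReal (128 * π ^ 2 * K ^ 2 * R) * nbhdMeas E t := by
        rw [← mul_assoc, ← ENNReal.ofReal_mul (by positivity)]
        congr 2
        field_simp
    _ ≤ _ := by
        gcongr
        exact le_max_right _ _

lemma power (hμ : IsUniformlyDistributed μ E h K) (hE : IsCompact E) {D s : ℝ}
    (hgrowth : ∀ t R, 0 < t → t ≤ R → h R ≤ D * (R / t) ^ s * h t) (ht : 0 < t) (htR : t ≤ R)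
    (z : ℂ) :
    circMeas {φ | dE E (cpt φ) ≤ t ∧ ‖cpt φ - z‖ ≤ R} ≤
      ENNReal.ofReal (16 * π * K * D * (R * (t / R) ^ (1 - s))) := by
  have hR := ht.trans_le htR
  have hK := hμ.const_nonneg
  refine (hμ.circMeas_dE_le_inter_le hE ht htR z).trans (ENNReal.ofReal_le_ofReal ?_)
  have hscale : R * (t / R) ^ (1 - s) = t * (R / t) ^ s := by
    rw [rpow_sub (by positivity), rpow_one, ← inv_div t R, inv_rpow (by positivity)]
    field_simp
  rw [hscale, div_le_iff₀ (hμ.pos t)]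
  calc 16 * π * t * K * h R ≤ 16 * π * t * K * (D * (R / t) ^ s * h t) := by
        gcongr
        exact hgrowth t R ht htR
    _ = _ := by ring

theorem regularSet (hμ : IsUniformlyDistributed μ E h K) (hE : IsCompact E)
    (hnorm : ∀ w ∈ E, ‖w‖ = 1) {D s : ℝ} (hs : s ∈ Ioo (0 : ℝ) 1)
    (hgrowth : ∀ t R, 0 < t → t ≤ R → h R ≤ D * (R / t) ^ s * h t) :
    RegularSet E (max (max (2 * π) (128 * π ^ 2 * K ^ 2)) (16 * π * K * D)) (1 - s) where
  pos := lt_max_of_lt_left (lt_max_of_lt_left two_pi_pos)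
  exp_mem := ⟨by linarith [hs.2], by linarith [hs.1]⟩
  compact := hE
  nonempty := hμ.nonempty
  norm_eq := hnorm
  box t R ht hR z := by
    refine (hμ.box hE hnorm ht hR z).trans (mul_le_mul_left (ENNReal.ofReal_le_ofReal ?_) _)
    exact mul_le_mul_of_nonneg_right (le_max_left _ _) hR.le
  power t R ht htR z := by
    refine (hμ.power hE hgrowth ht htR z).trans ?_
    have := ht.trans_le htR
    gcongr
    exact le_max_right _ _

end IsUniformlyDistributed

end UniformDistribution

section CantorRegularity

variable {ξ : ℕ → ℝ}

/-- The first generation whose intervals are shorter than `t`. It has its intended meaning for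
`0 < t`. -/
noncomputable def cantorGeneration (ξ : ℕ → ℝ) (t : ℝ) : ℕ := sInf {n | cantorLength ξ n < t}

lemma tendsto_cantorLength (hξ : ∀ n, ξ n ∈ Ioo (0 : ℝ) (1 / 2)) :
    Tendsto (cantorLength ξ) atTop (𝓝 0) :=
  (summable_cantorLength hξ).tendsto_atTop_zero

lemma cantorLength_cantorGeneration_lt (hξ : ∀ n, ξ n ∈ Ioo (0 : ℝ) (1 / 2)) {t : ℝ} (ht : 0 < t) :
    cantorLength ξ (cantorGeneration ξ t) < t :=
  Nat.sInf_mem ((tendsto_cantorLength hξ).eventually (gt_mem_nhds ht)).exists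

lemma le_cantorLength_of_lt_cantorGeneration {t : ℝ} {n : ℕ} (hn : n < cantorGeneration ξ t) :
    t ≤ cantorLength ξ n :=
  not_lt.1 (Nat.notMem_of_lt_sInf hn)

lemma cantorGeneration_le_cantorGeneration (hξ : ∀ n, ξ n ∈ Ioo (0 : ℝ) (1 / 2)) {t R : ℝ}
    (ht : 0 < t) (htR : t ≤ R) : cantorGeneration ξ R ≤ cantorGeneration ξ t :=
  Nat.sInf_le ((cantorLength_cantorGeneration_lt hξ ht).trans_le htR)

lemma isUniformlyDistributed_cantorMeasure (hξ : ∀ n, ξ n ∈ Ioo (0 : ℝ) (1 / 2)) :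
    IsUniformlyDistributed (cantorMeasure ξ) (gCantorSet ξ)
      (fun t => (1 / 2) ^ cantorGeneration ξ t) 120 where
  isProbabilityMeasure := isProbabilityMeasure_cantorMeasure hξ
  ae_mem := by
    refine (ae_map_iff (continuous_cantorCirclePoint hξ).aemeasurable
      (isCompact_gCantorSet hξ).measurableSet).2 ?_
    exact .of_forall (cantorCirclePoint_mem_gCantorSet ξ)
  pos t := by positivity
  le_closedBall t ht w hw := le_cantorMeasure_closedBall hξ hw _ <| by
    linarith [cantorLength_cantorGeneration_lt hξ ht]
  closedBall_le t _ z := by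
    have := isProbabilityMeasure_cantorMeasure hξ
    rcases hN : cantorGeneration ξ t with _ | n
    · refine prob_le_one.trans ?_
      norm_num
    · have hlen := le_cantorLength_of_lt_cantorGeneration (n.lt_succ_self.trans_eq hN.symm)
      refine (cantorMeasure_closedBall_le hξ z n 9 (by push_cast; linarith)).trans_eq ?_
      rw [pow_succ, show (120 : ℝ) * ((1 / 2) ^ n * (1 / 2)) = 60 * (1 / 2) ^ n by ring,
        ENNReal.ofReal_mul (by norm_num), ENNReal.ofReal_ofNat, ← mul_assoc]
      norm_num

lemma exists_le_ratio_lt_half (hξ : ∀ n, ξ n ∈ Ioo (0 : ℝ) (1 / 2))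
    (hlim : limsup ξ atTop < 1 / 2) : ∃ l ∈ Ioo (0 : ℝ) (1 / 2), ∀ n, ξ n ≤ l := by
  obtain ⟨c, hc, hc'⟩ := exists_between hlim
  have hbdd : IsBoundedUnder (· ≤ ·) atTop ξ := isBoundedUnder_of ⟨1 / 2, fun n => (hξ n).2.le⟩
  obtain ⟨N, hN⟩ := eventually_atTop.1 (eventually_lt_of_limsup_lt hc hbdd)
  obtain ⟨m, -, hm⟩ := Finset.exists_max_image (Finset.range (N + 1)) ξ ⟨0, by simp⟩
  refine ⟨max (ξ m) c, ⟨lt_max_of_lt_left (hξ m).1, max_lt (hξ m).2 hc'⟩, fun n => ?_⟩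
  rcases lt_or_ge n N with hn | hn
  · exact (hm n (Finset.mem_range.2 (by omega))).trans (le_max_left _ _)
  · exact (hN n hn).le.trans (le_max_right _ _)

lemma half_pow_cantorGeneration_le (hξ : ∀ n, ξ n ∈ Ioo (0 : ℝ) (1 / 2)) {l : ℝ}
    (hl : l ∈ Ioo (0 : ℝ) (1 / 2)) (hle : ∀ n, ξ n ≤ l) {t R : ℝ} (ht : 0 < t) (htR : t ≤ R) :
    (1 / 2 : ℝ) ^ cantorGeneration ξ R ≤
      2 * (R / t) ^ logb l⁻¹ 2 * (1 / 2) ^ cantorGeneration ξ t := by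
  have hl1 : 1 < l⁻¹ := (one_lt_inv₀ hl.1).2 (by linarith [hl.2])
  have hs : 0 ≤ logb l⁻¹ 2 := logb_nonneg hl1 one_le_two
  obtain ⟨j, hj⟩ := Nat.exists_eq_add_of_le (cantorGeneration_le_cantorGeneration hξ ht htR)
  suffices hpow : (2 : ℝ) ^ j ≤ 2 * (R / t) ^ logb l⁻¹ 2 by
    calc (1 / 2 : ℝ) ^ cantorGeneration ξ R
        = 2 ^ j * (1 / 2) ^ cantorGeneration ξ t := by
          rw [hj, pow_add, mul_left_comm, ← mul_pow]
          norm_num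
      _ ≤ _ := by gcongr
  rcases j with _ | j
  · linarith [one_le_rpow ((one_le_div ht).2 htR) hs]
  have hratio : l⁻¹ ^ j ≤ R / t := by
    rw [inv_pow, le_div_iff₀ ht, inv_mul_le_iff₀ (pow_pos hl.1 j)]
    calc t ≤ cantorLength ξ (cantorGeneration ξ R + j) :=
          le_cantorLength_of_lt_cantorGeneration (by omega)
      _ ≤ l ^ j * cantorLength ξ (cantorGeneration ξ R) :=
          cantorLength_add_le (fun n => (hξ n).1.le) hle _ _
      _ ≤ l ^ j * R := mul_le_mul_of_nonneg_left
          (cantorLength_cantorGeneration_lt hξ (ht.trans_le htR)).le (pow_pos hl.1 j).le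
  calc (2 : ℝ) ^ (j + 1) = 2 * (l⁻¹ ^ j) ^ logb l⁻¹ 2 := by
        rw [← rpow_pow_comm (inv_pos.2 hl.1).le, rpow_logb (inv_pos.2 hl.1) hl1.ne' two_pos,
          pow_succ']
    _ ≤ 2 * (R / t) ^ logb l⁻¹ 2 := by
        have := hl.1
        gcongr

theorem exists_regularSet_gCantorSet (hξ : ∀ n, ξ n ∈ Ioo (0 : ℝ) (1 / 2))
    (hlim : limsup ξ atTop < 1 / 2) : ∃ C η, RegularSet (gCantorSet ξ) C η := by
  obtain ⟨l, hl, hle⟩ := exists_le_ratio_lt_half hξ hlim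
  have hl2 : 2 < l⁻¹ := (lt_inv_comm₀ two_pos hl.1).2 (by linarith [hl.2])
  have hs : logb l⁻¹ 2 ∈ Ioo (0 : ℝ) 1 :=
    ⟨logb_pos (by linarith) one_lt_two, by
      rwa [logb_lt_iff_lt_rpow (by linarith) two_pos, rpow_one]⟩
  exact ⟨_, _, (isUniformlyDistributed_cantorMeasure hξ).regularSet (isCompact_gCantorSet hξ)
    (fun w hw => norm_eq_one_of_mem_gCantorSet hw) hs
    fun t R ht htR => half_pow_cantorGeneration_le hξ hl hle ht htR⟩

end CantorRegularity

end

/-- For a generalized Cantor set `E` with `limsup ζ_n < 1/2` and positive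
logarithmic capacity (`∫_0^1 dt/|E_t| < ∞`), the following are equivalent:
`f_{ω,E} ∈ 𝒟`, `f_{ω,E} ∈ 𝓜(𝒟)`, and `∫_𝕋 dist(ζ,E)ω'(dist(ζ,E))² |dζ| < ∞`. -/
theorem statement18 (ξ : ℕ → ℝ) (hξ : ∀ n, ξ n ∈ Set.Ioo (0:ℝ) (1/2))
    (hlim : Filter.limsup ξ Filter.atTop < 1/2)
    (hcap : IntegrableOn (fun t => (EtMeas (gCantorSet ξ) t)⁻¹) (Set.Ioc (0:ℝ) 1) volume)
    (ω ω' : ℝ → ℝ) (γ : ℝ) (hγ : 2 < γ) (hω : OmegaHyp ω ω' γ)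
    (hlog : LogOmegaInt ω (gCantorSet ξ)) :
    (MemDirichlet (outerFun ω (gCantorSet ξ)) ↔
      IntegrableOn
        (fun θ => dE (gCantorSet ξ) (cpt θ) * (ω' (dE (gCantorSet ξ) (cpt θ))) ^ 2)
        (Set.Ioc 0 (2 * π)) volume) ∧
    (IsMultiplierD (outerFun ω (gCantorSet ξ)) ↔
      IntegrableOn
        (fun θ => dE (gCantorSet ξ) (cpt θ) * (ω' (dE (gCantorSet ξ) (cpt θ))) ^ 2)
        (Set.Ioc 0 (2 * π)) volume) := by
  obtain ⟨C, η, hE⟩ := exists_regularSet_gCantorSet hξ hlim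
  exact statement18_general hE hcap hγ hω hlog
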